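/- Let p ≥ 1 be an integer and a > 2p a real number. Assume (ε_n) is a martingale difference sequence with E[ε_{n+1}² | F_n] = σ² a.s. for all n and sup_{n≥0} E[|ε_{n+1}|^a | F_n] < ∞ a.s. Assume the explosion coefficient f_n tends to zero a.s. and that there exists a positive random sequence (α_n) increasing to infinity and a symmetric positive definite d×d matrix L such that S_n/α_n → L a.s. Then almost surely lim_{n→∞} (1/log d_n) Σ_{k=1}^n f_k (M_k^t S_{k-1}^{-1} M_k)^p = ℓ(p), where ℓ(p) = d σ^{2p} ∏_{j=1}^{p-1} (d + 2j). -/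

import Mathlib

open MeasureTheory ProbabilityTheory Filter Finset Matrix Topology

noncomputable section

/-- `S_n = S + ∑_{k=0}^n Φ_k Φ_kᵗ`. -/
def Smat {Ω : Type*} {d : ℕ} (S : Matrix (Fin d) (Fin d) ℝ)
    (Φ : ℕ → Ω → Fin d → ℝ) (n : ℕ) (ω : Ω) : Matrix (Fin d) (Fin d) ℝ :=
  S + ∑ k ∈ Finset.range (n + 1), vecMulVec (Φ k ω) (Φ k ω)

/-- The explosion coefficient `f_n = Φ_nᵗ S_n⁻¹ Φ_n`. -/
def expl {Ω : Type*} {d : ℕ} (S : Matrix (Fin d) (Fin d) ℝ)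
    (Φ : ℕ → Ω → Fin d → ℝ) (n : ℕ) (ω : Ω) : ℝ :=
  Φ n ω ⬝ᵥ ((Smat S Φ n ω)⁻¹ *ᵥ Φ n ω)

/-- The vector martingale transform `M_n = M_0 + ∑_{k=1}^n Φ_{k-1} ε_k`. -/
def Mart {Ω : Type*} {d : ℕ} (M0 : Ω → Fin d → ℝ) (Φ : ℕ → Ω → Fin d → ℝ)
    (ε : ℕ → Ω → ℝ) (n : ℕ) (ω : Ω) : Fin d → ℝ :=
  M0 ω + ∑ k ∈ Finset.range n, ε (k + 1) ω • Φ k ω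

/-- `ℓ(p) = d σ^{2p} ∏_{j=1}^{p-1} (d + 2j)`. -/
def elllim (d p : ℕ) (σ : ℝ) : ℝ :=
  (d : ℝ) * σ ^ (2 * p) * ∏ j ∈ Finset.Icc 1 (p - 1), ((d : ℝ) + 2 * (j : ℝ))

/-- local martingale difference with respect to `m`. -/
def LMD {Ω : Type*} {m0 : MeasurableSpace Ω} (μ : Measure Ω) (m : MeasurableSpace Ω)
    (u : Ω → ℝ) : Prop :=
  ∃ ρ : Ω → ℝ, Measurable[m] ρ ∧ (∀ ω, 0 < ρ ω) ∧ (∀ ω, ρ ω ≤ 1) ∧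
    Integrable (fun ω => ρ ω * u ω) μ ∧ μ[fun ω => ρ ω * u ω | m] =ᵐ[μ] 0

section LMDsec
variable {Ω : Type*} {m0 : MeasurableSpace Ω} {μ : Measure Ω} [IsProbabilityMeasure μ]
  {m : MeasurableSpace Ω}

theorem LMD.of_condExp {u : Ω → ℝ} (hu : Integrable u μ) (h : μ[u | m] =ᵐ[μ] 0) : LMD μ m u :=
  ⟨fun _ => 1, measurable_const, by simp, by simp, by simpa using hu, by simpa using h⟩

theorem LMD.sub_condExp (hm : m ≤ m0) {u : Ω → ℝ} (hu : Integrable u μ) :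
    LMD μ m (fun ω => u ω - (μ[u | m]) ω) := by
  refine LMD.of_condExp (hu.sub integrable_condExp) ?_
  have h1 := condExp_sub (m := m) hu (integrable_condExp (m := m) (f := u) (μ := μ))
  have h2 : μ[μ[u|m]|m] = μ[u|m] :=
    condExp_of_stronglyMeasurable hm stronglyMeasurable_condExp integrable_condExp
  rw [h2] at h1
  refine h1.trans ?_
  simp

/-- weighting -/
theorem lmd_weight (hm : m ≤ m0) {u h : Ω → ℝ} (hu : Integrable u μ) (h0 : μ[u | m] =ᵐ[μ] 0)
    (hh : Measurable[m] h) (C : ℝ) (hC : ∀ ω, |h ω| ≤ C) :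
    Integrable (fun ω => h ω * u ω) μ ∧ μ[fun ω => h ω * u ω | m] =ᵐ[μ] 0 := by
  have hi : Integrable (fun ω => h ω * u ω) μ :=
    hu.bdd_mul (hh.mono hm le_rfl).aestronglyMeasurable (ae_of_all _ fun ω => hC ω)
  refine ⟨hi, ?_⟩
  have := condExp_mul_of_stronglyMeasurable_left (m := m) (f := h) (g := u)
    hh.stronglyMeasurable hi hu
  refine this.trans ?_
  filter_upwards [h0] with ω hω
  simp [hω]

theorem LMD.mul (hm : m ≤ m0) {u h : Ω → ℝ} (hu : LMD μ m u) (hh : Measurable[m] h) :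
    LMD μ m (fun ω => h ω * u ω) := by
  obtain ⟨ρ, h1, h2, h3, h4, h5⟩ := hu
  have hpos : ∀ ω, 0 < 1 + |h ω| := fun ω => by positivity
  obtain ⟨h6, h7⟩ := lmd_weight hm h4 h5 (h := fun ω => h ω / (1 + |h ω|))
    (hh.div (measurable_const.add hh.abs)) 1 (fun ω => by
      rw [abs_div, abs_of_pos (hpos ω), div_le_one (hpos ω)]; linarith [abs_nonneg (h ω)])
  have e : (fun ω => h ω / (1 + |h ω|) * (ρ ω * u ω)) =
    fun ω => ρ ω / (1 + |h ω|) * (h ω * u ω) := by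
    funext ω; ring
  rw [e] at h6 h7
  refine ⟨fun ω => ρ ω / (1 + |h ω|), h1.div (measurable_const.add hh.abs),
    fun ω => div_pos (h2 ω) (hpos ω), fun ω => ?_, h6, h7⟩
  rw [div_le_one (hpos ω)]; linarith [abs_nonneg (h ω), h3 ω]

theorem LMD.add (hm : m ≤ m0) {u v : Ω → ℝ} (hu : LMD μ m u) (hv : LMD μ m v) :
    LMD μ m (fun ω => u ω + v ω) := by
  obtain ⟨ρ, h1, h2, h3, h4, h5⟩ := hu
  obtain ⟨ρ', h1', h2', h3', h4', h5'⟩ := hv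
  obtain ⟨a1, a2⟩ := lmd_weight hm h4 h5 h1' 1 (fun ω => by
    rw [abs_of_pos (h2' ω)]; exact h3' ω)
  obtain ⟨b1, b2⟩ := lmd_weight hm h4' h5' h1 1 (fun ω => by
    rw [abs_of_pos (h2 ω)]; exact h3 ω)
  have e : (fun ω => ρ ω * ρ' ω * (u ω + v ω)) =
    (fun ω => ρ' ω * (ρ ω * u ω)) + fun ω => ρ ω * (ρ' ω * v ω) := by
    funext ω; simp only [Pi.add_apply]; ring
  refine ⟨fun ω => ρ ω * ρ' ω, h1.mul h1', fun ω => mul_pos (h2 ω) (h2' ω), fun ω =>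
    mul_le_one₀ (h3 ω) (h2' ω).le (h3' ω), ?_, ?_⟩
  · rw [e]; exact a1.add b1
  · rw [e]
    refine (condExp_add a1 b1 m).trans ?_
    filter_upwards [a2, b2] with ω h h'
    simp [h, h']

theorem LMD.zero : LMD μ m (fun _ => (0:ℝ)) := by
  refine LMD.of_condExp (integrable_zero _ _ _) ?_
  have : (fun _ : Ω => (0:ℝ)) = 0 := rfl
  rw [this, condExp_zero]

theorem LMD.sum (hm : m ≤ m0) {ι : Type*} (s : Finset ι) {u : ι → Ω → ℝ}
    (hu : ∀ i ∈ s, LMD μ m (u i)) :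
    LMD μ m (fun ω => ∑ i ∈ s, u i ω) := by
  classical
  induction s using Finset.induction_on with
  | empty => simpa using LMD.zero
  | insert i s hi ih =>
    simp only [Finset.sum_insert hi]
    exact LMD.add hm (hu i (by simp)) (ih fun j hj => hu j (by simp [hj]))

/-- one-step: bounded concave truncation is a supermartingale step -/
theorem LMD.step (hm : m ≤ m0) {T u : Ω → ℝ} (lam K : ℝ) (hT : Measurable[m] T)
    (hu : LMD μ m u) (hu' : Measurable[m0] u)
    (h1 : ∀ᵐ ω ∂μ, -K ≤ T ω) (h2 : ∀ᵐ ω ∂μ, -K ≤ T ω + u ω) :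
    ∫ ω, min (T ω + u ω) lam ∂μ ≤ ∫ ω, min (T ω) lam ∂μ := by
  obtain ⟨ρ, r1, r2, r3, r4, r5⟩ := hu
  have hT0 : Measurable[m0] T := hT.mono hm le_rfl
  have bd : ∀ {f : Ω → ℝ}, Measurable[m0] f → (∀ᵐ ω ∂μ, -K ≤ f ω) →
      Integrable (fun ω => min (f ω) lam) μ := by
    intro f hf hK
    refine Integrable.of_bound (hf.min measurable_const).aestronglyMeasurable (|K| + |lam|) ?_
    filter_upwards [hK] with ω hω
    rw [Real.norm_eq_abs, abs_le]
    have := neg_abs_le lam; have := le_abs_self K; have := abs_nonneg K; have := le_abs_self lam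
    have := abs_nonneg lam
    constructor
    · rw [le_min_iff]; constructor <;> linarith
    · exact (min_le_right _ _).trans (by linarith)
  have i1 := bd hT0 h1
  have i2 : Integrable (fun ω => min (T ω + u ω) lam) μ := bd (hT0.add hu') h2
  set g : Ω → ℝ := fun ω => min (T ω + u ω) lam - min (T ω) lam with hg
  have ig : Integrable g μ := i2.sub i1
  obtain ⟨s1, s2⟩ := lmd_weight hm r4 r5 (h := fun ω => if T ω < lam then (1:ℝ) else 0)
    (Measurable.ite (measurableSet_lt hT measurable_const) measurable_const measurable_const) 1
    (fun ω => by split_ifs <;> simp)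
  have irg : Integrable (ρ * g) μ :=
    ig.bdd_mul (c := 1) (r1.mono hm le_rfl).aestronglyMeasurable (ae_of_all _ fun ω => by
      rw [Real.norm_eq_abs, abs_of_pos (r2 ω)]; exact r3 ω)
  have hle : ρ * g ≤ᵐ[μ] fun ω => (if T ω < lam then (1:ℝ) else 0) * (ρ ω * u ω) := by
    refine ae_of_all _ fun ω => ?_
    have hr := r2 ω
    simp only [Pi.mul_apply, hg]
    split_ifs with h
    · rw [one_mul, min_eq_left h.le]
      refine mul_le_mul_of_nonneg_left ?_ hr.le
      linarith [min_le_left (T ω + u ω) lam]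
    · rw [zero_mul, min_eq_right (not_lt.1 h)]
      refine mul_nonpos_of_nonneg_of_nonpos hr.le ?_
      linarith [min_le_right (T ω + u ω) lam]
  have hmono := condExp_mono (m := m) irg s1 hle
  have hpull := condExp_mul_of_stronglyMeasurable_left (m := m) r1.stronglyMeasurable irg ig
  have hneg : μ[g|m] ≤ᵐ[μ] 0 := by
    filter_upwards [hmono, hpull, s2] with ω a b c
    rw [c, b] at a
    simp only [Pi.mul_apply, Pi.zero_apply] at a ⊢
    by_contra hcon
    push Not at hcon
    exact absurd (mul_pos (r2 ω) hcon) (not_lt.2 a)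
  have : ∫ ω, g ω ∂μ ≤ 0 := by
    rw [← integral_condExp hm]
    exact integral_nonpos_of_ae hneg
  have e2 := integral_sub i2 i1
  simp only [hg] at this
  linarith

theorem lmd_bdd (F : Filtration ℕ m0) (N b : ℕ → Ω → ℝ)
    (hN : ∀ n, Measurable[F n] (N n)) (hb : ∀ n, Measurable[F n] (b n))
    (hu : ∀ n, LMD μ (F n) (fun ω => N (n+1) ω - N n ω))
    (hlow : ∀ n, ∀ᵐ ω ∂μ, -b n ω ≤ N (n+1) ω) (hN0 : ∀ ω, 0 ≤ N 0 ω)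
    (hbdd : ∀ᵐ ω ∂μ, ∃ K : ℝ, ∀ n, b n ω ≤ K) :
    ∀ᵐ ω ∂μ, ∃ K : ℝ, ∀ n, N n ω ≤ K := by
  have key : ∀ K lam : ℝ, 0 < K → 0 < lam →
      μ {ω | N 0 ω ≤ K ∧ (∀ k, b k ω ≤ K) ∧ ∃ j, lam ≤ N j ω} ≤ ENNReal.ofReal (2 * K / lam) := by
    intro K lam hK hlam
    classical
    set H : ℕ → Set Ω := fun n => {ω | N 0 ω ≤ K ∧ ∀ k, k ≤ n → N k ω < lam ∧ b k ω ≤ K} with hH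
    have hHm : ∀ n, MeasurableSet[F n] (H n) := by
      intro n
      have : H n = {ω | N 0 ω ≤ K} ∩ ⋂ k, ⋂ (_ : k ≤ n), ({ω | N k ω < lam} ∩ {ω | b k ω ≤ K}) := by
        ext ω; simp [hH]
      rw [this]
      refine MeasurableSet.inter (F.mono (Nat.zero_le n) _ (measurableSet_le (hN 0) measurable_const)) ?_
      refine MeasurableSet.iInter fun k => MeasurableSet.iInter fun hk => ?_
      exact F.mono hk _ ((measurableSet_lt (hN k) measurable_const).inter
        (measurableSet_le (hb k) measurable_const))
    set w : ℕ → Ω → ℝ := fun n ω => (if ω ∈ H n then (1:ℝ) else 0) * (N (n+1) ω - N n ω) with hw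
    set T : ℕ → Ω → ℝ := fun n ω => (if N 0 ω ≤ K then N 0 ω else 0) + ∑ k ∈ range n, w k ω with hT
    have hwm : ∀ n, Measurable[F (n+1)] (w n) := by
      intro n
      refine Measurable.mul (Measurable.ite (F.mono (Nat.le_succ n) _ (hHm n)) measurable_const
        measurable_const) ((hN (n+1)).sub ((hN n).mono (F.mono (Nat.le_succ n)) le_rfl))
    have hTm : ∀ n, Measurable[F n] (T n) := by
      intro n
      refine Measurable.add (Measurable.ite (F.mono (Nat.zero_le n) _
        (measurableSet_le (hN 0) measurable_const)) ((hN 0).mono (F.mono (Nat.zero_le n)) le_rfl)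
        measurable_const) ?_
      refine Finset.measurable_fun_sum _ fun k hk => ?_
      exact (hwm k).mono (F.mono (by simpa using hk)) le_rfl
    have hTs : ∀ n ω, T (n+1) ω = T n ω + w n ω := by
      intro n ω; simp only [hT, sum_range_succ]; ring
    have hHanti : ∀ {n k ω}, k ≤ n → ω ∈ H n → ω ∈ H k := by
      intro n k ω hk h
      exact ⟨h.1, fun j hj => h.2 j (hj.trans hk)⟩
    have hTN : ∀ n ω, N 0 ω ≤ K → (∀ k < n, ω ∈ H k) → T n ω = N n ω := by
      intro n ω h0
      induction n with
      | zero => intro _; simp [hT, h0]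
      | succ n ih =>
        intro h
        rw [hTs, ih (fun k hk => h k (by omega))]
        simp [hw, h n (by omega)]
    have hTlow : ∀ᵐ ω ∂μ, ∀ n, -K ≤ T n ω := by
      filter_upwards [ae_all_iff.2 hlow] with ω hω n
      induction n with
      | zero =>
        simp only [hT, range_zero, sum_empty, add_zero]
        split_ifs
        · linarith [hN0 ω]
        · linarith
      | succ n ih =>
        by_cases h : ω ∈ H n
        · rw [hTN (n+1) ω h.1 (fun k hk => hHanti (by omega) h)]
          linarith [hω n, (h.2 n le_rfl).2]
        · rw [hTs]; simp only [hw, h, if_false, zero_mul, add_zero]; exact ih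
    have hE : ∀ n, ∫ ω, min (T n ω) lam ∂μ ≤ K := by
      intro n
      induction n with
      | zero =>
        have : ∫ ω, min (T 0 ω) lam ∂μ ≤ ∫ _ω, K ∂μ := by
          refine integral_mono_of_nonneg (ae_of_all _ fun ω => ?_) (integrable_const _)
            (ae_of_all _ fun ω => ?_)
          · simp only [hT, range_zero, sum_empty, add_zero, Pi.zero_apply]
            refine le_min ?_ hlam.le
            split_ifs
            · exact hN0 ω
            · exact le_rfl
          · simp only [hT, range_zero, sum_empty, add_zero]
            refine (min_le_left _ _).trans ?_
            split_ifs with h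
            · exact h
            · exact hK.le
        simpa using this
      | succ n ih =>
        refine le_trans ?_ ih
        have e : (fun ω => min (T (n+1) ω) lam) = fun ω => min (T n ω + w n ω) lam := by
          funext ω; rw [hTs]
        rw [e]
        refine LMD.step (F.le n) lam K (hTm n) ?_ ((hwm n).mono (F.le _) le_rfl) ?_ ?_
        · exact LMD.mul (F.le n) (hu n) (Measurable.ite (hHm n) measurable_const measurable_const)
        · filter_upwards [hTlow] with ω h using h n
        · filter_upwards [hTlow] with ω h
          rw [← hTs]; exact h (n+1)
    have hint : ∀ n, Integrable (fun ω => min (T n ω) lam) μ := by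
      intro n
      refine Integrable.of_bound (((hTm n).mono (F.le n) le_rfl).min measurable_const).aestronglyMeasurable (K + lam) ?_
      filter_upwards [hTlow] with ω hω
      rw [Real.norm_eq_abs, abs_le]
      constructor
      · rw [le_min_iff]; constructor <;> linarith [hω n]
      · exact (min_le_right _ _).trans (by linarith)
    set E : ℕ → Set Ω := fun n => {ω | N 0 ω ≤ K ∧ (∀ k, b k ω ≤ K) ∧ ∃ j ≤ n, lam ≤ N j ω} with hEdef
    have hsub : ∀ n, E n ⊆ {ω | lam + K ≤ min (T n ω) lam + K} := by
      rintro n ω ⟨h1, h2, h3⟩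
      have hex : ∃ j, lam ≤ N j ω := ⟨h3.choose, h3.choose_spec.2⟩
      have hj1 : lam ≤ N (Nat.find hex) ω := Nat.find_spec hex
      have hj2 : Nat.find hex ≤ n :=
        (Nat.find_min' hex h3.choose_spec.2).trans h3.choose_spec.1
      set j := Nat.find hex with hj
      have hmin : ∀ k < j, N k ω < lam := fun k hk => not_le.1 (Nat.find_min hex hk)
      have hTj : T j ω = N j ω := hTN j ω h1 (fun k hk => ⟨h1, fun i hi => ⟨hmin i (by omega), h2 i⟩⟩)
      have hfrozen : ∀ i, T (j + i) ω = T j ω := by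
        intro i
        induction i with
        | zero => rfl
        | succ i ih =>
          rw [← add_assoc, hTs, ih]
          have : ω ∉ H (j + i) := fun h => absurd (h.2 j (by omega)).1 (not_lt.2 hj1)
          simp [hw, this]
      have : T n ω = N j ω := by
        rw [← hTj, ← hfrozen (n - j)]; congr 1; omega
      simp only [Set.mem_ofPred_eq, this, min_eq_right hj1]; exact le_rfl
    have hEb : ∀ n, μ (E n) ≤ ENNReal.ofReal (2 * K / lam) := by
      intro n
      have h1 := mul_meas_ge_le_integral_of_nonneg (μ := μ) (f := fun ω => min (T n ω) lam + K)
        (by filter_upwards [hTlow] with ω hω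
            simp only [Pi.zero_apply]
            have : -K ≤ min (T n ω) lam := le_min (hω n) (by linarith)
            linarith) ((hint n).add (integrable_const _)) (lam + K)
      rw [integral_add (hint n) (integrable_const _)] at h1
      simp only [integral_const, probReal_univ, smul_eq_mul, one_mul] at h1
      have h2 : μ.real {ω | lam + K ≤ min (T n ω) lam + K} ≤ 2 * K / lam := by
        rw [le_div_iff₀ hlam]
        have := measureReal_nonneg (μ := μ) (s := {ω | lam + K ≤ min (T n ω) lam + K})
        nlinarith [hE n]
      refine (measure_mono (hsub n)).trans ?_
      rw [← ENNReal.ofReal_toReal (measure_ne_top μ {ω | lam + K ≤ min (T n ω) lam + K})]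
      exact ENNReal.ofReal_le_ofReal h2
    have hmono : Monotone E := by
      rintro n k hnk ω ⟨h1, h2, j, hj, h3⟩
      exact ⟨h1, h2, j, hj.trans hnk, h3⟩
    refine (measure_mono (t := ⋃ n, E n) ?_).trans ?_
    · rintro ω ⟨h1, h2, j, hj⟩
      exact Set.mem_iUnion.2 ⟨j, h1, h2, j, le_rfl, hj⟩
    · rw [hmono.measure_iUnion]
      exact iSup_le hEb
  have hnull : ∀ K : ℕ, ∀ᵐ ω ∂μ, ¬ (N 0 ω ≤ (K:ℝ) + 1 ∧ (∀ k, b k ω ≤ (K:ℝ) + 1) ∧ ∀ lam : ℝ, ∃ j, lam ≤ N j ω) := by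
    intro K
    rw [ae_iff]
    simp only [not_not]
    refine le_antisymm ?_ (zero_le)
    have hlim : Tendsto (fun lam : ℕ => ENNReal.ofReal (2 * ((K:ℝ) + 1) / ((lam:ℝ) + 1))) atTop (𝓝 0) := by
      rw [← ENNReal.ofReal_zero]
      refine (ENNReal.continuous_ofReal.tendsto 0).comp ?_
      exact Tendsto.div_atTop tendsto_const_nhds (tendsto_atTop_add_const_right _ _ tendsto_natCast_atTop_atTop)
    refine ge_of_tendsto' hlim fun lam => ?_
    refine (measure_mono ?_).trans (key ((K:ℝ)+1) ((lam:ℝ)+1) (by positivity) (by positivity))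
    rintro ω ⟨h1, h2, h3⟩
    exact ⟨h1, h2, h3 _⟩
  filter_upwards [ae_all_iff.2 hnull, hbdd] with ω h1 ⟨K, hK⟩
  by_contra hcon
  push Not at hcon
  obtain ⟨k, hk⟩ := exists_nat_ge (max K (N 0 ω))
  have := le_max_left K (N 0 ω); have := le_max_right K (N 0 ω)
  refine h1 k ⟨by linarith, fun j => by linarith [hK j], fun lam => ?_⟩
  obtain ⟨j, hj⟩ := hcon lam
  exact ⟨j, hj.le⟩

/-- Robbins--Siegmund -/
theorem robbins_siegmund (F : Filtration ℕ m0) (Y D B u : ℕ → Ω → ℝ)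
    (hY : ∀ n, Measurable[F n] (Y n))
    (hB : ∀ n, Measurable[F n] (B n)) (hu : ∀ n, Measurable[F (n+1)] (u n))
    (hY0 : ∀ n ω, 0 ≤ Y n ω) (hD0 : ∀ n ω, 0 ≤ D n ω) (hB0 : ∀ n ω, 0 ≤ B n ω)
    (hlmd : ∀ n, LMD μ (F n) (u n))
    (hrec : ∀ n, ∀ᵐ ω ∂μ, Y (n+1) ω ≤ Y n ω - D n ω + B n ω + u n ω)
    (hsum : ∀ᵐ ω ∂μ, Summable fun n => B n ω) :
    ∀ᵐ ω ∂μ, (∃ K : ℝ, ∀ n, Y n ω ≤ K) ∧ Summable fun n => D n ω := by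
  set N : ℕ → Ω → ℝ := fun n ω => Y 0 ω + ∑ k ∈ range n, u k ω with hN
  have hge : ∀ᵐ ω ∂μ, ∀ n, Y n ω + ∑ k ∈ range n, D k ω - ∑ k ∈ range n, B k ω ≤ N n ω := by
    filter_upwards [ae_all_iff.2 hrec] with ω hω n
    induction n with
    | zero => simp [hN]
    | succ n ih =>
      simp only [hN, sum_range_succ] at ih ⊢
      linarith [hω n]
  have hbd := lmd_bdd (μ := μ) F N (fun n ω => ∑ k ∈ range (n+1), B k ω) (by
      intro n
      refine ((hY 0).mono (F.mono (Nat.zero_le n)) le_rfl).add ?_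
      refine Finset.measurable_fun_sum _ fun k hk => ?_
      exact (hu k).mono (F.mono (by simpa using hk)) le_rfl) (by
      intro n
      refine Finset.measurable_fun_sum _ fun k hk => ?_
      exact (hB k).mono (F.mono (by simp at hk; omega)) le_rfl) (by
      intro n
      have : (fun ω => N (n+1) ω - N n ω) = u n := by
        funext ω; simp only [hN, sum_range_succ]; ring
      rw [this]; exact hlmd n) (by
      intro n
      filter_upwards [hge] with ω hω
      have := hω (n+1)
      have h2 : 0 ≤ ∑ k ∈ range (n+1), D k ω := sum_nonneg fun k _ => hD0 k ω
      linarith [hY0 (n+1) ω]) (by intro ω; simpa [hN] using hY0 0 ω) (by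
      filter_upwards [hsum] with ω hω
      exact ⟨_, fun n => hω.sum_le_tsum _ fun k _ => hB0 k ω⟩)
  filter_upwards [hbd, hge, hsum] with ω ⟨K, hK⟩ h2 h3
  have hBn : ∀ n, ∑ k ∈ range n, B k ω ≤ ∑' k, B k ω := fun n => h3.sum_le_tsum _ fun k _ => hB0 k ω
  refine ⟨⟨K + ∑' k, B k ω, fun n => ?_⟩, ?_⟩
  · have : 0 ≤ ∑ k ∈ range n, D k ω := sum_nonneg fun k _ => hD0 k ω
    linarith [h2 n, hBn n, hK n]
  · refine summable_of_sum_range_le (c := K + ∑' k, B k ω) (fun n => hD0 n ω) fun n => ?_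
    linarith [h2 n, hBn n, hK n, hY0 n ω]

end LMDsec

theorem abs_one_add_rpow_le {s : ℝ} (h1 : 1 ≤ s) (h2 : s ≤ 2) (t : ℝ) :
    |1 + t| ^ s ≤ 1 + s * t + 6 * |t| ^ s := by
  have h0 : 0 ≤ |t| ^ s := by positivity
  rcases le_or_gt |t| 1 with ht | ht
  · obtain ⟨ha, hb⟩ := abs_le.1 ht
    rw [abs_of_nonneg (by linarith : 0 ≤ 1 + t)]
    have e : (1 + t) ^ s = (1 + t) * (1 + t) ^ (s - 1) := by
      have := Real.rpow_one_add' (x := 1 + t) (y := s - 1) (by linarith) (by linarith)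
      rw [← this]; congr 1; ring
    have hb := rpow_one_add_le_one_add_mul_self (s := t) (by linarith) (p := s - 1) (by linarith) (by linarith)
    have h3 : (1 + t) * (1 + t) ^ (s - 1) ≤ (1 + t) * (1 + (s - 1) * t) :=
      mul_le_mul_of_nonneg_left hb (by linarith)
    have h4 : t ^ 2 ≤ |t| ^ s := by
      rw [← sq_abs, ← Real.rpow_natCast]
      exact Real.rpow_le_rpow_of_exponent_ge_of_imp (abs_nonneg t) ht (by norm_num; exact h2) (by intro _ h; norm_num at h)
    rw [e]
    nlinarith [sq_nonneg t]
  · have h3 : |1 + t| ^ s ≤ 4 * |t| ^ s := by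
      have : |1 + t| ≤ 2 * |t| := (abs_add_le _ _).trans (by rw [abs_one]; linarith)
      refine (Real.rpow_le_rpow (abs_nonneg _) this (by linarith)).trans ?_
      rw [Real.mul_rpow (by norm_num) (abs_nonneg _)]
      refine mul_le_mul_of_nonneg_right ?_ h0
      calc (2:ℝ) ^ s ≤ 2 ^ (2:ℝ) := Real.rpow_le_rpow_of_exponent_le (by norm_num) h2
        _ = 4 := by norm_num
    have h4 : |t| ≤ |t| ^ s := by
      conv_lhs => rw [← Real.rpow_one |t|]
      exact Real.rpow_le_rpow_of_exponent_le ht.le h1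
    have h5 : -|t| ≤ t := neg_abs_le t
    nlinarith [abs_nonneg t]

theorem abs_add_rpow_le {s : ℝ} (h1 : 1 ≤ s) (h2 : s ≤ 2) (x y : ℝ) :
    |x + y| ^ s ≤ |x| ^ s + s * (|x| ^ s * x⁻¹) * y + 6 * |y| ^ s := by
  have h0 : 0 ≤ |y| ^ s := by positivity
  by_cases hx : x = 0
  · subst hx
    have : (0:ℝ) ^ s = 0 := Real.zero_rpow (by linarith)
    simp [this]; linarith
  · have h := abs_one_add_rpow_le h1 h2 (y / x)
    have e : x + y = x * (1 + y / x) := by field_simp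
    rw [e, abs_mul, Real.mul_rpow (abs_nonneg _) (abs_nonneg _)]
    have hp : 0 ≤ |x| ^ s := by positivity
    have hp' : 0 < |x| ^ s := Real.rpow_pos_of_pos (abs_pos.2 hx) _
    refine (mul_le_mul_of_nonneg_left h hp).trans (le_of_eq ?_)
    rw [abs_div, Real.div_rpow (abs_nonneg _) (abs_nonneg _)]
    field_simp

theorem meas_abs_rpow {Ω : Type*} {m : MeasurableSpace Ω} (s : ℝ) {f : Ω → ℝ} (hf : Measurable f) :
    Measurable (fun ω => |f ω| ^ s) := by fun_prop

section
variable {Ω : Type*} {m0 : MeasurableSpace Ω} {μ : Measure Ω} [IsProbabilityMeasure μ]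

theorem slln_lmd (F : Filtration ℕ m0) {s : ℝ} (h1 : 1 ≤ s) (h2 : s ≤ 2)
    (X η κ ζ v : ℕ → Ω → ℝ)
    (hX : ∀ n, Measurable[F n] (X n)) (hη : ∀ n, Measurable[F (n+1)] (η n))
    (hκ : ∀ n, Measurable[F n] (κ n)) (hζ : ∀ n, Measurable[F (n+1)] (ζ n))
    (hv : ∀ n, Measurable[F n] (v n))
    (lη : ∀ n, LMD μ (F n) (η n)) (lζ : ∀ n, LMD μ (F n) (ζ n))
    (hb : ∀ n, ∀ᵐ ω ∂μ, |η n ω| ^ s ≤ κ n ω + ζ n ω)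
    (hκ0 : ∀ n ω, 0 ≤ κ n ω) (hκb : ∀ᵐ ω ∂μ, ∃ K : ℝ, ∀ n, κ n ω ≤ K)
    (hv0 : ∀ n ω, 0 < v n ω) (hvm : ∀ n ω, v n ω ≤ v (n+1) ω)
    (hsum : ∀ᵐ ω ∂μ, Summable fun n => |X n ω| ^ s / v n ω) :
    ∀ᵐ ω ∂μ, ∃ K : ℝ, ∀ n, |∑ k ∈ range n, X k ω * η k ω| ^ s ≤ K * v n ω := by
  set N : ℕ → Ω → ℝ := fun n ω => ∑ k ∈ range n, X k ω * η k ω with hN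
  have hNm : ∀ n, Measurable[F n] (N n) := by
    intro n
    refine Finset.measurable_fun_sum _ fun k hk => ?_
    have hk' : k + 1 ≤ n := by simpa using hk
    exact ((hX k).mono (F.mono (by omega)) le_rfl).mul ((hη k).mono (F.mono hk') le_rfl)
  have hrp : ∀ n (f : Ω → ℝ), Measurable[F n] f → Measurable[F n] (fun ω => |f ω| ^ s) := by
    intro n f hf
    exact meas_abs_rpow s hf
  have key := robbins_siegmund (μ := μ) F (fun n ω => |N n ω| ^ s / v n ω) (fun _ _ => 0)
    (fun n ω => 6 * (|X n ω| ^ s / v n ω) * κ n ω)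
    (fun n ω => (s * (|N n ω| ^ s * (N n ω)⁻¹) * X n ω / v n ω) * η n ω +
      (6 * (|X n ω| ^ s / v n ω)) * ζ n ω)
    (fun n => (hrp n _ (hNm n)).div (hv n))
    (fun n => (measurable_const.mul ((hrp n _ (hX n)).div (hv n))).mul (hκ n))
    (fun n => by
      have hle := F.mono (Nat.le_succ n)
      refine Measurable.add (Measurable.mul ?_ (hη n)) (Measurable.mul ?_ (hζ n))
      · exact ((((measurable_const.mul ((hrp n _ (hNm n)).mul (hNm n).inv))).mul (hX n)).div (hv n)).mono hle le_rfl
      · exact (measurable_const.mul ((hrp n _ (hX n)).div (hv n))).mono hle le_rfl)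
    (fun n ω => div_nonneg (by positivity) (hv0 n ω).le) (fun _ _ => le_rfl)
    (fun n ω => mul_nonneg (mul_nonneg (by norm_num) (div_nonneg (by positivity) (hv0 n ω).le)) (hκ0 n ω))
    (fun n => by
      refine LMD.add (F.le n) (LMD.mul (F.le n) (lη n) ?_) (LMD.mul (F.le n) (lζ n) ?_)
      · exact ((((measurable_const.mul ((hrp n _ (hNm n)).mul (hNm n).inv))).mul (hX n)).div (hv n))
      · exact (measurable_const.mul ((hrp n _ (hX n)).div (hv n))))
    (fun n => by
      filter_upwards [hb n] with ω hω
      have hvp := hv0 n ω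
      have a1 : |N (n+1) ω| ^ s / v (n+1) ω ≤ |N (n+1) ω| ^ s / v n ω :=
        div_le_div_of_nonneg_left (by positivity) hvp (hvm n ω)
      have e : N (n+1) ω = N n ω + X n ω * η n ω := by simp [hN, sum_range_succ]
      have a2 := abs_add_rpow_le h1 h2 (N n ω) (X n ω * η n ω)
      rw [← e, abs_mul, Real.mul_rpow (abs_nonneg _) (abs_nonneg _)] at a2
      have a3 : |X n ω| ^ s * |η n ω| ^ s ≤ |X n ω| ^ s * (κ n ω + ζ n ω) :=
        mul_le_mul_of_nonneg_left hω (by positivity)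
      have a4 : |N (n+1) ω| ^ s ≤ |N n ω| ^ s + s * (|N n ω| ^ s * (N n ω)⁻¹) * (X n ω * η n ω)
        + 6 * (|X n ω| ^ s * (κ n ω + ζ n ω)) := by linarith
      refine a1.trans ((div_le_div_of_nonneg_right a4 hvp.le).trans (le_of_eq ?_))
      ring)
    (by
      filter_upwards [hsum, hκb] with ω hs ⟨K, hK⟩
      refine Summable.of_nonneg_of_le (fun n => mul_nonneg (mul_nonneg (by norm_num) (div_nonneg (by positivity) (hv0 n ω).le)) (hκ0 n ω)) (fun n => ?_) ((hs.mul_left 6).mul_right K)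
      exact mul_le_mul_of_nonneg_left (hK n) (mul_nonneg (by norm_num) (div_nonneg (by positivity) (hv0 n ω).le)))
  filter_upwards [key] with ω ⟨⟨K, hK⟩, _⟩
  refine ⟨K, fun n => ?_⟩
  have := hK n
  rwa [div_le_iff₀ (hv0 n ω)] at this
end

/-- coefficients of `(A + 2 b x + g x^2)^p` -/
def cf (A b g : ℝ) : ℕ → ℕ → ℝ
  | 0, 0 => 1
  | 0, _ + 1 => 0
  | p + 1, 0 => A * cf A b g p 0
  | p + 1, 1 => A * cf A b g p 1 + 2 * b * cf A b g p 0
  | p + 1, m + 2 => A * cf A b g p (m + 2) + 2 * b * cf A b g p (m + 1) + g * cf A b g p m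

theorem cf_zero_of_lt (A b g : ℝ) (p : ℕ) : ∀ m, 2 * p < m → cf A b g p m = 0 := by
  induction p with
  | zero => intro m hm; obtain ⟨k, rfl⟩ : ∃ k, m = k + 1 := ⟨m - 1, by omega⟩; rfl
  | succ p ih =>
    intro m hm
    obtain ⟨k, rfl⟩ : ∃ k, m = k + 2 := ⟨m - 2, by omega⟩
    simp only [cf]
    rw [ih (k+2) (by omega), ih (k+1) (by omega), ih k (by omega)]; ring

theorem cf_sum (A b g x : ℝ) (p : ℕ) :
    (A + 2 * b * x + g * x ^ 2) ^ p = ∑ m ∈ range (2 * p + 1), cf A b g p m * x ^ m := by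
  induction p with
  | zero => simp [cf]
  | succ p ih =>
    set s := ∑ m ∈ range (2 * p + 1), cf A b g p m * x ^ m with hs
    have z1 := cf_zero_of_lt A b g p (2 * p + 1) (by omega)
    have z2 := cf_zero_of_lt A b g p (2 * p + 2) (by omega)
    have h1 : s = ∑ m ∈ range (2 * p + 2), cf A b g p m * x ^ m := by
      rw [sum_range_succ, z1, ← hs]; ring
    have h2 : s = ∑ m ∈ range (2 * p + 3), cf A b g p m * x ^ m := by
      rw [sum_range_succ, z2, ← h1]; ring
    rw [sum_range_succ'] at h1
    rw [sum_range_succ', sum_range_succ'] at h2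
    have e : 2 * (p + 1) + 1 = 2 * p + 1 + 1 + 1 := by ring
    rw [pow_succ, ih, e, sum_range_succ', sum_range_succ']
    simp only [cf]
    have e3 : ∑ k ∈ range (2 * p + 1), (A * cf A b g p (k + 2) + 2 * b * cf A b g p (k + 1) +
        g * cf A b g p k) * x ^ (k + 1 + 1) =
        A * ∑ k ∈ range (2 * p + 1), cf A b g p (k + 1 + 1) * x ^ (k + 1 + 1)
        + 2 * b * x * ∑ k ∈ range (2 * p + 1), cf A b g p (k + 1) * x ^ (k + 1)
        + g * x ^ 2 * s := by
      rw [hs, mul_sum, mul_sum, mul_sum, ← sum_add_distrib, ← sum_add_distrib]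
      refine sum_congr rfl fun k _ => ?_
      ring
    rw [e3]
    simp only [zero_add, pow_one, pow_zero, mul_one] at h1 h2 ⊢
    have h1' : ∑ k ∈ range (2 * p + 1), cf A b g p (k + 1) * x ^ (k + 1) = s - cf A b g p 0 := by
      linarith
    have h2' : ∑ k ∈ range (2 * p + 1), cf A b g p (k + 1 + 1) * x ^ (k + 1 + 1) =
      s - cf A b g p 0 - cf A b g p 1 * x := by linarith
    rw [h1', h2']; ring

theorem cf_zero (A b g : ℝ) (p : ℕ) : cf A b g p 0 = A ^ p := by
  induction p with
  | zero => simp [cf]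
  | succ p ih => simp only [cf, ih]; ring

theorem cf_one (A b g : ℝ) (p : ℕ) : cf A b g p 1 = p * A ^ (p - 1) * (2 * b) := by
  induction p with
  | zero => simp [cf]
  | succ p ih =>
    simp only [cf, ih, cf_zero]
    rcases p with _ | p
    · simp
    · simp only [Nat.add_sub_cancel]; push_cast; ring

theorem cf_two (A b g : ℝ) (p : ℕ) :
    cf A b g p 2 = p * A ^ (p - 1) * g + 2 * p * (p - 1) * A ^ (p - 2) * b ^ 2 := by
  induction p with
  | zero => simp [cf]
  | succ p ih =>
    simp only [cf, ih, cf_zero, zero_add, cf_one]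
    rcases p with _ | _ | p
    · simp
    · simp; ring
    · simp only [Nat.add_sub_cancel, show p + 1 + 1 - 2 = p by omega, show p + 1 + 1 + 1 - 2 = p + 1 by omega]; push_cast; ring

theorem cf_bound {x y b : ℝ} (hx : 0 ≤ x) (hy : 0 ≤ y) (hb : |b| ≤ x * y) (p : ℕ) :
    ∀ m, |cf (x ^ 2) b (y ^ 2) p m| ≤ ((2 * p).choose m : ℝ) * (x ^ (2 * p - m) * y ^ m) := by
  induction p with
  | zero =>
    intro m
    rcases m with _ | m
    · simp [cf]
    · simp [cf]
  | succ p ih =>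
    have hA : ∀ m, |x ^ 2 * cf (x ^ 2) b (y ^ 2) p m| ≤ ((2 * p).choose m : ℝ) * (x ^ (2 * (p + 1) - m) * y ^ m) := by
      intro m
      rw [abs_mul, abs_of_nonneg (by positivity : 0 ≤ x ^ 2)]
      refine (mul_le_mul_of_nonneg_left (ih m) (by positivity)).trans (le_of_eq ?_)
      rcases le_or_gt m (2 * p) with h | h
      · rw [show 2 * (p + 1) - m = 2 + (2 * p - m) by omega, pow_add]; ring
      · rw [Nat.choose_eq_zero_of_lt h]; simp
    have hB : ∀ m, |2 * b * cf (x ^ 2) b (y ^ 2) p m| ≤ 2 * ((2 * p).choose m : ℝ) * (x ^ (2 * (p + 1) - (m + 1)) * y ^ (m + 1)) := by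
      intro m
      rw [abs_mul, abs_mul, abs_two]
      have h0 : 0 ≤ ((2 * p).choose m : ℝ) * (x ^ (2 * p - m) * y ^ m) := by positivity
      have := mul_le_mul (mul_le_mul_of_nonneg_left hb (by norm_num : (0:ℝ) ≤ 2)) (ih m) (abs_nonneg _) (by positivity)
      refine this.trans (le_of_eq ?_)
      rcases le_or_gt m (2 * p) with h | h
      · rw [show 2 * (p + 1) - (m + 1) = 1 + (2 * p - m) by omega, pow_add]; ring
      · rw [Nat.choose_eq_zero_of_lt h]; simp
    have hC : ∀ m, |y ^ 2 * cf (x ^ 2) b (y ^ 2) p m| ≤ ((2 * p).choose m : ℝ) * (x ^ (2 * (p + 1) - (m + 2)) * y ^ (m + 2)) := by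
      intro m
      rw [abs_mul, abs_of_nonneg (by positivity : 0 ≤ y ^ 2)]
      refine (mul_le_mul_of_nonneg_left (ih m) (by positivity)).trans (le_of_eq ?_)
      rw [show 2 * (p + 1) - (m + 2) = 2 * p - m by omega]; ring
    intro m
    rcases m with _ | _ | m
    · simp only [cf]
      exact (hA 0).trans (le_of_eq (by simp))
    · simp only [cf, zero_add]
      refine (abs_add_le _ _).trans ((add_le_add (hA 1) (hB 0)).trans (le_of_eq ?_))
      simp; ring
    · simp only [cf]
      refine (abs_add_le _ _).trans ((add_le_add ((abs_add_le _ _).trans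
        (add_le_add (hA (m+2)) (hB (m+1)))) (hC m)).trans (le_of_eq ?_))
      have : (2 * (p + 1)).choose (m + 2) = (2 * p).choose m + 2 * (2 * p).choose (m + 1) + (2 * p).choose (m + 2) := by
        rw [show 2 * (p + 1) = 2 * p + 1 + 1 by ring, Nat.choose_succ_succ, Nat.choose_succ_succ, Nat.choose_succ_succ]; ring
      rw [this]; push_cast; ring

/-- basic bound with `A = (1-ρ)Z`. -/
theorem cf_bound' {A Z b g G : ℝ} (hA : 0 ≤ A) (hAZ : A ≤ Z) (hg : 0 ≤ g) (hG : 1 ≤ G) (hgG : g ≤ G)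
    (hb : b ^ 2 ≤ g * A) (p : ℕ) :
    (∀ m, 2 ≤ m → m ≤ 2 * p → |cf A b g p m| ≤ 4 ^ p * G ^ (2 * p) * (g * (1 + Z ^ (p - 1)))) ∧
    (∀ m, 3 ≤ m → m ≤ 2 * p → |cf A b g p m| ≤ 4 ^ p * G ^ (2 * p) * (√g * (g * (1 + Z ^ p)))) := by
  set x := √A with hx
  set y := √g with hy
  have hx0 : 0 ≤ x := Real.sqrt_nonneg _
  have hy0 : 0 ≤ y := Real.sqrt_nonneg _
  have hxA : x ^ 2 = A := Real.sq_sqrt hA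
  have hyg : y ^ 2 = g := Real.sq_sqrt hg
  have hb' : |b| ≤ x * y := by
    refine abs_le_of_sq_le_sq ?_ (by positivity)
    rw [mul_pow, hxA, hyg]; linarith
  have hyG : y ≤ G := by
    rw [hy]; refine Real.sqrt_le_iff.2 ⟨by linarith, ?_⟩; nlinarith
  have hZ : 0 ≤ Z := hA.trans hAZ
  have hch : ∀ m, ((2 * p).choose m : ℝ) ≤ 4 ^ p := by
    intro m
    have := Nat.choose_le_two_pow (2 * p) m
    calc ((2 * p).choose m : ℝ) ≤ ((2 ^ (2 * p) : ℕ) : ℝ) := by exact_mod_cast this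
      _ = 4 ^ p := by push_cast; rw [pow_mul]; norm_num
  have hle : ∀ i j : ℕ, i ≤ 2 * j → x ^ i ≤ 1 + Z ^ j := by
    intro i j hij
    rcases le_total x 1 with h | h
    · have : x ^ i ≤ 1 := pow_le_one₀ hx0 h
      have : 0 ≤ Z ^ j := by positivity
      linarith
    · have : x ^ i ≤ x ^ (2 * j) := pow_le_pow_right₀ h hij
      rw [pow_mul, hxA] at this
      have : A ^ j ≤ Z ^ j := pow_le_pow_left₀ hA hAZ _
      linarith
  have hyp : ∀ i, i ≤ 2 * p → y ^ i ≤ G ^ (2 * p) := by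
    intro i hi
    exact (pow_le_pow_left₀ hy0 hyG i).trans (pow_le_pow_right₀ hG hi)
  have main := cf_bound hx0 hy0 hb' p
  rw [hxA, hyg] at main
  constructor
  · intro m h2 hm
    refine (main m).trans ?_
    have e : y ^ m = y ^ (m - 2) * g := by
      rw [← hyg, ← pow_add]; congr 1; omega
    rw [e]
    calc ((2 * p).choose m : ℝ) * (x ^ (2 * p - m) * (y ^ (m - 2) * g))
        ≤ 4 ^ p * ((1 + Z ^ (p - 1)) * (G ^ (2 * p) * g)) := by
          have a1 := hch m
          have a2 := hle (2 * p - m) (p - 1) (by omega)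
          have a3 := hyp (m - 2) (by omega)
          gcongr
      _ = _ := by ring
  · intro m h2 hm
    refine (main m).trans ?_
    have e : y ^ m = y ^ (m - 3) * (y * g) := by
      rw [← hyg, ← pow_succ', ← pow_add]; congr 1; omega
    rw [e]
    calc ((2 * p).choose m : ℝ) * (x ^ (2 * p - m) * (y ^ (m - 3) * (y * g)))
        ≤ 4 ^ p * ((1 + Z ^ p) * (G ^ (2 * p) * (y * g))) := by
          have a1 := hch m
          have a2 := hle (2 * p - m) p (by omega)
          have a3 := hyp (m - 3) (by omega)
          gcongr
      _ = _ := by ring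

theorem bern_lower {ρ : ℝ} (h1 : ρ ≤ 1) (p : ℕ) : 1 - p * ρ ≤ (1 - ρ) ^ p := by
  have := one_add_mul_le_pow (a := -ρ) (by linarith) p
  calc 1 - p * ρ = 1 + p * (-ρ) := by ring
    _ ≤ (1 + -ρ) ^ p := this
    _ = _ := by ring

theorem bern_upper {ρ : ℝ} (h0 : 0 ≤ ρ) (h1 : ρ ≤ 1) (p : ℕ) :
    (1 - ρ) ^ p ≤ 1 - p * ρ + p ^ 2 * ρ ^ 2 := by
  induction p with
  | zero => simp
  | succ p ih =>
    rw [pow_succ]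
    refine (mul_le_mul_of_nonneg_right ih (by linarith)).trans ?_
    push_cast
    have : 0 ≤ (p:ℝ) ^ 2 * ρ ^ 3 := by positivity
    have : 0 ≤ (p:ℝ) * ρ ^ 2 := by positivity
    nlinarith [sq_nonneg ρ]

theorem cf_err {p : ℕ} (hp : 1 ≤ p) {G : ℝ} (hG : 1 ≤ G) : ∃ K : ℝ, 0 ≤ K ∧ ∀ (Z ρ b g s2 E : ℝ) (e : ℕ → ℝ),
    0 ≤ Z → 0 ≤ ρ → ρ ≤ 1 → ρ ≤ g → g ≤ G → b ^ 2 ≤ g * ((1 - ρ) * Z) → 0 ≤ s2 → 0 ≤ E →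
    e 0 = 1 → e 1 = 0 → e 2 = s2 → (∀ m, m ≤ 2 * p → |e m| ≤ E) →
    |∑ m ∈ range (2 * p + 1), cf ((1 - ρ) * Z) b g p m * e m -
      (Z ^ p - p * (ρ * Z ^ p) + p * s2 * (g * Z ^ (p - 1)) + 2 * p * (p - 1) * s2 * (b ^ 2 * Z ^ (p - 2)))|
      ≤ K * (1 + s2 + E) * (√g * (g * (1 + Z ^ p))) := by
  refine ⟨G * p ^ 2 + 2 * G * p ^ 2 + 4 * G * p ^ 2 * p + (2 * p) * (4 ^ p * G ^ (2 * p)), by positivity, ?_⟩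
  intro Z ρ b g s2 E e hZ hρ0 hρ1 hρg hgG hb hs2 hE e0 e1 e2 he
  have hg : 0 ≤ g := hρ0.trans hρg
  set A := (1 - ρ) * Z with hA
  have hA0 : 0 ≤ A := mul_nonneg (by linarith) hZ
  have hAZ : A ≤ Z := by rw [hA]; nlinarith
  have hB3 := (cf_bound' hA0 hAZ hg hG hgG hb p).2
  set Q := √g * (g * (1 + Z ^ p)) with hQ
  have hQ0 : 0 ≤ Q := by positivity
  have hsplit : ∑ m ∈ range (2 * p + 1), cf A b g p m * e m =
      A ^ p + s2 * (p * A ^ (p - 1) * g + 2 * p * (p - 1) * A ^ (p - 2) * b ^ 2) +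
        ∑ m ∈ range (2 * p - 2), cf A b g p (m + 3) * e (m + 3) := by
    rw [show 2 * p + 1 = 2 * p - 2 + 1 + 1 + 1 by omega, sum_range_succ', sum_range_succ', sum_range_succ']
    simp only [zero_add, e0, e1, e2, cf_zero, cf_two, show ∀ m, m + 1 + 1 + 1 = m + 3 from fun m => rfl,
      show (1:ℕ) + 1 = 2 from rfl]
    ring
  have hr3 : |∑ m ∈ range (2 * p - 2), cf A b g p (m + 3) * e (m + 3)| ≤ (2 * p) * (4 ^ p * G ^ (2 * p)) * E * Q := by
    refine (abs_sum_le_sum_abs _ _).trans ?_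
    refine (sum_le_card_nsmul _ _ (4 ^ p * G ^ (2 * p) * Q * E) ?_).trans ?_
    · intro m hm
      have hm' : m + 3 ≤ 2 * p := by simp at hm; omega
      rw [abs_mul]
      exact mul_le_mul (hB3 (m+3) (by omega) hm') (he _ hm') (abs_nonneg _) (by positivity)
    · rw [card_range, nsmul_eq_mul]
      have h1 : ((2 * p - 2 : ℕ) : ℝ) ≤ 2 * p := by
        calc ((2 * p - 2 : ℕ) : ℝ) ≤ ((2 * p : ℕ) : ℝ) := by exact_mod_cast Nat.sub_le _ _
          _ = _ := by push_cast; ring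
      have h2 : 0 ≤ 4 ^ p * G ^ (2 * p) * Q * E := by positivity
      calc ((2 * p - 2 : ℕ) : ℝ) * (4 ^ p * G ^ (2 * p) * Q * E) ≤ 2 * p * (4 ^ p * G ^ (2 * p) * Q * E) :=
            mul_le_mul_of_nonneg_right h1 h2
        _ = _ := by ring
  -- g^2 (1+Z^p) ≤ G Q
  have hgs : g ≤ G * √g := by
    have h1 : √g ≤ G := Real.sqrt_le_iff.2 ⟨by linarith, by nlinarith⟩
    calc g = √g * √g := (Real.mul_self_sqrt hg).symm
      _ ≤ G * √g := mul_le_mul_of_nonneg_right h1 (Real.sqrt_nonneg _)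
  have hggQ : g * (g * (1 + Z ^ p)) ≤ G * Q := by
    calc g * (g * (1 + Z ^ p)) ≤ (G * √g) * (g * (1 + Z ^ p)) := mul_le_mul_of_nonneg_right hgs (by positivity)
      _ = G * Q := by rw [hQ]; ring
  have hZp : 0 ≤ Z ^ p := by positivity
  have hρ2 : ρ ^ 2 * Z ^ p ≤ G * Q := by
    refine le_trans ?_ hggQ
    have : ρ ^ 2 ≤ g * g := by nlinarith
    calc ρ ^ 2 * Z ^ p ≤ (g * g) * (1 + Z ^ p) := by
          refine mul_le_mul this (by linarith) hZp (by positivity)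
      _ = _ := by ring
  have t1 : |A ^ p - Z ^ p + p * (ρ * Z ^ p)| ≤ p ^ 2 * (G * Q) := by
    have e : A ^ p - Z ^ p + p * (ρ * Z ^ p) = ((1 - ρ) ^ p - 1 + p * ρ) * Z ^ p := by
      rw [hA, mul_pow]; ring
    have l := bern_lower hρ1 p
    have u := bern_upper hρ0 hρ1 p
    rw [e, abs_mul, abs_of_nonneg hZp, abs_of_nonneg (by linarith)]
    calc ((1 - ρ) ^ p - 1 + p * ρ) * Z ^ p ≤ (p ^ 2 * ρ ^ 2) * Z ^ p :=
          mul_le_mul_of_nonneg_right (by linarith) hZp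
      _ = p ^ 2 * (ρ ^ 2 * Z ^ p) := by ring
      _ ≤ _ := mul_le_mul_of_nonneg_left hρ2 (by positivity)
  have hZ1 : ∀ i, i ≤ p → Z ^ i ≤ 1 + Z ^ p := by
    intro i hi
    rcases le_total Z 1 with h | h
    · have : Z ^ i ≤ 1 := pow_le_one₀ hZ h
      linarith
    · have : Z ^ i ≤ Z ^ p := pow_le_pow_right₀ h hi
      linarith
  have hdiff : ∀ i : ℕ, i ≤ p → |A ^ i - Z ^ i| ≤ p * g * Z ^ i := by
    intro i hi
    have hZi : 0 ≤ Z ^ i := by positivity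
    have l := bern_lower hρ1 i
    have u : (1 - ρ) ^ i ≤ 1 := pow_le_one₀ (by linarith) (by linarith)
    have e : A ^ i - Z ^ i = -((1 - (1 - ρ) ^ i) * Z ^ i) := by rw [hA, mul_pow]; ring
    rw [e, abs_neg, abs_mul, abs_of_nonneg hZi, abs_of_nonneg (by linarith)]
    refine mul_le_mul_of_nonneg_right ?_ hZi
    have : (i:ℝ) * ρ ≤ p * g := mul_le_mul (by exact_mod_cast hi) hρg hρ0 (by positivity)
    linarith
  have t2 : |g * (A ^ (p - 1) - Z ^ (p - 1))| ≤ p * (G * Q) := by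
    rw [abs_mul, abs_of_nonneg hg]
    calc g * |A ^ (p - 1) - Z ^ (p - 1)| ≤ g * (p * g * (1 + Z ^ p)) := by
          refine mul_le_mul_of_nonneg_left ((hdiff _ (by omega)).trans ?_) hg
          exact mul_le_mul_of_nonneg_left (hZ1 _ (by omega)) (by positivity)
      _ = p * (g * (g * (1 + Z ^ p))) := by ring
      _ ≤ _ := mul_le_mul_of_nonneg_left hggQ (by positivity)
  have t3 : |((p:ℝ) - 1) * (b ^ 2 * (A ^ (p - 2) - Z ^ (p - 2)))| ≤ p * (p * (G * Q)) := by
    rcases Nat.lt_or_ge p 2 with h | h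
    · have : p = 1 := by omega
      subst this; simp; positivity
    · have hp1 : (0:ℝ) ≤ (p:ℝ) - 1 := by
        have : (1:ℝ) ≤ p := by exact_mod_cast hp
        linarith
      rw [abs_mul, abs_of_nonneg hp1, abs_mul, abs_of_nonneg (sq_nonneg b)]
      refine mul_le_mul (by linarith) ?_ (by positivity) (by positivity)
      calc b ^ 2 * |A ^ (p - 2) - Z ^ (p - 2)| ≤ (g * Z) * (p * g * Z ^ (p - 2)) := by
            refine mul_le_mul (hb.trans (mul_le_mul_of_nonneg_left hAZ hg)) (hdiff _ (by omega)) (abs_nonneg _) (by positivity)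
        _ = p * (g * (g * Z ^ (p - 1))) := by
            rw [show p - 1 = p - 2 + 1 by omega, pow_succ]; ring
        _ ≤ p * (g * (g * (1 + Z ^ p))) := by
            have := hZ1 (p - 1) (by omega)
            gcongr
        _ ≤ _ := mul_le_mul_of_nonneg_left hggQ (by positivity)
  rw [hsplit]
  have edec : A ^ p + s2 * (p * A ^ (p - 1) * g + 2 * p * (p - 1) * A ^ (p - 2) * b ^ 2) +
        ∑ m ∈ range (2 * p - 2), cf A b g p (m + 3) * e (m + 3) -
      (Z ^ p - p * (ρ * Z ^ p) + p * s2 * (g * Z ^ (p - 1)) + 2 * p * (p - 1) * s2 * (b ^ 2 * Z ^ (p - 2)))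
      = (A ^ p - Z ^ p + p * (ρ * Z ^ p)) + s2 * p * (g * (A ^ (p - 1) - Z ^ (p - 1)))
        + 2 * p * s2 * (((p:ℝ) - 1) * (b ^ 2 * (A ^ (p - 2) - Z ^ (p - 2))))
        + ∑ m ∈ range (2 * p - 2), cf A b g p (m + 3) * e (m + 3) := by ring
  rw [edec]
  have a2 : |s2 * p * (g * (A ^ (p - 1) - Z ^ (p - 1)))| ≤ s2 * p * (p * (G * Q)) := by
    rw [abs_mul, abs_of_nonneg (by positivity : 0 ≤ s2 * (p:ℝ))]
    exact mul_le_mul_of_nonneg_left t2 (by positivity)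
  have a3 : |2 * p * s2 * (((p:ℝ) - 1) * (b ^ 2 * (A ^ (p - 2) - Z ^ (p - 2))))| ≤ 2 * p * s2 * (p * (p * (G * Q))) := by
    rw [abs_mul, abs_of_nonneg (by positivity : 0 ≤ 2 * (p:ℝ) * s2)]
    exact mul_le_mul_of_nonneg_left t3 (by positivity)
  refine (abs_add_le _ _).trans ((add_le_add ((abs_add_le _ _).trans (add_le_add ((abs_add_le _ _).trans
    (add_le_add t1 a2)) a3)) hr3).trans ?_)
  set R := 4 ^ p * G ^ (2 * p) with hR
  have hR0 : 0 ≤ R := by positivity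
  have hP : 0 ≤ (p:ℝ) := by positivity
  have hG0 : 0 ≤ G := by linarith
  have : 0 ≤ (G * p ^ 2 + 2 * G * p ^ 2 + 4 * G * p ^ 2 * p + (2 * p) * R) * (1 + s2 + E) * Q -
    (p ^ 2 * (G * Q) + s2 * p * (p * (G * Q)) + 2 * p * s2 * (p * (p * (G * Q))) + 2 * p * R * E * Q) := by
    have e : (G * p ^ 2 + 2 * G * p ^ 2 + 4 * G * p ^ 2 * p + (2 * p) * R) * (1 + s2 + E) * Q -
    (p ^ 2 * (G * Q) + s2 * p * (p * (G * Q)) + 2 * p * s2 * (p * (p * (G * Q))) + 2 * p * R * E * Q)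
     = (2 * G * p ^ 2 + 4 * G * p ^ 2 * p + 2 * p * R) * Q + (2 * G * p^2 + 2 * G * p ^ 2 * p + 2 * p * R) * s2 * Q
       + (3 * G * p ^ 2 + 4 * G * p ^ 2 * p) * E * Q := by ring
    rw [e]; positivity
  linarith

structure Noise {Ω : Type*} {m0 : MeasurableSpace Ω} (μ : Measure Ω) (F : Filtration ℕ m0)
    (ε : ℕ → Ω → ℝ) (a s2 : ℝ) (P : ℕ) (e : ℕ → ℕ → Ω → ℝ) (c : ℕ → Ω → ℝ) : Prop where
  s20 : 0 ≤ s2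
  haP : 2 * (P:ℝ) < a
  em : ∀ m n, Measurable[F n] (e m n)
  cm : ∀ n, Measurable[F n] (c n)
  c0 : ∀ n ω, 0 ≤ c n ω
  εm : ∀ n, Measurable[F n] (ε n)
  e0 : ∀ n ω, e 0 n ω = 1
  e1 : ∀ n ω, e 1 n ω = 0
  e2 : ∀ n ω, e 2 n ω = s2
  eb : ∀ m, m ≤ 2 * P → ∀ n, ∀ᵐ ω ∂μ, |e m n ω| ≤ 1 + s2 + c n ω
  lη : ∀ m, m ≤ 2 * P → ∀ n, LMD μ (F n) (fun ω => ε (n+1) ω ^ m - e m n ω)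
  lζ : ∀ n, LMD μ (F n) (fun ω => |ε (n+1) ω| ^ a - c n ω)
  cb : ∀ᵐ ω ∂μ, ∃ C : ℝ, ∀ n, c n ω ≤ C

structure Pot {Ω : Type*} {m0 : MeasurableSpace Ω} (F : Filtration ℕ m0)
    (ε : ℕ → Ω → ℝ) (G : ℝ) (Z ρ b g : ℕ → Ω → ℝ) : Prop where
  hG : 1 ≤ G
  Zm : ∀ n, Measurable[F n] (Z n)
  ρm : ∀ n, Measurable[F n] (ρ n)
  bm : ∀ n, Measurable[F n] (b n)
  gm : ∀ n, Measurable[F n] (g n)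
  Z0 : ∀ n ω, 0 ≤ Z n ω
  ρ0 : ∀ n ω, 0 ≤ ρ n ω
  ρ1 : ∀ n ω, ρ n ω ≤ 1
  ρg : ∀ n ω, ρ n ω ≤ g n ω
  gG : ∀ n ω, g n ω ≤ G
  hb : ∀ n ω, b n ω ^ 2 ≤ g n ω * ((1 - ρ n ω) * Z n ω)
  hrec : ∀ n ω, Z (n+1) ω = (1 - ρ n ω) * Z n ω + 2 * b n ω * ε (n+1) ω + g n ω * ε (n+1) ω ^ 2

theorem meas_cf {Ω : Type*} {m : MeasurableSpace Ω} {A b g : Ω → ℝ} (hA : Measurable A)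
    (hb : Measurable b) (hg : Measurable g) (p : ℕ) : ∀ k,
    Measurable (fun ω => cf (A ω) (b ω) (g ω) p k) := by
  induction p with
  | zero =>
    intro k
    rcases k with _ | k
    · exact measurable_const
    · exact measurable_const
  | succ p ih =>
    intro k
    rcases k with _ | _ | k
    · simp only [cf]; exact hA.mul (ih 0)
    · simp only [cf]; exact (hA.mul (ih 1)).add ((measurable_const.mul hb).mul (ih 0))
    · simp only [cf]
      exact ((hA.mul (ih _)).add ((measurable_const.mul hb).mul (ih _))).add (hg.mul (ih _))

theorem add_rpow_le4 {x y s : ℝ} (hx : 0 ≤ x) (hy : 0 ≤ y) (h1 : 1 ≤ s) (h2 : s ≤ 2) :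
    (x + y) ^ s ≤ 4 * (x ^ s + y ^ s) := by
  have key : ∀ u v : ℝ, 0 ≤ u → u ≤ v → (u + v) ^ s ≤ 4 * v ^ s := by
    intro u v hu huv
    have h4 : (2:ℝ) ^ s ≤ 4 := by
      calc (2:ℝ) ^ s ≤ 2 ^ (2:ℝ) := Real.rpow_le_rpow_of_exponent_le (by norm_num) h2
        _ = 4 := by norm_num
    calc (u + v) ^ s ≤ (2 * v) ^ s := Real.rpow_le_rpow (by linarith) (by linarith) (by linarith)
      _ = 2 ^ s * v ^ s := Real.mul_rpow (by norm_num) (by linarith)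
      _ ≤ 4 * v ^ s := mul_le_mul_of_nonneg_right h4 (Real.rpow_nonneg (by linarith) _)
  have hxs : 0 ≤ x ^ s := Real.rpow_nonneg hx _
  have hys : 0 ≤ y ^ s := Real.rpow_nonneg hy _
  rcases le_total x y with h | h
  · linarith [key x y hx h]
  · have := key y x hy h
    rw [add_comm] at this; linarith

section
variable {Ω : Type*} {m0 : MeasurableSpace Ω} {μ : Measure Ω} [IsProbabilityMeasure μ]

theorem slln_X {F : Filtration ℕ m0} {ε : ℕ → Ω → ℝ} {a s2 : ℝ} {P : ℕ} {e : ℕ → ℕ → Ω → ℝ}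
    {c : ℕ → Ω → ℝ} (hn : Noise μ F ε a s2 P e c) {s q : ℝ} (h1 : 1 ≤ s) (h2 : s ≤ 2)
    (hqs : q < s) (hq0 : 0 ≤ q)
    {m : ℕ} (hm : m ≤ 2 * P) (hms : m * s ≤ a) (X τ : ℕ → Ω → ℝ)
    (hX : ∀ n, Measurable[F n] (X n)) (hτ : ∀ n, Measurable[F n] (τ n))
    (hτ1 : ∀ n ω, 1 ≤ τ n ω) (hτm : ∀ n ω, τ n ω ≤ τ (n+1) ω)
    (hτt : ∀ᵐ ω ∂μ, Tendsto (fun n => τ n ω) atTop atTop)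
    (hsum : ∀ᵐ ω ∂μ, Summable fun n => |X n ω| ^ s / τ n ω ^ q) :
    ∀ᵐ ω ∂μ, (fun n => ∑ k ∈ range n, X k ω * (ε (k+1) ω ^ m - e m k ω)) =o[atTop]
      (fun n => τ n ω) := by
  have hτ0 : ∀ n ω, 0 < τ n ω := fun n ω => by linarith [hτ1 n ω]
  have hle : ∀ n, F n ≤ F (n+1) := fun n => F.mono (Nat.le_succ n)
  have hs20 := hn.s20
  have key := slln_lmd (μ := μ) F h1 h2 X (fun n ω => ε (n+1) ω ^ m - e m n ω)
    (fun n ω => 4 * (1 + c n ω + (1 + s2 + c n ω) ^ 2)) (fun n ω => 4 * (|ε (n+1) ω| ^ a - c n ω))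
    (fun n ω => τ n ω ^ q) hX
    (fun n => ((hn.εm (n+1)).pow_const m).sub ((hn.em m n).mono (hle n) le_rfl))
    (fun n => measurable_const.mul ((measurable_const.add (hn.cm n)).add
      ((measurable_const.add (hn.cm n)).pow_const 2)))
    (fun n => measurable_const.mul ((meas_abs_rpow a (hn.εm (n+1))).sub ((hn.cm n).mono (hle n) le_rfl)))
    (fun n => (hτ n).pow_const q) (hn.lη m hm)
    (fun n => LMD.mul (F.le n) (hn.lζ n) measurable_const)
    (fun n => by
      filter_upwards [hn.eb m hm n] with ω hω
      have hc := hn.c0 n ω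
      have b1 : |ε (n+1) ω ^ m - e m n ω| ≤ |ε (n+1) ω| ^ m + |e m n ω| := by
        rw [← abs_pow]; exact abs_sub _ _
      have b2 := (Real.rpow_le_rpow (abs_nonneg _) b1 (by linarith : 0 ≤ s)).trans
        (add_rpow_le4 (by positivity) (abs_nonneg _) h1 h2)
      have b3 : (|ε (n+1) ω| ^ m) ^ s ≤ 1 + |ε (n+1) ω| ^ a := by
        have hx := abs_nonneg (ε (n+1) ω)
        set x := |ε (n+1) ω|
        have ha0 : 0 ≤ x ^ a := Real.rpow_nonneg hx _
        rw [← Real.rpow_natCast, ← Real.rpow_mul hx]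
        rcases le_total x 1 with h | h
        · have : x ^ (m * s) ≤ 1 := Real.rpow_le_one hx h (by positivity)
          linarith
        · have : x ^ (m * s) ≤ x ^ a := Real.rpow_le_rpow_of_exponent_le h hms
          linarith
      have b4 : |e m n ω| ^ s ≤ (1 + s2 + c n ω) ^ 2 := by
        refine (Real.rpow_le_rpow (abs_nonneg _) hω (by linarith)).trans ?_
        rw [← Real.rpow_natCast]
        exact Real.rpow_le_rpow_of_exponent_le (by linarith) (by exact_mod_cast h2)
      linarith)
    (fun n ω => by have := hn.c0 n ω; positivity)
    (by
      filter_upwards [hn.cb] with ω ⟨C, hC⟩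
      refine ⟨4 * (1 + C + (1 + s2 + C) ^ 2), fun n => ?_⟩
      have := hn.c0 n ω
      have := hC n
      gcongr)
    (fun n ω => Real.rpow_pos_of_pos (hτ0 n ω) _)
    (fun n ω => Real.rpow_le_rpow (hτ0 n ω).le (hτm n ω) hq0) hsum
  filter_upwards [key, hτt] with ω ⟨K, hK⟩ ht
  set N := fun n => ∑ k ∈ range n, X k ω * (ε (k+1) ω ^ m - e m k ω) with hN
  have hs0 : 0 < s := by linarith
  have hb : ∀ n, |N n| ≤ (|K|) ^ s⁻¹ * τ n ω ^ (q / s) := by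
    intro n
    have h := hK n
    have h' : |N n| ^ s ≤ |K| * τ n ω ^ q :=
      h.trans (mul_le_mul_of_nonneg_right (le_abs_self K) (Real.rpow_nonneg (hτ0 n ω).le _))
    have := Real.rpow_le_rpow (Real.rpow_nonneg (abs_nonneg _) _) h' (inv_nonneg.2 hs0.le)
    rw [Real.rpow_rpow_inv (abs_nonneg _) hs0.ne', Real.mul_rpow (abs_nonneg _) (Real.rpow_nonneg (hτ0 n ω).le _),
      ← Real.rpow_mul (hτ0 n ω).le] at this
    exact this
  have hO : N =O[atTop] (fun n => τ n ω ^ (q / s)) := by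
    refine Asymptotics.IsBigO.of_bound (|K| ^ s⁻¹) (Eventually.of_forall fun n => ?_)
    rw [Real.norm_eq_abs, Real.norm_eq_abs, abs_of_nonneg (Real.rpow_nonneg (hτ0 n ω).le _)]
    exact hb n
  have ho : (fun n => τ n ω ^ (q / s)) =o[atTop] (fun n => τ n ω) := by
    have h1 : q / s < 1 := (div_lt_one hs0).2 hqs
    refine Asymptotics.isLittleO_of_tendsto (fun n h => absurd h (hτ0 n ω).ne') ?_
    have := (tendsto_rpow_neg_atTop (y := 1 - q / s) (by linarith)).comp ht
    refine this.congr fun n => ?_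
    simp only [Function.comp_def, neg_sub]
    rw [Real.rpow_sub_one (hτ0 n ω).ne']
  exact hO.trans_isLittleO ho
end

theorem half_absorb {p : ℕ} (hp : 1 ≤ p) {Z H : ℝ} (hZ : 0 ≤ Z) (hH : 0 ≤ H) :
    H * (1 + Z ^ (p - 1)) ≤ 1 / 2 * Z ^ p + H * (1 + (4 * H + 1) ^ (p - 1)) := by
  have hZp : 0 ≤ Z ^ p := by positivity
  rcases le_total Z (4 * H + 1) with h | h
  · have : Z ^ (p - 1) ≤ (4 * H + 1) ^ (p - 1) := pow_le_pow_left₀ hZ h _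
    nlinarith
  · have h1 : 1 ≤ Z ^ (p - 1) := one_le_pow₀ (by linarith)
    have e : Z ^ p = Z * Z ^ (p - 1) := by rw [← pow_succ']; congr 1; omega
    have : 0 ≤ H * (1 + (4 * H + 1) ^ (p - 1)) := by positivity
    rw [e]
    nlinarith

section
variable {Ω : Type*} {m0 : MeasurableSpace Ω} {μ : Measure Ω} [IsProbabilityMeasure μ]

theorem Pot.pow_eq {F : Filtration ℕ m0} {ε : ℕ → Ω → ℝ} {G : ℝ} {Z ρ b g : ℕ → Ω → ℝ}
    (hP : Pot F ε G Z ρ b g) (e : ℕ → ℕ → Ω → ℝ) (p n : ℕ) (ω : Ω) :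
    Z (n+1) ω ^ p = ∑ m ∈ range (2 * p + 1), cf ((1 - ρ n ω) * Z n ω) (b n ω) (g n ω) p m * e m n ω
      + ∑ m ∈ range (2 * p + 1), cf ((1 - ρ n ω) * Z n ω) (b n ω) (g n ω) p m * (ε (n+1) ω ^ m - e m n ω) := by
  rw [hP.hrec, cf_sum, ← sum_add_distrib]
  exact sum_congr rfl fun m _ => by ring

theorem Pot.cfm {F : Filtration ℕ m0} {ε : ℕ → Ω → ℝ} {G : ℝ} {Z ρ b g : ℕ → Ω → ℝ}
    (hP : Pot F ε G Z ρ b g) (p n m : ℕ) :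
    Measurable[F n] (fun ω => cf ((1 - ρ n ω) * Z n ω) (b n ω) (g n ω) p m) :=
  meas_cf ((measurable_const.sub (hP.ρm n)).mul (hP.Zm n)) (hP.bm n) (hP.gm n) p m

theorem Pot.A0 {F : Filtration ℕ m0} {ε : ℕ → Ω → ℝ} {G : ℝ} {Z ρ b g : ℕ → Ω → ℝ}
    (hP : Pot F ε G Z ρ b g) (n : ℕ) (ω : Ω) : 0 ≤ (1 - ρ n ω) * Z n ω :=
  mul_nonneg (by linarith [hP.ρ1 n ω]) (hP.Z0 n ω)

theorem Pot.AZ {F : Filtration ℕ m0} {ε : ℕ → Ω → ℝ} {G : ℝ} {Z ρ b g : ℕ → Ω → ℝ}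
    (hP : Pot F ε G Z ρ b g) (n : ℕ) (ω : Ω) : (1 - ρ n ω) * Z n ω ≤ Z n ω := by
  nlinarith [hP.ρ0 n ω, hP.Z0 n ω]

theorem Pot.g0 {F : Filtration ℕ m0} {ε : ℕ → Ω → ℝ} {G : ℝ} {Z ρ b g : ℕ → Ω → ℝ}
    (hP : Pot F ε G Z ρ b g) (n : ℕ) (ω : Ω) : 0 ≤ g n ω := (hP.ρ0 n ω).trans (hP.ρg n ω)

theorem pot_rs {F : Filtration ℕ m0} {ε : ℕ → Ω → ℝ} {a s2 : ℝ} {P : ℕ} {e : ℕ → ℕ → Ω → ℝ}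
    {c : ℕ → Ω → ℝ} (hn : Noise μ F ε a s2 P e c) {G : ℝ} {Z ρ b g : ℕ → Ω → ℝ}
    (hP : Pot F ε G Z ρ b g) (hgρ : ∀ n ω, g n ω ≤ G * ρ n ω) {p : ℕ} (hp : 1 ≤ p) (hpP : p ≤ P)
    {τ : ℕ → Ω → ℝ} (hτ : ∀ n, Measurable[F n] (τ n))
    (hτ1 : ∀ n ω, 1 ≤ τ n ω) (hτm : ∀ n ω, τ n ω ≤ τ (n+1) ω) {w : ℝ} (hw : 0 ≤ w)
    (hsum : ∀ᵐ ω ∂μ, Summable fun n => ρ n ω / τ n ω ^ w) :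
    ∀ᵐ ω ∂μ, (∃ K : ℝ, ∀ n, Z n ω ^ p / τ n ω ^ w ≤ K) ∧
      Summable fun n => ρ n ω * Z n ω ^ p / τ n ω ^ w := by
  have hτ0 : ∀ n ω, 0 < τ n ω := fun n ω => by linarith [hτ1 n ω]
  have hv0 : ∀ n ω, 0 < τ n ω ^ w := fun n ω => Real.rpow_pos_of_pos (hτ0 n ω) _
  have hle : ∀ n, F n ≤ F (n+1) := fun n => F.mono (Nat.le_succ n)
  have hs20 := hn.s20
  have hG := hP.hG
  set R : ℝ := 2 * p * (4 ^ p * G ^ (2 * p)) * G with hR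
  have hR0 : 0 ≤ R := by positivity
  set H : ℕ → Ω → ℝ := fun n ω => R * (1 + s2 + c n ω) with hH
  have hH0 : ∀ n ω, 0 ≤ H n ω := fun n ω => by have := hn.c0 n ω; positivity
  have hHm : ∀ n, Measurable[F n] (H n) := fun n => measurable_const.mul (measurable_const.add (hn.cm n))
  have hvm : ∀ n, Measurable[F n] (fun ω => τ n ω ^ w) := fun n => (hτ n).pow_const w
  have hBm : ∀ n, Measurable[F n] (fun ω => H n ω * (1 + (4 * H n ω + 1) ^ (p - 1)) * (ρ n ω / τ n ω ^ w)) :=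
    fun n => ((hHm n).mul (measurable_const.add ((((hHm n).const_mul 4).add_const 1).pow_const _))).mul
      ((hP.ρm n).div (hvm n))
  have key := robbins_siegmund (μ := μ) F (fun n ω => Z n ω ^ p / τ n ω ^ w)
    (fun n ω => 1 / 2 * (ρ n ω * Z n ω ^ p / τ n ω ^ w))
    (fun n ω => H n ω * (1 + (4 * H n ω + 1) ^ (p - 1)) * (ρ n ω / τ n ω ^ w))
    (fun n ω => ∑ m ∈ range (2 * p + 1), (cf ((1 - ρ n ω) * Z n ω) (b n ω) (g n ω) p m / τ n ω ^ w) *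
      (ε (n+1) ω ^ m - e m n ω))
    (fun n => ((hP.Zm n).pow_const p).div (hvm n)) hBm
    (fun n => Finset.measurable_fun_sum _ fun m _ => (((hP.cfm p n m).div (hvm n)).mono (hle n) le_rfl).mul
      (((hn.εm (n+1)).pow_const m).sub ((hn.em m n).mono (hle n) le_rfl)))
    (fun n ω => div_nonneg (pow_nonneg (hP.Z0 n ω) _) (hv0 n ω).le)
    (fun n ω => mul_nonneg (by norm_num) (div_nonneg (mul_nonneg (hP.ρ0 n ω) (pow_nonneg (hP.Z0 n ω) _)) (hv0 n ω).le))
    (fun n ω => by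
      have := hH0 n ω; have := hP.ρ0 n ω; have := hv0 n ω
      positivity)
    (fun n => LMD.sum (F.le n) _ fun m hm => LMD.mul (F.le n) (hn.lη m (by simp at hm; omega) n)
      ((hP.cfm p n m).div (hvm n)))
    (fun n => by
      have heb : ∀ᵐ ω ∂μ, ∀ m, m ≤ 2 * P → |e m n ω| ≤ 1 + s2 + c n ω :=
        ae_all_iff.2 fun m => by
          by_cases hm : m ≤ 2 * P
          · filter_upwards [hn.eb m hm n] with ω h _ using h
          · exact ae_of_all _ fun ω h => absurd h hm
      filter_upwards [heb] with ω hω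
      have hZ := hP.Z0 n ω
      have hρ0 := hP.ρ0 n ω
      have hρ1 := hP.ρ1 n ω
      have hc := hn.c0 n ω
      set A := (1 - ρ n ω) * Z n ω with hA
      set v := τ n ω ^ w with hv
      have hvp : 0 < v := hv0 n ω
      have b1 : Z (n+1) ω ^ p / τ (n+1) ω ^ w ≤ Z (n+1) ω ^ p / v :=
        div_le_div_of_nonneg_left (pow_nonneg (hP.Z0 _ ω) _) hvp
          (Real.rpow_le_rpow (hτ0 n ω).le (hτm n ω) hw)
      refine b1.trans ?_
      rw [hP.pow_eq e p n ω, ← hA]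
      have hB2 := (cf_bound' (hP.A0 n ω) (hP.AZ n ω) (hP.g0 n ω) hG (hP.gG n ω) (hP.hb n ω) p).1
      rw [← hA] at hB2
      have b2 : ∑ m ∈ range (2 * p + 1), cf A (b n ω) (g n ω) p m * e m n ω ≤
          Z n ω ^ p - ρ n ω * Z n ω ^ p + ρ n ω * (H n ω * (1 + Z n ω ^ (p - 1))) := by
        rw [show 2 * p + 1 = 2 * p - 1 + 1 + 1 by omega, sum_range_succ', sum_range_succ']
        simp only [zero_add, hn.e0, hn.e1, cf_zero, mul_zero, add_zero, mul_one]
        have c1 : A ^ p ≤ Z n ω ^ p - ρ n ω * Z n ω ^ p := by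
          rw [hA, mul_pow]
          have : (1 - ρ n ω) ^ p ≤ 1 - ρ n ω := pow_le_of_le_one (by linarith) (by linarith) (by omega)
          have := mul_le_mul_of_nonneg_right this (pow_nonneg hZ p)
          linarith
        have c2 : ∑ k ∈ range (2 * p - 1), cf A (b n ω) (g n ω) p (k + 1 + 1) * e (k + 1 + 1) n ω ≤
            ρ n ω * (H n ω * (1 + Z n ω ^ (p - 1))) := by
          refine (sum_le_card_nsmul _ _ (4 ^ p * G ^ (2 * p) * (G * ρ n ω * (1 + Z n ω ^ (p - 1))) * (1 + s2 + c n ω)) ?_).trans ?_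
          · intro k hk
            have hk' : k + 2 ≤ 2 * p := by simp at hk; omega
            refine (le_abs_self _).trans ?_
            rw [abs_mul]
            refine mul_le_mul ((hB2 (k+2) (by omega) hk').trans ?_) (hω _ (by omega)) (abs_nonneg _) (by positivity)
            have := hgρ n ω
            gcongr
          · rw [card_range, nsmul_eq_mul]
            have h1 : ((2 * p - 1 : ℕ) : ℝ) ≤ 2 * p := by
              calc ((2 * p - 1 : ℕ) : ℝ) ≤ ((2 * p : ℕ) : ℝ) := by exact_mod_cast Nat.sub_le _ _
                _ = _ := by push_cast; ring
            refine (mul_le_mul_of_nonneg_right h1 (by positivity)).trans (le_of_eq ?_)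
            simp only [hH, hR]; ring
        linarith
      have b3 := half_absorb hp hZ (hH0 n ω)
      have b4 := mul_le_mul_of_nonneg_left b3 hρ0
      have e5 : ∑ m ∈ range (2 * p + 1), cf A (b n ω) (g n ω) p m / v * (ε (n+1) ω ^ m - e m n ω) =
          (∑ m ∈ range (2 * p + 1), cf A (b n ω) (g n ω) p m * (ε (n+1) ω ^ m - e m n ω)) / v := by
        rw [sum_div]; exact sum_congr rfl fun m _ => by ring
      rw [e5, add_div]
      have b6 : (∑ m ∈ range (2 * p + 1), cf A (b n ω) (g n ω) p m * e m n ω) / v ≤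
        (Z n ω ^ p - 1 / 2 * (ρ n ω * Z n ω ^ p) + ρ n ω * (H n ω * (1 + (4 * H n ω + 1) ^ (p - 1)))) / v :=
        div_le_div_of_nonneg_right (by linarith) hvp.le
      have e7 : (Z n ω ^ p - 1 / 2 * (ρ n ω * Z n ω ^ p) + ρ n ω * (H n ω * (1 + (4 * H n ω + 1) ^ (p - 1)))) / v
        = Z n ω ^ p / v - 1 / 2 * (ρ n ω * Z n ω ^ p / v) + H n ω * (1 + (4 * H n ω + 1) ^ (p - 1)) * (ρ n ω / v) := by
        ring
      linarith)
    (by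
      filter_upwards [hsum, hn.cb] with ω hs ⟨C, hC⟩
      have hC0 : 0 ≤ C := (hn.c0 0 ω).trans (hC 0)
      set HC := R * (1 + s2 + C)
      refine Summable.of_nonneg_of_le (fun n => ?_) (fun n => ?_) (hs.mul_left (HC * (1 + (4 * HC + 1) ^ (p - 1))))
      · have := hH0 n ω; have := hP.ρ0 n ω; have := hv0 n ω
        positivity
      · have h1 := hH0 n ω; have h2 := hP.ρ0 n ω; have h3 := hv0 n ω
        have h4 : H n ω ≤ HC := mul_le_mul_of_nonneg_left (by linarith [hC n]) hR0
        gcongr)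
  filter_upwards [key] with ω ⟨h1, h2⟩
  refine ⟨h1, ?_⟩
  have := h2.mul_left 2
  refine this.congr fun n => ?_
  ring

theorem pot_exp {F : Filtration ℕ m0} {ε : ℕ → Ω → ℝ} {a s2 : ℝ} {P : ℕ} {e : ℕ → ℕ → Ω → ℝ}
    {c : ℕ → Ω → ℝ} (hn : Noise μ F ε a s2 P e c) {G : ℝ} {Z ρ b g : ℕ → Ω → ℝ}
    (hP : Pot F ε G Z ρ b g) {p : ℕ} (hp : 1 ≤ p) (hpP : p ≤ P)
    {τ : ℕ → Ω → ℝ} (hτ : ∀ n, Measurable[F n] (τ n))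
    (hτ1 : ∀ n ω, 1 ≤ τ n ω) (hτm : ∀ n ω, τ n ω ≤ τ (n+1) ω)
    (hτt : ∀ᵐ ω ∂μ, Tendsto (fun n => τ n ω) atTop atTop)
    {θ : ℝ} (hθ0 : 0 ≤ θ) (hθ1 : θ < 1)
    (hZθ : ∀ᵐ ω ∂μ, ∃ K : ℝ, ∀ n, Z n ω ^ (p - 1) ≤ K * τ n ω ^ θ)
    (hsum : ∀ δ : ℝ, 0 < δ → ∀ᵐ ω ∂μ, Summable fun n => g n ω * (1 + Z n ω ^ p) / τ n ω ^ (1 + δ))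
    (hg0 : ∀ᵐ ω ∂μ, Tendsto (fun n => g n ω) atTop (𝓝 0))
    (hgt : ∀ᵐ ω ∂μ, Tendsto (fun n => ∑ k ∈ range n, g k ω) atTop atTop) :
    ∀ᵐ ω ∂μ, (fun n => Z n ω ^ p + p * ∑ k ∈ range n, ρ k ω * Z k ω ^ p
        - p * s2 * ∑ k ∈ range n, g k ω * Z k ω ^ (p - 1)
        - 2 * p * (p - 1) * s2 * ∑ k ∈ range n, b k ω ^ 2 * Z k ω ^ (p - 2)) =o[atTop]
      (fun n => τ n ω + ∑ k ∈ range n, g k ω * (1 + Z k ω ^ p)) := by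
  have hτ0 : ∀ n ω, 0 < τ n ω := fun n ω => by linarith [hτ1 n ω]
  have hG := hP.hG
  have hs20 := hn.s20
  have hp0 : (0:ℝ) < p := by exact_mod_cast hp
  have hpP' : (p:ℝ) ≤ P := by exact_mod_cast hpP
  -- general summability
  have hgen : ∀ (s : ℝ), 1 < s → s ≤ 2 → ∀ m : ℕ, m ≤ 2 * p → (m:ℝ) * s ≤ a →
      (∃ K : ℝ, ∀ n ω, |cf ((1 - ρ n ω) * Z n ω) (b n ω) (g n ω) p m| ^ s ≤
        K * (g n ω * (1 + Z n ω ^ p) * (1 + Z n ω ^ (p - 1)) ^ (s - 1))) →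
      ∀ᵐ ω ∂μ, (fun n => ∑ k ∈ range n, cf ((1 - ρ k ω) * Z k ω) (b k ω) (g k ω) p m *
        (ε (k+1) ω ^ m - e m k ω)) =o[atTop] (fun n => τ n ω) := by
    intro s hs1 hs2 m hm hms ⟨K, hK⟩
    have hd : 0 < (s - 1) * (1 - θ) / 2 := by
      have := mul_pos (sub_pos.2 hs1) (sub_pos.2 hθ1); linarith
    refine slln_X hn hs1.le hs2 (q := s - (s - 1) * (1 - θ) / 2) (by linarith) (by nlinarith) (by omega) hms _ τ
      (fun n => hP.cfm p n m) hτ hτ1 hτm hτt ?_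
    filter_upwards [hsum _ hd, hZθ] with ω hs ⟨K', hK'⟩
    refine Summable.of_nonneg_of_le (fun n => div_nonneg (by positivity) (Real.rpow_nonneg (hτ0 n ω).le _))
      (fun n => ?_) (hs.mul_left (|K| * (1 + |K'|) ^ (s - 1)))
    have hZ := hP.Z0 n ω
    have ht := hτ0 n ω
    have hgn := hP.g0 n ω
    have hτθ : 1 ≤ τ n ω ^ θ := Real.one_le_rpow (hτ1 n ω) hθ0
    have c1 : 1 + Z n ω ^ (p - 1) ≤ (1 + |K'|) * τ n ω ^ θ := by
      have := hK' n
      have : K' * τ n ω ^ θ ≤ |K'| * τ n ω ^ θ := mul_le_mul_of_nonneg_right (le_abs_self _) (by linarith)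
      linarith
    have c2 : (1 + Z n ω ^ (p - 1)) ^ (s - 1) ≤ (1 + |K'|) ^ (s - 1) * τ n ω ^ (θ * (s - 1)) := by
      rw [Real.rpow_mul ht.le, ← Real.mul_rpow (by positivity) (by positivity)]
      exact Real.rpow_le_rpow (by positivity) c1 (by linarith)
    have c3 : |cf ((1 - ρ n ω) * Z n ω) (b n ω) (g n ω) p m| ^ s ≤
        |K| * (g n ω * (1 + Z n ω ^ p) * ((1 + |K'|) ^ (s - 1) * τ n ω ^ (θ * (s - 1)))) := by
      refine (hK n ω).trans ?_
      have hpos : 0 ≤ g n ω * (1 + Z n ω ^ p) * (1 + Z n ω ^ (p - 1)) ^ (s - 1) := by positivity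
      refine (mul_le_mul_of_nonneg_right (le_abs_self K) hpos).trans ?_
      gcongr
    have e4 : τ n ω ^ (s - (s - 1) * (1 - θ) / 2) = τ n ω ^ (θ * (s - 1)) * τ n ω ^ (1 + (s - 1) * (1 - θ) / 2) := by
      rw [← Real.rpow_add ht]; congr 1; ring
    rw [e4]
    refine (div_le_div_of_nonneg_right c3 (by positivity)).trans (le_of_eq ?_)
    have : τ n ω ^ (θ * (s - 1)) ≠ 0 := (Real.rpow_pos_of_pos ht _).ne'
    field_simp
  have hmart : ∀ m ∈ range (2 * p + 1), ∀ᵐ ω ∂μ, (fun n => ∑ k ∈ range n, cf ((1 - ρ k ω) * Z k ω) (b k ω) (g k ω) p m *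
        (ε (k+1) ω ^ m - e m k ω)) =o[atTop] (fun n => τ n ω) := by
    intro m hm
    have hm' : m ≤ 2 * p := by simp at hm; omega
    rcases Nat.lt_or_ge m 2 with h2 | h2
    · rcases Nat.lt_or_ge m 1 with h1 | h1
      · have : m = 0 := by omega
        subst this
        refine ae_of_all _ fun ω => ?_
        simp only [pow_zero, hn.e0, sub_self, mul_zero, sum_const_zero]
        exact Asymptotics.isLittleO_zero _ _
      · have : m = 1 := by omega
        subst this
        refine hgen 2 (by norm_num) le_rfl 1 hm' ?_ ⟨4 * p ^ 2, fun n ω => ?_⟩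
        · have := hn.haP
          have : (1:ℝ) ≤ p := by exact_mod_cast hp
          push_cast; linarith
        · have hZ := hP.Z0 n ω
          have hA0 := hP.A0 n ω
          have hAZ := hP.AZ n ω
          have hgn := hP.g0 n ω
          set A := (1 - ρ n ω) * Z n ω with hA
          rw [cf_one, show (2:ℝ) - 1 = 1 by norm_num, Real.rpow_one, Real.rpow_two, sq_abs]
          have hbb := hP.hb n ω
          rw [← hA] at hbb
          have e1 : (p * A ^ (p - 1) * (2 * b n ω)) ^ 2 = 4 * p ^ 2 * ((A ^ (p - 1)) ^ 2 * b n ω ^ 2) := by ring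
          rw [e1]
          refine mul_le_mul_of_nonneg_left ?_ (by positivity)
          have hAp : A ^ (p - 1) ≤ Z n ω ^ (p - 1) := pow_le_pow_left₀ hA0 hAZ _
          calc (A ^ (p - 1)) ^ 2 * b n ω ^ 2 ≤ (A ^ (p - 1)) ^ 2 * (g n ω * A) :=
                mul_le_mul_of_nonneg_left hbb (by positivity)
            _ = g n ω * A ^ p * A ^ (p - 1) := by
                have : A ^ p = A ^ (p - 1) * A := by rw [← pow_succ]; congr 1; omega
                rw [this]; ring
            _ ≤ g n ω * (1 + Z n ω ^ p) * (1 + Z n ω ^ (p - 1)) := by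
                have : A ^ p ≤ Z n ω ^ p := pow_le_pow_left₀ hA0 hAZ _
                gcongr <;> linarith
    · set s := min 2 (a / (2 * p)) with hs
      have hs1 : 1 < s := by
        refine lt_min (by norm_num) ?_
        rw [lt_div_iff₀ (by positivity)]
        have := hn.haP; linarith
      have hs2 : s ≤ 2 := min_le_left _ _
      refine hgen s hs1 hs2 m hm' ?_ ⟨(4 ^ p * G ^ (2 * p)) ^ s * (G ^ (s - 1) * 2), fun n ω => ?_⟩
      · have h3 : s ≤ a / (2 * p) := min_le_right _ _
        have h4 : (m:ℝ) ≤ 2 * p := by exact_mod_cast hm'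
        rw [le_div_iff₀ (by positivity)] at h3
        nlinarith
      · have hZ := hP.Z0 n ω
        have hgn := hP.g0 n ω
        have hB := (cf_bound' (hP.A0 n ω) (hP.AZ n ω) hgn hG (hP.gG n ω) (hP.hb n ω) p).1 m h2 hm'
        refine (Real.rpow_le_rpow (abs_nonneg _) hB (by linarith)).trans ?_
        set y := 1 + Z n ω ^ (p - 1) with hy
        have hy0 : 0 < y := by positivity
        rw [Real.mul_rpow (by positivity) (by positivity), mul_assoc]
        refine mul_le_mul_of_nonneg_left ?_ (by positivity)
        rw [Real.mul_rpow hgn hy0.le]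
        have f1 : g n ω ^ s ≤ G ^ (s - 1) * g n ω := by
          have : g n ω ^ s = g n ω ^ (s - 1) * g n ω := by
            have := Real.rpow_add_one' (x := g n ω) (y := s - 1) hgn (by linarith)
            rw [← this]; congr 1; ring
          rw [this]
          exact mul_le_mul_of_nonneg_right (Real.rpow_le_rpow hgn (hP.gG n ω) (by linarith)) hgn
        have f2 : y ^ s = y ^ (s - 1) * y := by
          rw [← Real.rpow_add_one hy0.ne']; congr 1; ring
        have f3 : y ≤ 2 * (1 + Z n ω ^ p) := by
          have hZp : 0 ≤ Z n ω ^ p := by positivity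
          rcases le_total (Z n ω) 1 with h | h
          · have : Z n ω ^ (p - 1) ≤ 1 := pow_le_one₀ hZ h
            rw [hy]; linarith
          · have : Z n ω ^ (p - 1) ≤ Z n ω ^ p := pow_le_pow_right₀ h (by omega)
            rw [hy]; linarith
        have hGs : 0 ≤ G ^ (s - 1) := by positivity
        have hys : 0 ≤ y ^ (s - 1) := by positivity
        rw [f2]
        calc g n ω ^ s * (y ^ (s - 1) * y) ≤ (G ^ (s - 1) * g n ω) * (y ^ (s - 1) * (2 * (1 + Z n ω ^ p))) := by
              gcongr
          _ = _ := by ring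
  have hmart' : ∀ᵐ ω ∂μ, ∀ m ∈ range (2 * p + 1), (fun n => ∑ k ∈ range n, cf ((1 - ρ k ω) * Z k ω) (b k ω) (g k ω) p m *
        (ε (k+1) ω ^ m - e m k ω)) =o[atTop] (fun n => τ n ω) := by
    rw [ae_all_iff]; intro m
    by_cases hm : m ∈ range (2 * p + 1)
    · filter_upwards [hmart m hm] with ω h _ using h
    · exact ae_of_all _ fun ω h => absurd h hm
  have heb : ∀ᵐ ω ∂μ, ∀ m n, m ≤ 2 * P → |e m n ω| ≤ 1 + s2 + c n ω := by
    rw [ae_all_iff]; intro m; rw [ae_all_iff]; intro n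
    by_cases hm : m ≤ 2 * P
    · filter_upwards [hn.eb m hm n] with ω h _ using h
    · exact ae_of_all _ fun ω h => absurd h hm
  obtain ⟨K, hK0, hK⟩ := cf_err hp hG
  filter_upwards [hmart', heb, hn.cb, hg0, hgt, hτt] with ω hM hE ⟨C, hC⟩ hg hgt ht
  set T := fun n => τ n ω + ∑ k ∈ range n, g k ω * (1 + Z k ω ^ p) with hT
  have hq0 : ∀ k, 0 ≤ g k ω * (1 + Z k ω ^ p) := fun k =>
    mul_nonneg (hP.g0 k ω) (by have := pow_nonneg (hP.Z0 k ω) p; linarith)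
  have hS0 : ∀ n, 0 ≤ ∑ k ∈ range n, g k ω * (1 + Z k ω ^ p) := fun n => sum_nonneg fun k _ => hq0 k
  have hτT : (fun n => τ n ω) =O[atTop] T := by
    refine Asymptotics.IsBigO.of_bound 1 (Eventually.of_forall fun n => ?_)
    rw [Real.norm_of_nonneg (hτ0 n ω).le, Real.norm_of_nonneg (by have := hS0 n; have := hτ0 n ω; simp only [hT]; linarith)]
    have := hS0 n; simp only [hT]; linarith
  have hST : (fun n => ∑ k ∈ range n, g k ω * (1 + Z k ω ^ p)) =O[atTop] T := by
    refine Asymptotics.IsBigO.of_bound 1 (Eventually.of_forall fun n => ?_)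
    rw [Real.norm_of_nonneg (hS0 n), Real.norm_of_nonneg (by have := hS0 n; have := hτ0 n ω; simp only [hT]; linarith)]
    have := hτ0 n ω; simp only [hT]; linarith
  set err := fun k => ∑ m ∈ range (2 * p + 1), cf ((1 - ρ k ω) * Z k ω) (b k ω) (g k ω) p m * e m k ω -
      (Z k ω ^ p - p * (ρ k ω * Z k ω ^ p) + p * s2 * (g k ω * Z k ω ^ (p - 1)) +
        2 * p * (p - 1) * s2 * (b k ω ^ 2 * Z k ω ^ (p - 2))) with herr
  have hC0 : 0 ≤ C := (hn.c0 0 ω).trans (hC 0)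
  have herrb : ∀ k, |err k| ≤ (K * (1 + s2 + (1 + s2 + C)) * √(g k ω)) * (g k ω * (1 + Z k ω ^ p)) := by
    intro k
    have := hK (Z k ω) (ρ k ω) (b k ω) (g k ω) s2 (1 + s2 + C) (fun m => e m k ω) (hP.Z0 k ω) (hP.ρ0 k ω)
      (hP.ρ1 k ω) (hP.ρg k ω) (hP.gG k ω) (hP.hb k ω) hs20 (by linarith) (hn.e0 k ω) (hn.e1 k ω) (hn.e2 k ω)
      (fun m hm => (hE m k (by omega)).trans (by linarith [hC k]))
    refine this.trans (le_of_eq (by ring))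
  have herro : err =o[atTop] (fun k => g k ω * (1 + Z k ω ^ p)) := by
    have h1 : Tendsto (fun k => K * (1 + s2 + (1 + s2 + C)) * √(g k ω)) atTop (𝓝 0) := by
      have := (Real.continuous_sqrt.tendsto 0).comp hg
      rw [Real.sqrt_zero] at this
      simpa using this.const_mul (K * (1 + s2 + (1 + s2 + C)))
    have h2 : err =O[atTop] (fun k => (K * (1 + s2 + (1 + s2 + C)) * √(g k ω)) * (g k ω * (1 + Z k ω ^ p))) := by
      refine Asymptotics.IsBigO.of_bound 1 (Eventually.of_forall fun k => ?_)
      rw [one_mul]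
      exact (herrb k).trans (le_abs_self _)
    refine h2.trans_isLittleO ?_
    have h3 := ((Asymptotics.isLittleO_one_iff ℝ).2 h1).mul_isBigO (Asymptotics.isBigO_refl (fun k => g k ω * (1 + Z k ω ^ p)) atTop)
    simpa using h3
  have hSerr : (fun n => ∑ k ∈ range n, err k) =o[atTop] T := by
    refine (herro.sum_range hq0 ?_).trans_isBigO hST
    refine tendsto_atTop_mono (fun n => sum_le_sum fun k _ => ?_) hgt
    have := mul_nonneg (hP.g0 k ω) (pow_nonneg (hP.Z0 k ω) p)
    linarith
  have hSM : (fun n => ∑ m ∈ range (2 * p + 1), ∑ k ∈ range n, cf ((1 - ρ k ω) * Z k ω) (b k ω) (g k ω) p m *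
        (ε (k+1) ω ^ m - e m k ω)) =o[atTop] T :=
    Asymptotics.IsLittleO.fun_sum fun m hm => (hM m hm).trans_isBigO hτT
  have hconst : (fun _ : ℕ => Z 0 ω ^ p) =o[atTop] T := by
    refine Asymptotics.IsLittleO.trans_isBigO ?_ hτT
    rw [Asymptotics.isLittleO_const_left]
    right
    exact tendsto_norm_atTop_atTop.comp ht
  refine ((hconst.add hSerr).add hSM).congr_left fun n => ?_
  rw [sum_comm]
  induction n with
  | zero => simp
  | succ n ih =>
    have h1 := hP.pow_eq e p n ω
    simp only [sum_range_succ _ n] at ih ⊢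
    simp only [herr] at ih ⊢
    linarith
end

theorem rpow_diff_bound {x y δ : ℝ} (hx : 0 < x) (hxy : x ≤ y) (hδ : 0 < δ) :
    δ * ((y - x) / y ^ (1 + δ)) ≤ x ^ (-δ) - y ^ (-δ) := by
  have hy : 0 < y := lt_of_lt_of_le hx hxy
  have hu : 0 < x / y := div_pos hx hy
  have h1 : 1 + δ * (1 - x / y) ≤ (x / y) ^ (-δ) := by
    rw [Real.rpow_def_of_pos hu]
    have h2 := Real.add_one_le_exp (Real.log (x / y) * -δ)
    have h3 := Real.log_le_sub_one_of_pos hu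
    nlinarith
  have h4 : x ^ (-δ) = (x / y) ^ (-δ) * y ^ (-δ) := by
    rw [← Real.mul_rpow hu.le hy.le, div_mul_cancel₀ _ hy.ne']
  have h5 : (y - x) / y ^ (1 + δ) = (1 - x / y) * y ^ (-δ) := by
    rw [Real.rpow_add hy, Real.rpow_one, Real.rpow_neg hy.le]
    field_simp
  have h6 : 0 < y ^ (-δ) := Real.rpow_pos_of_pos hy _
  rw [h4, h5]
  nlinarith

theorem summ_gamma {γ : ℕ → ℝ} (h0 : ∀ n, 0 ≤ γ n) {δ : ℝ} (hδ : 0 < δ) :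
    Summable fun n => γ n / (1 + ∑ k ∈ range (n + 1), γ k) ^ (1 + δ) := by
  have hT : ∀ n, 0 < 1 + ∑ k ∈ range n, γ k := fun n => by
    have := Finset.sum_nonneg (s := range n) (fun k _ => h0 k)
    linarith
  have hle : ∀ n, ∑ i ∈ range n, γ i / (1 + ∑ k ∈ range (i + 1), γ k) ^ (1 + δ) ≤
      (1 - (1 + ∑ k ∈ range n, γ k) ^ (-δ)) / δ := by
    intro n
    induction n with
    | zero => simp
    | succ n ih =>
      rw [Finset.sum_range_succ]
      have h := rpow_diff_bound (hT n) (y := 1 + ∑ k ∈ range (n+1), γ k)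
        (by rw [Finset.sum_range_succ]; linarith [h0 n]) hδ
      have h2 : 1 + ∑ k ∈ range (n+1), γ k - (1 + ∑ k ∈ range n, γ k) = γ n := by
        rw [Finset.sum_range_succ]; ring
      rw [h2] at h
      rw [le_div_iff₀ hδ] at ih ⊢
      nlinarith
  refine summable_of_sum_range_le (c := 1 / δ) (fun n => ?_) (fun n => (hle n).trans ?_)
  · exact div_nonneg (h0 n) (Real.rpow_nonneg (hT _).le _)
  · have := Real.rpow_pos_of_pos (hT n) (-δ)
    gcongr
    linarith

theorem rec_lemma {γ w : ℕ → ℝ} {j l : ℝ} (hj : 1 ≤ j) (h0 : ∀ n, 0 ≤ γ n)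
    (hγ : Tendsto γ atTop (𝓝 0)) (ht : Tendsto (fun n => ∑ k ∈ range n, γ k) atTop atTop)
    (h : (fun n => w n + j * ∑ k ∈ range n, γ k * w k - j * l * ∑ k ∈ range n, γ k)
      =o[atTop] (fun n => ∑ k ∈ range n, γ k)) :
    (fun n => ∑ k ∈ range n, γ k * w k - l * ∑ k ∈ range n, γ k)
      =o[atTop] (fun n => ∑ k ∈ range n, γ k) := by
  set t : ℕ → ℝ := fun n => ∑ k ∈ range n, γ k with ht'
  set B : ℕ → ℝ := fun n => ∑ k ∈ range n, γ k * w k with hB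
  have t0 : ∀ n, 0 ≤ t n := fun n => Finset.sum_nonneg fun k _ => h0 k
  have hl : (fun _ : ℕ => l) =o[atTop] t :=
    (Asymptotics.isLittleO_const_left).2 (Or.inr (tendsto_norm_atTop_atTop.comp ht))
  have hs := h.sub hl
  rw [Asymptotics.isLittleO_iff]
  intro η hη
  have e1 := (Asymptotics.isLittleO_iff.1 hs) (half_pos hη)
  have e2 : ∀ᶠ n in atTop, j * γ n ≤ 1 := by
    have : Tendsto (fun n => j * γ n) atTop (𝓝 (j * 0)) := hγ.const_mul j
    rw [mul_zero] at this
    exact this.eventually_le_const one_pos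
  obtain ⟨N, hN⟩ := eventually_atTop.1 (e1.and e2)
  set K := max (|B N - l * t N| - η / 2 * t N) 0
  have key : ∀ n, N ≤ n → |B n - l * t n| - η / 2 * t n ≤ K := by
    intro n hn
    induction n, hn using Nat.le_induction with
    | base => exact le_max_left _ _
    | succ n hn ih =>
      obtain ⟨a1, a2⟩ := hN n hn
      have b1 : B (n+1) = B n + γ n * w n := by simp only [hB]; rw [Finset.sum_range_succ]
      have b2 : t (n+1) = t n + γ n := by simp only [ht']; rw [Finset.sum_range_succ]
      simp only [Real.norm_eq_abs] at a1
      rw [abs_of_nonneg (t0 n)] at a1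
      have c1 : B (n+1) - l * t (n+1) = (1 - j * γ n) * (B n - l * t n) +
          γ n * (w n + j * B n - j * l * t n - l) := by rw [b1, b2]; ring
      have c2 : |B (n+1) - l * t (n+1)| ≤ (1 - j * γ n) * |B n - l * t n| + γ n * (η / 2 * t n) := by
        rw [c1]
        refine (abs_add_le _ _).trans ?_
        rw [abs_mul, abs_mul, abs_of_nonneg (by linarith : 0 ≤ 1 - j * γ n), abs_of_nonneg (h0 n)]
        gcongr
        exact h0 n
      rw [b2] at c2 ⊢
      have K0 : 0 ≤ K := le_max_right _ _
      have d1 : (1 - j * γ n) * |B n - l * t n| ≤ (1 - j * γ n) * (K + η / 2 * t n) :=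
        mul_le_mul_of_nonneg_left (by linarith) (by linarith)
      have d2 : 0 ≤ (j - 1) * γ n * (η / 2 * t n) :=
        mul_nonneg (mul_nonneg (by linarith) (h0 n)) (mul_nonneg (by linarith) (t0 n))
      have d3 : 0 ≤ j * γ n * K := mul_nonneg (mul_nonneg (by linarith) (h0 n)) K0
      have d4 : 0 ≤ η / 2 * γ n := mul_nonneg (by linarith) (h0 n)
      have d5 : |B (n + 1) - l * (t n + γ n)| = |B (n+1) - l * (t n + γ n)| := rfl
      nlinarith
  filter_upwards [eventually_ge_atTop N, ht.eventually_ge_atTop (2 * K / η)] with n hn hn2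
  have := key n hn
  rw [Real.norm_eq_abs, Real.norm_eq_abs, abs_of_nonneg (t0 n)]
  rw [div_le_iff₀ hη] at hn2
  simp only [hB, ht'] at *
  linarith

def bet (D s2 : ℝ) : ℕ → ℝ
  | 0 => 1
  | (j+1) => s2 * (D + 2 * j) * bet D s2 j

/-- comparison of weighted sums. -/
theorem cmp_sum {γ y x z : ℕ → ℝ} (h0 : ∀ n, 0 ≤ γ n) (hy : ∀ n, 0 ≤ y n)
    (ht : Tendsto (fun n => ∑ k ∈ range n, γ k) atTop atTop)
    (hO : (fun n => ∑ k ∈ range n, γ k * y k) =O[atTop] (fun n => ∑ k ∈ range n, γ k))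
    (hx : ∀ n, x n = z n * (γ n * y n)) (hz : Tendsto z atTop (𝓝 0)) :
    (fun n => ∑ k ∈ range n, x k) =o[atTop] (fun n => ∑ k ∈ range n, γ k) := by
  have h1 : x =o[atTop] (fun n => γ n * (1 + y n)) := by
    have h2 : z =o[atTop] (fun _ => (1:ℝ)) := (Asymptotics.isLittleO_one_iff ℝ).2 hz
    have h3 : (fun n => γ n * y n) =O[atTop] (fun n => γ n * (1 + y n)) := by
      refine Asymptotics.IsBigO.of_bound 1 (Eventually.of_forall fun n => ?_)
      have := h0 n; have := hy n
      rw [Real.norm_eq_abs, Real.norm_eq_abs, abs_of_nonneg (by positivity),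
        abs_of_nonneg (by positivity)]
      nlinarith
    have h4 := h2.mul_isBigO h3
    refine h4.congr (fun n => (hx n).symm) (fun n => by ring)
  have h5 := h1.sum_range (fun n => mul_nonneg (h0 n) (by have := hy n; positivity))
    (tendsto_atTop_mono (fun n => Finset.sum_le_sum fun k _ => by
      have := mul_nonneg (h0 k) (hy k); nlinarith) ht)
  refine h5.trans_isBigO ?_
  have h6 := (Asymptotics.isBigO_refl (fun n => ∑ k ∈ range n, γ k) atTop).add hO
  refine h6.congr_left fun n => ?_
  rw [← Finset.sum_add_distrib]
  exact Finset.sum_congr rfl fun k _ => by ring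

theorem scale_O {γ τ : ℕ → ℝ} (hγ : Tendsto γ atTop (𝓝 0))
    (ht : Tendsto (fun n => ∑ k ∈ range n, γ k) atTop atTop)
    (hτ : ∀ n, τ n = 1 + ∑ k ∈ range (n + 1), γ k) :
    τ =O[atTop] (fun n => ∑ k ∈ range n, γ k) := by
  have h1 : (fun n => 1 + γ n) =O[atTop] (fun _ => (1:ℝ)) :=
    (hγ.const_add 1).isBigO_one ℝ
  have h2 : (fun _ : ℕ => (1:ℝ)) =o[atTop] (fun n => ∑ k ∈ range n, γ k) :=
    (Asymptotics.isLittleO_const_left).2 (Or.inr (tendsto_norm_atTop_atTop.comp ht))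
  have h3 := (h1.trans h2.isBigO).add (Asymptotics.isBigO_refl (fun n => ∑ k ∈ range n, γ k) atTop)
  refine h3.congr_left fun n => ?_
  rw [hτ, Finset.sum_range_succ]; ring

theorem littleo_absorb {t x X A B : ℕ → ℝ} {j : ℝ} (hj : 1 ≤ j) (t0 : ∀ n, 0 ≤ t n)
    (x0 : ∀ n, 0 ≤ x n) (A0 : ∀ n, 0 ≤ A n) (hX : X =O[atTop] t)
    (h : (fun n => x n + j * A n - X n) =o[atTop] B) (hB : B =O[atTop] (fun n => t n + A n)) :
    A =O[atTop] t := by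
  have h' := h.trans_isBigO hB
  obtain ⟨C, hC⟩ := hX.bound
  have h1 := (Asymptotics.isLittleO_iff.1 h') (by norm_num : (0:ℝ) < 1/2)
  refine Asymptotics.IsBigO.of_bound (2 * C + 1) ?_
  filter_upwards [hC, h1] with n hn1 hn2
  have := t0 n; have := A0 n; have := x0 n
  rw [Real.norm_eq_abs, Real.norm_eq_abs, abs_of_nonneg (t0 n)] at hn1
  rw [Real.norm_eq_abs, Real.norm_eq_abs, abs_of_nonneg (add_nonneg (t0 n) (A0 n))] at hn2
  rw [Real.norm_eq_abs, Real.norm_eq_abs, abs_of_nonneg (t0 n), abs_of_nonneg (A0 n)]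
  have := le_abs_self (X n)
  have := le_abs_self (x n + j * A n - X n)
  nlinarith

theorem tendsto_coef {u q h h' : ℕ → ℝ} (hu : Tendsto u atTop (𝓝 1)) (hq : Tendsto q atTop (𝓝 1))
    (hb : ∀ n, |h n| ≤ 1) (hh : Tendsto (fun n => h' n - h n) atTop (𝓝 0)) (j : ℕ) :
    Tendsto (fun n => q n * h' n * u n ^ j - h n) atTop (𝓝 0) := by
  have h1 : Tendsto (fun n => q n * u n ^ j) atTop (𝓝 1) := by
    simpa using hq.mul (hu.pow j)
  have h2 : Tendsto (fun n => q n * u n ^ j * (h' n - h n)) atTop (𝓝 0) := by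
    simpa using h1.mul hh
  have h3 : Tendsto (fun n => (q n * u n ^ j - 1) * h n) atTop (𝓝 0) := by
    have h4 : Tendsto (fun n => (q n * u n ^ j - 1)) atTop (𝓝 0) := by simpa using h1.sub_const 1
    refine squeeze_zero_norm (fun n => ?_) (h4.norm.trans (by simp))
    rw [norm_mul]
    exact mul_le_of_le_one_right (norm_nonneg _) (hb n)
  have := h2.add h3
  rw [add_zero] at this
  refine this.congr fun n => by ring

theorem det_main {D s2 : ℝ} {p : ℕ} {γ W b V ρ c f h h' φ u ψ τ : ℕ → ℝ}
    (h0 : ∀ n, 0 ≤ γ n) (hγ : Tendsto γ atTop (𝓝 0))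
    (ht : Tendsto (fun n => ∑ k ∈ range n, γ k) atTop atTop)
    (hτ : ∀ n, τ n = 1 + ∑ k ∈ range (n + 1), γ k)
    (W0 : ∀ n, 0 ≤ W n) (hf : ∀ n, f n = φ n * (D * γ n)) (hφ : Tendsto φ atTop (𝓝 1))
    (hV : ∀ n, V n = u n * W n) (hu : Tendsto u atTop (𝓝 1))
    (hb : ∀ n, b n ^ 2 = h n * (D * γ n * W n)) (hh : ∀ n, |h n| ≤ 1)
    (hc : ∀ n, c n ^ 2 = h' n * (D * γ n * W n)) (hh' : Tendsto (fun n => h' n - h n) atTop (𝓝 0))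
    (hρ : ∀ n, ρ n * V n = ψ n * c n ^ 2) (hψ : Tendsto ψ atTop (𝓝 1))
    (EW : ∀ j, 1 ≤ j → j ≤ p → (fun n => W n ^ j + j * ∑ k ∈ range n, γ k * W k ^ j
        - j * s2 * ∑ k ∈ range n, (D * γ k) * W k ^ (j - 1)
        - 2 * j * (j - 1) * s2 * ∑ k ∈ range n, b k ^ 2 * W k ^ (j - 2)) =o[atTop]
      (fun n => τ n + ∑ k ∈ range n, (D * γ k) * (1 + W k ^ j)))
    (EV : ∀ j, 1 ≤ j → j ≤ p → (fun n => V n ^ j + j * ∑ k ∈ range n, ρ k * V k ^ j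
        - j * s2 * ∑ k ∈ range n, f k * V k ^ (j - 1)
        - 2 * j * (j - 1) * s2 * ∑ k ∈ range n, c k ^ 2 * V k ^ (j - 2)) =o[atTop]
      (fun n => τ n + ∑ k ∈ range n, f k * (1 + V k ^ j))) :
    (fun n => ∑ k ∈ range n, f k * V k ^ p - D * bet D s2 p * ∑ k ∈ range n, γ k) =o[atTop]
      (fun n => ∑ k ∈ range n, γ k) := by
  set t : ℕ → ℝ := fun n => ∑ k ∈ range n, γ k with ht'
  have t0 : ∀ n, 0 ≤ t n := fun n => Finset.sum_nonneg fun k _ => h0 k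
  have hτO : τ =O[atTop] t := scale_O hγ ht hτ
  -- from A_j ~ l t get O
  have toO : ∀ {A : ℕ → ℝ} {l : ℝ}, (fun n => A n - l * t n) =o[atTop] t → A =O[atTop] t := by
    intro A l hA
    have h1 := hA.isBigO.add ((Asymptotics.isBigO_refl t atTop).const_mul_left l)
    refine h1.congr_left fun n => by ring
  -- comparison of sums f V^j
  have cmpf : ∀ j : ℕ, (fun n => ∑ k ∈ range n, γ k * W k ^ j) =O[atTop] t →
      (fun n => ∑ k ∈ range n, f k * V k ^ j - D * ∑ k ∈ range n, γ k * W k ^ j) =o[atTop] t := by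
    intro j hO
    have := cmp_sum (x := fun k => f k * V k ^ j - D * (γ k * W k ^ j))
      (z := fun k => D * (φ k * 1 * u k ^ j - 1)) h0 (fun n => pow_nonneg (W0 n) j) ht hO
      (fun n => by rw [hf, hV, mul_pow]; ring)
      (by simpa using (tendsto_coef (h := fun _ => 1) (h' := fun _ => 1) hu hφ (by simp)
            (by simp) j).const_mul D)
    refine this.congr_left fun n => ?_
    rw [Finset.sum_sub_distrib, Finset.mul_sum]
  have main : ∀ j, j ≤ p →
      ((fun n => ∑ k ∈ range n, γ k * W k ^ j - bet D s2 j * t n) =o[atTop] t) ∧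
      (1 ≤ j → (fun n => ∑ k ∈ range n, b k ^ 2 * W k ^ (j - 1) - bet D s2 j * t n) =o[atTop] t) := by
    intro j
    induction j with
    | zero =>
      intro _
      refine ⟨?_, fun h => absurd h (by norm_num)⟩
      refine (Asymptotics.isLittleO_zero t atTop).congr_left fun n => ?_
      simp [bet, ht']
    | succ j ih =>
      intro hjp
      obtain ⟨iA, iH⟩ := ih (by omega)
      have hEW := EW (j+1) (by omega) hjp
      have hEV := EV (j+1) (by omega) hjp
      simp only [Nat.add_sub_cancel] at hEW hEV ⊢
      have e2 : j + 1 - 2 = j - 1 := by omega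
      rw [e2] at hEW hEV
      have hj1 : (1:ℝ) ≤ ((j+1 : ℕ) : ℝ) := by exact_mod_cast Nat.succ_pos j
      have hbe : bet D s2 (j+1) = s2 * (D + 2 * j) * bet D s2 j := rfl
      -- the H_{j} term
      have iH' : (fun n => (j:ℝ) * ∑ k ∈ range n, b k ^ 2 * W k ^ (j - 1)
          - j * bet D s2 j * t n) =o[atTop] t := by
        rcases Nat.eq_zero_or_pos j with h | h
        · subst h
          refine (Asymptotics.isLittleO_zero t atTop).congr_left fun n => ?_
          simp
        · refine ((iH h).const_mul_left (j:ℝ)).congr_left fun n => by ring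
      have iAO := toO iA
      have iHO : (fun n => (j:ℝ) * ∑ k ∈ range n, b k ^ 2 * W k ^ (j - 1)) =O[atTop] t := toO iH'
      -- A_{j+1} = O(t)
      have hBO : (fun n => τ n + ∑ k ∈ range n, (D * γ k) * (1 + W k ^ (j+1))) =O[atTop]
          (fun n => t n + ∑ k ∈ range n, γ k * W k ^ (j+1)) := by
        have A0 : ∀ n, 0 ≤ ∑ k ∈ range n, γ k * W k ^ (j+1) := fun n =>
          Finset.sum_nonneg fun k _ => mul_nonneg (h0 k) (pow_nonneg (W0 k) _)
        have h1 : t =O[atTop] (fun n => t n + ∑ k ∈ range n, γ k * W k ^ (j+1)) := by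
          refine Asymptotics.IsBigO.of_bound 1 (Eventually.of_forall fun n => ?_)
          rw [Real.norm_eq_abs, Real.norm_eq_abs, abs_of_nonneg (t0 n),
            abs_of_nonneg (add_nonneg (t0 n) (A0 n))]
          linarith [A0 n]
        refine ((hτO.trans h1).add ((Asymptotics.isBigO_refl (fun n => t n +
          ∑ k ∈ range n, γ k * W k ^ (j+1)) atTop).const_mul_left D)).congr_left fun n => ?_
        simp only [ht']
        rw [← Finset.sum_add_distrib, Finset.mul_sum]
        congr 1
        exact Finset.sum_congr rfl fun k _ => by ring
      have hAO : (fun n => ∑ k ∈ range n, γ k * W k ^ (j+1)) =O[atTop] t := by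
        refine littleo_absorb (X := fun n => ((j+1:ℕ):ℝ) * s2 * D * ∑ k ∈ range n, γ k * W k ^ j
          + 2 * ((j+1:ℕ):ℝ) * s2 * ((j:ℝ) * ∑ k ∈ range n, b k ^ 2 * W k ^ (j - 1)))
          (x := fun n => W n ^ (j+1)) hj1 t0 (fun n => pow_nonneg (W0 n) _)
          (fun n => Finset.sum_nonneg fun k _ => mul_nonneg (h0 k) (pow_nonneg (W0 k) _))
          ((iAO.const_mul_left _).add (iHO.const_mul_left _)) ?_ hBO
        refine hEW.congr_left fun n => ?_
        have : ∑ k ∈ range n, D * γ k * W k ^ j = D * ∑ k ∈ range n, γ k * W k ^ j := by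
          rw [Finset.mul_sum]; exact Finset.sum_congr rfl fun k _ => by ring
        rw [this]; push_cast; ring
      have hB : (fun n => τ n + ∑ k ∈ range n, (D * γ k) * (1 + W k ^ (j+1))) =O[atTop] t :=
        hBO.trans ((Asymptotics.isBigO_refl t atTop).add hAO)
      have hEW' := hEW.trans_isBigO hB
      have hkey : (fun n => W n ^ (j+1) + ((j+1:ℕ):ℝ) * ∑ k ∈ range n, γ k * W k ^ (j+1)
          - ((j+1:ℕ):ℝ) * bet D s2 (j+1) * t n) =o[atTop] t := by
        refine ((hEW'.add (iA.const_mul_left (((j+1:ℕ):ℝ) * s2 * D))).add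
          (iH'.const_mul_left (2 * ((j+1:ℕ):ℝ) * s2))).congr_left fun n => ?_
        have : ∑ k ∈ range n, D * γ k * W k ^ j = D * ∑ k ∈ range n, γ k * W k ^ j := by
          rw [Finset.mul_sum]; exact Finset.sum_congr rfl fun k _ => by ring
        rw [this, hbe]; push_cast; ring
      have rA := rec_lemma hj1 h0 hγ ht hkey
      refine ⟨rA, fun _ => ?_⟩
      have hWo : (fun n => W n ^ (j+1)) =o[atTop] t := by
        refine (hkey.sub (rA.const_mul_left ((j+1:ℕ):ℝ))).congr_left fun n => ?_
        simp only [ht']; ring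
      have hVo : (fun n => V n ^ (j+1)) =o[atTop] t := by
        have h1 : (fun n => u n ^ (j+1)) =O[atTop] (fun _ => (1:ℝ)) := (hu.pow (j+1)).isBigO_one ℝ
        refine (h1.mul_isLittleO hWo).congr (fun n => ?_) (fun n => one_mul _)
        rw [hV, mul_pow]
      -- scale for V
      have hBV : (fun n => τ n + ∑ k ∈ range n, f k * (1 + V k ^ (j+1))) =O[atTop] t := by
        have f0 : (fun n => ∑ k ∈ range n, γ k * W k ^ 0) =O[atTop] t := by
          refine (Asymptotics.isBigO_refl t atTop).congr_left fun n => ?_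
          simp [ht']
        have h1 := (cmpf 0 f0).isBigO.add (f0.const_mul_left D)
        have h2 := (cmpf (j+1) hAO).isBigO.add (hAO.const_mul_left D)
        refine ((hτO.add h1).add h2).congr_left fun n => ?_
        simp only [pow_zero, mul_one, mul_add, Finset.sum_add_distrib]
        ring
      have hEV' := hEV.trans_isBigO hBV
      -- c^2 V^(j-1)
      have cmpc : (fun n => (j:ℝ) * ∑ k ∈ range n, c k ^ 2 * V k ^ (j - 1)
          - j * ∑ k ∈ range n, b k ^ 2 * W k ^ (j - 1)) =o[atTop] t := by
        rcases Nat.eq_zero_or_pos j with h | hj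
        · subst h
          refine (Asymptotics.isLittleO_zero t atTop).congr_left fun n => ?_
          simp
        · have := cmp_sum (x := fun k => j * (c k ^ 2 * V k ^ (j - 1) - b k ^ 2 * W k ^ (j - 1)))
            (z := fun k => j * D * (1 * h' k * u k ^ (j - 1) - h k)) h0
            (fun n => pow_nonneg (W0 n) j) ht iAO
            (fun n => by
              rw [hb, hc, hV, mul_pow]
              have : W n ^ j = W n * W n ^ (j - 1) := by
                rw [← pow_succ']; congr 1; omega
              rw [this]; ring)
            (by simpa using (tendsto_coef hu (q := fun _ => 1) tendsto_const_nhds hh hh'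
              (j - 1)).const_mul ((j:ℝ) * D))
          refine this.congr_left fun n => ?_
          rw [← Finset.mul_sum, Finset.sum_sub_distrib]; ring
      have cmpr : (fun n => ∑ k ∈ range n, ρ k * V k ^ (j + 1)
          - ∑ k ∈ range n, b k ^ 2 * W k ^ j) =o[atTop] t := by
        have := cmp_sum (x := fun k => (ρ k * V k ^ (j + 1) - b k ^ 2 * W k ^ j))
            (z := fun k => D * (ψ k * h' k * u k ^ j - h k)) h0
            (fun n => pow_nonneg (W0 n) (j + 1)) ht hAO
            (fun n => by
              have : ρ n * V n ^ (j+1) = (ρ n * V n) * V n ^ j := by ring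
              rw [this, hρ, hb, hc, hV, mul_pow]
              ring)
            (by simpa using (tendsto_coef hu hψ hh hh' j).const_mul D)
        refine this.congr_left fun n => ?_
        rw [Finset.sum_sub_distrib]
      have hj0 : ((j+1:ℕ):ℝ) ≠ 0 := by positivity
      refine ((((((hEV'.sub hVo).sub (cmpr.const_mul_left ((j+1:ℕ):ℝ))).add
        ((cmpf j iAO).const_mul_left (((j+1:ℕ):ℝ) * s2))).add
        (iA.const_mul_left (((j+1:ℕ):ℝ) * s2 * D))).add
        ((cmpc.add iH').const_mul_left (2 * ((j+1:ℕ):ℝ) * s2))).const_mul_left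
          ((((j+1:ℕ):ℝ))⁻¹)).congr_left fun n => ?_
      rw [hbe]
      rw [inv_mul_eq_iff_eq_mul₀ hj0]
      push_cast
      ring
  have hA := (main p le_rfl).1
  refine ((cmpf p (toO hA)).add (hA.const_mul_left D)).congr_left fun n => ?_
  simp only [ht']
  ring

section mats
variable {d : ℕ}

theorem quad_symm {B : Matrix (Fin d) (Fin d) ℝ} (hB : B.PosDef) (x y : Fin d → ℝ) :
    x ⬝ᵥ (B *ᵥ y) = y ⬝ᵥ (B *ᵥ x) := by
  have h : Bᵀ = B := by
    have := hB.isHermitian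
    rwa [Matrix.IsHermitian, conjTranspose_eq_transpose_of_trivial] at this
  rw [dotProduct_mulVec, ← mulVec_transpose, h, dotProduct_comm]

theorem quad_nonneg {B : Matrix (Fin d) (Fin d) ℝ} (hB : B.PosDef) (x : Fin d → ℝ) :
    0 ≤ x ⬝ᵥ (B *ᵥ x) := by
  simpa using hB.posSemidef.dotProduct_mulVec_nonneg x

theorem quad_add {B : Matrix (Fin d) (Fin d) ℝ} (hB : B.PosDef) (x v : Fin d → ℝ) (s : ℝ) :
    (x + s • v) ⬝ᵥ (B *ᵥ (x + s • v)) = x ⬝ᵥ (B *ᵥ x) + 2 * (v ⬝ᵥ (B *ᵥ x)) * s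
      + (v ⬝ᵥ (B *ᵥ v)) * s ^ 2 := by
  have := quad_symm hB x v
  simp only [mulVec_add, mulVec_smul, dotProduct_add, add_dotProduct, smul_dotProduct,
    dotProduct_smul, smul_eq_mul]
  rw [this]; ring

theorem quad_cs {B : Matrix (Fin d) (Fin d) ℝ} (hB : B.PosDef) (x y : Fin d → ℝ) :
    (x ⬝ᵥ (B *ᵥ y)) ^ 2 ≤ (x ⬝ᵥ (B *ᵥ x)) * (y ⬝ᵥ (B *ᵥ y)) := by
  have h : ∀ s : ℝ, 0 ≤ (x ⬝ᵥ (B *ᵥ x)) * (s * s) + (2 * (x ⬝ᵥ (B *ᵥ y))) * s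
      + y ⬝ᵥ (B *ᵥ y) := by
    intro s
    have h1 := quad_nonneg hB (y + s • x)
    rw [quad_add hB] at h1
    nlinarith
  have := discrim_le_zero h
  rw [discrim] at this
  nlinarith

theorem posDef_upd {A : Matrix (Fin d) (Fin d) ℝ} (hA : A.PosDef) (v : Fin d → ℝ) :
    (A + vecMulVec v v).PosDef := by
  refine hA.add_posSemidef ?_
  simpa using posSemidef_vecMulVec_self_star v

theorem sm_facts {A : Matrix (Fin d) (Fin d) ℝ} (hA : A.PosDef) (v x : Fin d → ℝ) :
    0 ≤ v ⬝ᵥ ((A + vecMulVec v v)⁻¹ *ᵥ v) ∧ v ⬝ᵥ ((A + vecMulVec v v)⁻¹ *ᵥ v) < 1 ∧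
    (x ⬝ᵥ (A⁻¹ *ᵥ x) - x ⬝ᵥ ((A + vecMulVec v v)⁻¹ *ᵥ x)) *
      (1 - v ⬝ᵥ ((A + vecMulVec v v)⁻¹ *ᵥ v)) = (v ⬝ᵥ ((A + vecMulVec v v)⁻¹ *ᵥ x)) ^ 2 ∧
    x ⬝ᵥ (A⁻¹ *ᵥ x) - x ⬝ᵥ ((A + vecMulVec v v)⁻¹ *ᵥ x) ≤
      v ⬝ᵥ ((A + vecMulVec v v)⁻¹ *ᵥ v) * (x ⬝ᵥ (A⁻¹ *ᵥ x)) := by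
  have hB := posDef_upd hA v
  set B := A + vecMulVec v v with hBdef
  have hAi := hA.inv
  have hBi := hB.inv
  have hAu : IsUnit A.det := isUnit_iff_ne_zero.2 hA.det_pos.ne'
  have hBu : IsUnit B.det := isUnit_iff_ne_zero.2 hB.det_pos.ne'
  have gen : ∀ z : Fin d → ℝ, A⁻¹ *ᵥ z = B⁻¹ *ᵥ z + (v ⬝ᵥ (B⁻¹ *ᵥ z)) • (A⁻¹ *ᵥ v) := by
    intro z
    have h1 : z = B *ᵥ (B⁻¹ *ᵥ z) := by
      rw [mulVec_mulVec, mul_nonsing_inv _ hBu, one_mulVec]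
    have h2 : z = A *ᵥ (B⁻¹ *ᵥ z) + (v ⬝ᵥ (B⁻¹ *ᵥ z)) • v := by
      have h3 : ∀ y, B *ᵥ y = A *ᵥ y + (v ⬝ᵥ y) • v := by
        intro y
        rw [hBdef, add_mulVec, vecMulVec_mulVec]
        simp
      conv_lhs => rw [h1]
      rw [h3]
    conv_lhs => rw [h2]
    rw [mulVec_add, mulVec_smul, mulVec_mulVec, nonsing_inv_mul _ hAu, one_mulVec]
  set f := v ⬝ᵥ (B⁻¹ *ᵥ v) with hf
  set c := v ⬝ᵥ (B⁻¹ *ᵥ x) with hc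
  set V := x ⬝ᵥ (A⁻¹ *ᵥ x) with hV
  set Q := x ⬝ᵥ (B⁻¹ *ᵥ x) with hQ
  set h := v ⬝ᵥ (A⁻¹ *ᵥ v) with hh
  set e := v ⬝ᵥ (A⁻¹ *ᵥ x) with he
  have h0 : 0 ≤ h := quad_nonneg hAi v
  have f0 : 0 ≤ f := quad_nonneg hBi v
  have k1 : h = f + f * h := by
    conv_lhs => rw [hh, gen v]
    rw [dotProduct_add, dotProduct_smul, smul_eq_mul]
  have k2 : e = c + c * h := by
    conv_lhs => rw [he, gen x]
    rw [dotProduct_add, dotProduct_smul, smul_eq_mul]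
  have k3 : V = Q + c * e := by
    conv_lhs => rw [hV, gen x]
    rw [dotProduct_add, dotProduct_smul, smul_eq_mul, quad_symm hAi x v]
  have k4 : e ^ 2 ≤ h * V := quad_cs hAi v x
  have f1 : f < 1 := by nlinarith
  refine ⟨f0, f1, ?_, ?_⟩
  · rw [k3, k2]; linear_combination (c^2) * k1
  · have : V - Q = (1 - f) * e ^ 2 := by
      rw [k3, k2]; linear_combination (-(c^2 * (1+h))) * k1
    rw [this]
    calc (1 - f) * e^2 ≤ (1 - f) * (h * V) := mul_le_mul_of_nonneg_left k4 (by linarith)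
      _ = f * V := by linear_combination V * k1

/-- comparison modulus -/
def dl (L E : Matrix (Fin d) (Fin d) ℝ) : ℝ :=
  ∑ i, ∑ j, |E i j| * (√(L i i) * √(L j j))

theorem dl_nonneg (L E : Matrix (Fin d) (Fin d) ℝ) : 0 ≤ dl L E :=
  Finset.sum_nonneg fun i _ => Finset.sum_nonneg fun j _ => by positivity

theorem coord_le {L : Matrix (Fin d) (Fin d) ℝ} (hL : L.PosDef) (x : Fin d → ℝ) (i : Fin d) :
    |x i| ≤ √(L i i) * √(x ⬝ᵥ (L⁻¹ *ᵥ x)) := by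
  have hu : IsUnit L.det := isUnit_iff_ne_zero.2 hL.det_pos.ne'
  have h := quad_cs hL.inv (L *ᵥ Pi.single i 1) x
  have e1 : (L *ᵥ Pi.single i 1) ⬝ᵥ (L⁻¹ *ᵥ x) = x i := by
    rw [quad_symm hL.inv, mulVec_mulVec, nonsing_inv_mul _ hu, one_mulVec]
    simp
  have e2 : (L *ᵥ Pi.single i 1) ⬝ᵥ (L⁻¹ *ᵥ (L *ᵥ Pi.single i 1)) = L i i := by
    rw [mulVec_mulVec, nonsing_inv_mul _ hu, one_mulVec]
    simp
  rw [e1, e2] at h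
  have h1 := Real.sqrt_le_sqrt h
  rwa [Real.sqrt_sq_eq_abs, Real.sqrt_mul hL.diag_pos.le] at h1

theorem dl_bound {L : Matrix (Fin d) (Fin d) ℝ} (hL : L.PosDef) (E : Matrix (Fin d) (Fin d) ℝ)
    (x y : Fin d → ℝ) :
    |x ⬝ᵥ (E *ᵥ y)| ≤ dl L E * (√(x ⬝ᵥ (L⁻¹ *ᵥ x)) * √(y ⬝ᵥ (L⁻¹ *ᵥ y))) := by
  simp only [dotProduct, mulVec, dl]
  rw [Finset.sum_mul]
  refine (Finset.abs_sum_le_sum_abs _ _).trans (Finset.sum_le_sum fun i _ => ?_)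
  rw [Finset.mul_sum, Finset.sum_mul]
  refine (Finset.abs_sum_le_sum_abs _ _).trans (Finset.sum_le_sum fun j _ => ?_)
  have h1 := coord_le hL x i
  have h2 := coord_le hL y j
  simp only [dotProduct, mulVec] at h1 h2
  rw [abs_mul, abs_mul]
  calc |x i| * (|E i j| * |y j|) = |E i j| * (|x i| * |y j|) := by ring
    _ ≤ |E i j| * ((√(L i i) * _) * (√(L j j) * _)) := by
        refine mul_le_mul_of_nonneg_left (mul_le_mul h1 h2 (abs_nonneg _) ?_) (abs_nonneg _)
        positivity
    _ = _ := by ring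

theorem dl_tendsto {L : Matrix (Fin d) (Fin d) ℝ} {E : ℕ → Matrix (Fin d) (Fin d) ℝ}
    (hE : Tendsto E atTop (𝓝 0)) : Tendsto (fun n => dl L (E n)) atTop (𝓝 0) := by
  have hc : Continuous (dl L) := by
    unfold dl
    fun_prop
  have := (hc.tendsto 0).comp hE
  have h0 : dl L 0 = 0 := by simp [dl]
  rw [h0] at this
  exact this

theorem inv_tendsto {L : Matrix (Fin d) (Fin d) ℝ} (hL : L.PosDef)
    {X : ℕ → Matrix (Fin d) (Fin d) ℝ} (hX : Tendsto X atTop (𝓝 L)) :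
    Tendsto (fun n => (X n)⁻¹) atTop (𝓝 L⁻¹) := by
  have h1 : Tendsto (fun n => (X n).det) atTop (𝓝 L.det) :=
    ((continuous_id.matrix_det).tendsto L).comp hX
  have h2 : Tendsto (fun n => (X n).adjugate) atTop (𝓝 L.adjugate) :=
    ((continuous_id.matrix_adjugate).tendsto L).comp hX
  simp only [Matrix.inv_def, Ring.inverse_eq_inv']
  exact (h1.inv₀ hL.det_pos.ne').smul h2

theorem meas_det {Ω : Type*} {m : MeasurableSpace Ω} {k : ℕ} {A : Ω → Matrix (Fin k) (Fin k) ℝ}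
    (hA : ∀ i j, Measurable fun ω => A ω i j) : Measurable fun ω => (A ω).det := by
  simp only [det_apply]
  refine Finset.measurable_sum _ fun σ _ => ?_
  exact (Finset.measurable_prod _ fun i _ => hA _ _).const_smul _

theorem meas_inv {Ω : Type*} {m : MeasurableSpace Ω} {A : Ω → Matrix (Fin d) (Fin d) ℝ}
    (hA : ∀ i j, Measurable fun ω => A ω i j) (i j : Fin d) :
    Measurable fun ω => (A ω)⁻¹ i j := by
  simp only [Matrix.inv_def, Ring.inverse_eq_inv', Matrix.smul_apply, smul_eq_mul, adjugate_apply]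
  refine (meas_det hA).inv.mul (meas_det fun a b => ?_)
  by_cases h : a = j
  · subst h; simp
  · simp only [updateRow_ne h]; exact hA a b

theorem meas_quad {Ω : Type*} {m : MeasurableSpace Ω} {B : Ω → Matrix (Fin d) (Fin d) ℝ}
    {x y : Ω → Fin d → ℝ} (hB : ∀ i j, Measurable fun ω => B ω i j)
    (hx : ∀ i, Measurable fun ω => x ω i) (hy : ∀ i, Measurable fun ω => y ω i) :
    Measurable fun ω => x ω ⬝ᵥ (B ω *ᵥ y ω) := by
  simp only [dotProduct, mulVec]
  exact Finset.measurable_sum _ fun i _ => (hx i).mul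
    (Finset.measurable_sum _ fun j _ => (hB i j).mul (hy j))

end mats

section inst
variable {Ω : Type*} {d : ℕ}

def Sp (S : Matrix (Fin d) (Fin d) ℝ) (Φ : ℕ → Ω → Fin d → ℝ) (n : ℕ) (ω : Ω) :
    Matrix (Fin d) (Fin d) ℝ :=
  S + ∑ k ∈ Finset.range n, vecMulVec (Φ k ω) (Φ k ω)

theorem Sp_succ (S : Matrix (Fin d) (Fin d) ℝ) (Φ : ℕ → Ω → Fin d → ℝ) (n : ℕ) (ω : Ω) :
    Sp S Φ (n+1) ω = Sp S Φ n ω + vecMulVec (Φ n ω) (Φ n ω) := by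
  simp only [Sp]; rw [Finset.sum_range_succ, add_assoc]

theorem Sp_pos {S : Matrix (Fin d) (Fin d) ℝ} (hS : S.PosDef) (Φ : ℕ → Ω → Fin d → ℝ) (n : ℕ)
    (ω : Ω) : (Sp S Φ n ω).PosDef := by
  induction n with
  | zero => simpa [Sp] using hS
  | succ n ih => rw [Sp_succ]; exact posDef_upd ih _

theorem Mart_succ (M0 : Ω → Fin d → ℝ) (Φ : ℕ → Ω → Fin d → ℝ)
    (ε : ℕ → Ω → ℝ) (n : ℕ) (ω : Ω) :
    Mart M0 Φ ε (n+1) ω = Mart M0 Φ ε n ω + ε (n+1) ω • Φ n ω := by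
  simp only [Mart]; rw [Finset.sum_range_succ, add_assoc]

def qf (L : Matrix (Fin d) (Fin d) ℝ) (x y : Fin d → ℝ) : ℝ := x ⬝ᵥ (L⁻¹ *ᵥ y)

def al (L : Matrix (Fin d) (Fin d) ℝ) (Φ : ℕ → Ω → Fin d → ℝ) (n : ℕ) (ω : Ω) : ℝ :=
  1 + ∑ k ∈ Finset.range n, qf L (Φ k ω) (Φ k ω) / d

theorem al_succ (L : Matrix (Fin d) (Fin d) ℝ) (Φ : ℕ → Ω → Fin d → ℝ) (n : ℕ) (ω : Ω) :
    al L Φ (n+1) ω = al L Φ n ω + qf L (Φ n ω) (Φ n ω) / d := by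
  simp only [al]; rw [Finset.sum_range_succ, add_assoc]

theorem qf_nonneg {L : Matrix (Fin d) (Fin d) ℝ} (hL : L.PosDef) (x : Fin d → ℝ) :
    0 ≤ qf L x x := quad_nonneg hL.inv x

theorem al_pos {L : Matrix (Fin d) (Fin d) ℝ} (hL : L.PosDef) (Φ : ℕ → Ω → Fin d → ℝ) (n : ℕ)
    (ω : Ω) : 0 < al L Φ n ω := by
  have : 0 ≤ ∑ k ∈ Finset.range n, qf L (Φ k ω) (Φ k ω) / d :=
    Finset.sum_nonneg fun k _ => div_nonneg (qf_nonneg hL _) (Nat.cast_nonneg d)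
  simp only [al]; linarith

def gam (L : Matrix (Fin d) (Fin d) ℝ) (Φ : ℕ → Ω → Fin d → ℝ) (n : ℕ) (ω : Ω) : ℝ :=
  qf L (Φ n ω) (Φ n ω) / d / al L Φ (n+1) ω

theorem gam_nonneg {L : Matrix (Fin d) (Fin d) ℝ} (hL : L.PosDef) (Φ : ℕ → Ω → Fin d → ℝ) (n : ℕ)
    (ω : Ω) : 0 ≤ gam L Φ n ω :=
  div_nonneg (div_nonneg (qf_nonneg hL _) (Nat.cast_nonneg d)) (al_pos hL _ _ _).le

theorem one_sub_gam {L : Matrix (Fin d) (Fin d) ℝ} (hL : L.PosDef) (Φ : ℕ → Ω → Fin d → ℝ) (n : ℕ)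
    (ω : Ω) : 1 - gam L Φ n ω = al L Φ n ω / al L Φ (n+1) ω := by
  have h1 := (al_pos hL Φ (n+1) ω).ne'
  have h2 := al_succ L Φ n ω
  rw [eq_div_iff h1, gam, sub_mul, div_mul_cancel₀ _ h1]
  linarith

def Wp (L : Matrix (Fin d) (Fin d) ℝ) (M0 : Ω → Fin d → ℝ) (Φ : ℕ → Ω → Fin d → ℝ)
    (ε : ℕ → Ω → ℝ) (n : ℕ) (ω : Ω) : ℝ :=
  qf L (Mart M0 Φ ε n ω) (Mart M0 Φ ε n ω) / al L Φ n ω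

def bp (L : Matrix (Fin d) (Fin d) ℝ) (M0 : Ω → Fin d → ℝ) (Φ : ℕ → Ω → Fin d → ℝ)
    (ε : ℕ → Ω → ℝ) (n : ℕ) (ω : Ω) : ℝ :=
  qf L (Φ n ω) (Mart M0 Φ ε n ω) / al L Φ (n+1) ω

def Vp (S : Matrix (Fin d) (Fin d) ℝ) (M0 : Ω → Fin d → ℝ) (Φ : ℕ → Ω → Fin d → ℝ)
    (ε : ℕ → Ω → ℝ) (n : ℕ) (ω : Ω) : ℝ :=
  qf (Sp S Φ n ω) (Mart M0 Φ ε n ω) (Mart M0 Φ ε n ω)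

def Qp (S : Matrix (Fin d) (Fin d) ℝ) (M0 : Ω → Fin d → ℝ) (Φ : ℕ → Ω → Fin d → ℝ)
    (ε : ℕ → Ω → ℝ) (n : ℕ) (ω : Ω) : ℝ :=
  qf (Sp S Φ (n+1) ω) (Mart M0 Φ ε n ω) (Mart M0 Φ ε n ω)

def cp (S : Matrix (Fin d) (Fin d) ℝ) (M0 : Ω → Fin d → ℝ) (Φ : ℕ → Ω → Fin d → ℝ)
    (ε : ℕ → Ω → ℝ) (n : ℕ) (ω : Ω) : ℝ :=
  qf (Sp S Φ (n+1) ω) (Φ n ω) (Mart M0 Φ ε n ω)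

def rp (S : Matrix (Fin d) (Fin d) ℝ) (M0 : Ω → Fin d → ℝ) (Φ : ℕ → Ω → Fin d → ℝ)
    (ε : ℕ → Ω → ℝ) (n : ℕ) (ω : Ω) : ℝ :=
  (Vp S M0 Φ ε n ω - Qp S M0 Φ ε n ω) / Vp S M0 Φ ε n ω

theorem expl_eq (S : Matrix (Fin d) (Fin d) ℝ) (Φ : ℕ → Ω → Fin d → ℝ) (n : ℕ) (ω : Ω) :
    expl S Φ n ω = qf (Sp S Φ (n+1) ω) (Φ n ω) (Φ n ω) := rfl

theorem dgam {L : Matrix (Fin d) (Fin d) ℝ} (hd : 0 < d) (Φ : ℕ → Ω → Fin d → ℝ) (n : ℕ)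
    (ω : Ω) : d * gam L Φ n ω = qf L (Φ n ω) (Φ n ω) / al L Φ (n+1) ω := by
  have : (d:ℝ) ≠ 0 := by positivity
  rw [gam]; field_simp

theorem bp_sq {L : Matrix (Fin d) (Fin d) ℝ} (hd : 0 < d) (hL : L.PosDef) (M0 : Ω → Fin d → ℝ)
    (Φ : ℕ → Ω → Fin d → ℝ) (ε : ℕ → Ω → ℝ) (n : ℕ) (ω : Ω) :
    bp L M0 Φ ε n ω ^ 2 ≤ d * gam L Φ n ω * ((1 - gam L Φ n ω) * Wp L M0 Φ ε n ω) := by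
  have h1 := (al_pos hL Φ (n+1) ω)
  have h2 := (al_pos hL Φ n ω)
  rw [dgam hd, one_sub_gam hL, bp, Wp]
  have := quad_cs hL.inv (Φ n ω) (Mart M0 Φ ε n ω)
  rw [div_pow]
  have e : qf L (Φ n ω) (Φ n ω) / al L Φ (n+1) ω * (al L Φ n ω / al L Φ (n+1) ω *
      (qf L (Mart M0 Φ ε n ω) (Mart M0 Φ ε n ω) / al L Φ n ω)) =
      qf L (Φ n ω) (Φ n ω) * qf L (Mart M0 Φ ε n ω) (Mart M0 Φ ε n ω) / al L Φ (n+1) ω ^ 2 := by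
    field_simp
  rw [e]
  exact div_le_div_of_nonneg_right this (by positivity)

theorem rp_mul {S : Matrix (Fin d) (Fin d) ℝ} (hS : S.PosDef) (M0 : Ω → Fin d → ℝ)
    (Φ : ℕ → Ω → Fin d → ℝ) (ε : ℕ → Ω → ℝ) (n : ℕ) (ω : Ω) :
    rp S M0 Φ ε n ω * Vp S M0 Φ ε n ω = Vp S M0 Φ ε n ω - Qp S M0 Φ ε n ω := by
  by_cases h : Vp S M0 Φ ε n ω = 0
  · have h1 := (sm_facts (Sp_pos hS Φ n ω) (Φ n ω) (Mart M0 Φ ε n ω)).2.2.2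
    rw [← Sp_succ] at h1
    have h2 : 0 ≤ Qp S M0 Φ ε n ω := qf_nonneg (Sp_pos hS Φ (n+1) ω) _
    change Vp S M0 Φ ε n ω - Qp S M0 Φ ε n ω ≤ _ * Vp S M0 Φ ε n ω at h1
    have h3 := (sm_facts (Sp_pos hS Φ n ω) (Φ n ω) (Mart M0 Φ ε n ω)).2.1
    have h4 := (sm_facts (Sp_pos hS Φ n ω) (Φ n ω) (Mart M0 Φ ε n ω)).2.2.1
    rw [← Sp_succ] at h3 h4
    change (Vp S M0 Φ ε n ω - Qp S M0 Φ ε n ω) * _ = _ at h4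
    rw [h] at h4 ⊢
    have h5 : Qp S M0 Φ ε n ω ≤ 0 := by
      by_contra hc
      push Not at hc
      have h6 : (0 - Qp S M0 Φ ε n ω) * (1 - Φ n ω ⬝ᵥ ((Sp S Φ (n + 1) ω)⁻¹ *ᵥ Φ n ω)) < 0 :=
        mul_neg_of_neg_of_pos (by linarith) (by linarith)
      rw [h4] at h6
      exact absurd h6 (not_lt.2 (sq_nonneg _))
    rw [le_antisymm h5 h2]; ring
  · rw [rp, div_mul_cancel₀ _ h]

theorem rp_c {S : Matrix (Fin d) (Fin d) ℝ} (hS : S.PosDef) (M0 : Ω → Fin d → ℝ)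
    (Φ : ℕ → Ω → Fin d → ℝ) (ε : ℕ → Ω → ℝ) (n : ℕ) (ω : Ω) :
    rp S M0 Φ ε n ω * Vp S M0 Φ ε n ω = (1 - expl S Φ n ω)⁻¹ * cp S M0 Φ ε n ω ^ 2 := by
  have h4 := (sm_facts (Sp_pos hS Φ n ω) (Φ n ω) (Mart M0 Φ ε n ω)).2.2.1
  have h3 := (sm_facts (Sp_pos hS Φ n ω) (Φ n ω) (Mart M0 Φ ε n ω)).2.1
  rw [← Sp_succ] at h4 h3
  change expl S Φ n ω < 1 at h3
  change (Vp S M0 Φ ε n ω - Qp S M0 Φ ε n ω) * (1 - expl S Φ n ω) = cp S M0 Φ ε n ω ^ 2 at h4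
  rw [rp_mul hS, eq_inv_mul_iff_mul_eq₀ (by linarith), ← h4]; ring

theorem expl_bd {S : Matrix (Fin d) (Fin d) ℝ} (hS : S.PosDef)
    (Φ : ℕ → Ω → Fin d → ℝ) (n : ℕ) (ω : Ω) : 0 ≤ expl S Φ n ω ∧ expl S Φ n ω < 1 := by
  have h := sm_facts (Sp_pos hS Φ n ω) (Φ n ω) 0
  rw [← Sp_succ] at h
  exact ⟨h.1, h.2.1⟩

section gmeas
variable {m : MeasurableSpace Ω} {ε : ℕ → Ω → ℝ} {Φ : ℕ → Ω → Fin d → ℝ} {M0 : Ω → Fin d → ℝ}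

theorem coord_meas {f : Ω → Fin d → ℝ} (hf : Measurable f) (i : Fin d) :
    Measurable fun ω => f ω i := (measurable_pi_iff.1 hf) i

theorem meas_qf (L : Matrix (Fin d) (Fin d) ℝ) {x y : Ω → Fin d → ℝ}
    (hx : ∀ i, Measurable fun ω => x ω i) (hy : ∀ i, Measurable fun ω => y ω i) :
    Measurable fun ω => qf L (x ω) (y ω) := by
  have h : ∀ i j, Measurable fun _ : Ω => L⁻¹ i j := fun i j => measurable_const
  exact meas_quad (B := fun _ => L⁻¹) h hx hy

theorem M_meas' {n : ℕ} (hΦ : ∀ k, k < n → ∀ i, Measurable fun ω => Φ k ω i)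
    (hM : ∀ i, Measurable fun ω => M0 ω i)
    (hε : ∀ k, k ≤ n → Measurable (ε k)) (i : Fin d) :
    Measurable fun ω => Mart M0 Φ ε n ω i := by
  simp only [Mart, Pi.add_apply, Finset.sum_apply, Pi.smul_apply, smul_eq_mul]
  refine (hM i).add (Finset.measurable_sum _ fun k hk => ?_)
  have hk' := Finset.mem_range.1 hk
  exact (hε (k+1) (by omega)).mul (hΦ k (by omega) i)

theorem Sp_meas' (S : Matrix (Fin d) (Fin d) ℝ) {n : ℕ}
    (hΦ : ∀ k, k < n → ∀ i, Measurable fun ω => Φ k ω i) (i j : Fin d) :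
    Measurable fun ω => Sp S Φ n ω i j := by
  simp only [Sp, Matrix.add_apply, Matrix.sum_apply, vecMulVec_apply]
  refine measurable_const.add (Finset.measurable_sum _ fun l hl => ?_)
  have hl' := Finset.mem_range.1 hl
  exact (hΦ l hl' i).mul (hΦ l hl' j)

theorem al_meas' (L : Matrix (Fin d) (Fin d) ℝ) {n : ℕ}
    (hΦ : ∀ k, k < n → ∀ i, Measurable fun ω => Φ k ω i) : Measurable (al L Φ n) := by
  have : Measurable fun ω => ∑ k ∈ range n, qf L (Φ k ω) (Φ k ω) / d := by
    refine Finset.measurable_sum _ fun l hl => ?_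
    have hl' := Finset.mem_range.1 hl
    exact (meas_qf L (hΦ l hl') (hΦ l hl')).div_const _
  exact measurable_const.add this

theorem gam_meas' (L : Matrix (Fin d) (Fin d) ℝ) {n : ℕ}
    (hΦ : ∀ k, k < n + 1 → ∀ i, Measurable fun ω => Φ k ω i) : Measurable (gam L Φ n) :=
  ((meas_qf L (hΦ n (by omega)) (hΦ n (by omega))).div_const _).div
    (al_meas' L hΦ)

theorem W_meas' (L : Matrix (Fin d) (Fin d) ℝ) {n : ℕ}
    (hΦ : ∀ k, k < n + 1 → ∀ i, Measurable fun ω => Φ k ω i)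
    (hM : ∀ i, Measurable fun ω => M0 ω i) (hε : ∀ k, k ≤ n → Measurable (ε k)) :
    Measurable (Wp L M0 Φ ε n) ∧ Measurable (bp L M0 Φ ε n) := by
  have h1 := M_meas' (fun k hk => hΦ k (by omega)) hM hε
  exact ⟨(meas_qf L h1 h1).div
      (al_meas' L (fun k hk => hΦ k (by omega))),
    (meas_qf L (hΦ n (by omega)) h1).div (al_meas' L hΦ)⟩

theorem V_meas' (S : Matrix (Fin d) (Fin d) ℝ) {n : ℕ}
    (hΦ : ∀ k, k < n + 1 → ∀ i, Measurable fun ω => Φ k ω i)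
    (hM : ∀ i, Measurable fun ω => M0 ω i) (hε : ∀ k, k ≤ n → Measurable (ε k)) :
    Measurable (Vp S M0 Φ ε n) ∧ Measurable (rp S M0 Φ ε n) ∧ Measurable (cp S M0 Φ ε n) ∧
    Measurable (expl S Φ n) := by
  have h1 := M_meas' (fun k hk => hΦ k (by omega)) hM hε
  have h2 := meas_inv (Sp_meas' S hΦ)
  have h3 := meas_inv (Sp_meas' S (n := n) (fun k hk => hΦ k (by omega)))
  have hV : Measurable (Vp S M0 Φ ε n) := meas_quad h3 h1 h1
  have hQ : Measurable (Qp S M0 Φ ε n) := meas_quad h2 h1 h1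
  exact ⟨hV, (hV.sub hQ).div hV, meas_quad h2 (hΦ n (by omega)) h1,
    meas_quad h2 (hΦ n (by omega)) (hΦ n (by omega))⟩

end gmeas

section meas
variable {m0 : MeasurableSpace Ω} {F : Filtration ℕ m0} {ε : ℕ → Ω → ℝ} {Φ : ℕ → Ω → Fin d → ℝ}
  {M0 : Ω → Fin d → ℝ}

theorem Φ_meas (hΦ : ∀ n, StronglyMeasurable[F n] (Φ n)) (n k : ℕ) (hk : k < n + 1) (i : Fin d) :
    Measurable[F n] fun ω => Φ k ω i :=
  coord_meas (m := F n) ((hΦ k).mono (F.mono (Nat.lt_succ_iff.1 hk))).measurable i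

theorem M0_meas (hM : StronglyMeasurable[F 0] M0) (n : ℕ) (i : Fin d) :
    Measurable[F n] fun ω => M0 ω i :=
  coord_meas (m := F n) (hM.mono (F.mono (Nat.zero_le n))).measurable i

theorem ε_meas (hε : ∀ n, Measurable[F n] (ε n)) (n k : ℕ) (hk : k ≤ n) :
    Measurable[F n] (ε k) := (hε k).mono (F.mono hk) le_rfl

theorem pot_W {L : Matrix (Fin d) (Fin d) ℝ} (hd : 0 < d) (hL : L.PosDef)
    (hΦ : ∀ n, StronglyMeasurable[F n] (Φ n)) (hM : StronglyMeasurable[F 0] M0)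
    (hε : ∀ n, Measurable[F n] (ε n)) :
    Pot F ε d (Wp L M0 Φ ε) (gam L Φ) (bp L M0 Φ ε) (fun n ω => d * gam L Φ n ω) where
  hG := by exact_mod_cast hd
  Zm n := (W_meas' (m := F n) L (Φ_meas hΦ n) (M0_meas hM n) (ε_meas hε n)).1
  ρm n := gam_meas' (m := F n) L (Φ_meas hΦ n)
  bm n := (W_meas' (m := F n) L (Φ_meas hΦ n) (M0_meas hM n) (ε_meas hε n)).2
  gm n := Measurable.const_mul (gam_meas' (m := F n) L (Φ_meas hΦ n)) _
  Z0 n ω := div_nonneg (qf_nonneg hL _) (al_pos hL _ _ _).le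
  ρ0 n ω := gam_nonneg hL _ _ _
  ρ1 n ω := by
    have := one_sub_gam hL Φ n ω
    have h := div_nonneg (al_pos hL Φ n ω).le (al_pos hL Φ (n+1) ω).le
    linarith
  ρg n ω := by
    have h1 : (1:ℝ) ≤ d := by exact_mod_cast hd
    have := gam_nonneg hL Φ n ω
    nlinarith
  gG n ω := by
    have := one_sub_gam hL Φ n ω
    have h := div_nonneg (al_pos hL Φ n ω).le (al_pos hL Φ (n+1) ω).le
    have h1 : (1:ℝ) ≤ d := by exact_mod_cast hd
    nlinarith
  hb n ω := bp_sq hd hL M0 Φ ε n ω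
  hrec n ω := by
    have h1 := (al_pos hL Φ (n+1) ω).ne'
    have h2 := (al_pos hL Φ n ω).ne'
    change _ = (1 - gam L Φ n ω) * Wp L M0 Φ ε n ω + _ + (d * gam L Φ n ω) * _
    rw [dgam hd, one_sub_gam hL, bp, Wp, Wp, Mart_succ]
    have e : qf L (Mart M0 Φ ε n ω + ε (n+1) ω • Φ n ω) (Mart M0 Φ ε n ω + ε (n+1) ω • Φ n ω) =
      qf L (Mart M0 Φ ε n ω) (Mart M0 Φ ε n ω) + 2 * qf L (Φ n ω) (Mart M0 Φ ε n ω) * ε (n+1) ω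
      + qf L (Φ n ω) (Φ n ω) * ε (n+1) ω ^ 2 := quad_add hL.inv _ _ _
    rw [e]
    field_simp

theorem pot_V {S : Matrix (Fin d) (Fin d) ℝ} (hS : S.PosDef)
    (hΦ : ∀ n, StronglyMeasurable[F n] (Φ n)) (hM : StronglyMeasurable[F 0] M0)
    (hε : ∀ n, Measurable[F n] (ε n)) :
    Pot F ε 1 (Vp S M0 Φ ε) (rp S M0 Φ ε) (cp S M0 Φ ε) (expl S Φ) := by
  have Vm := fun n => V_meas' (m := F n) S (Φ_meas hΦ n) (M0_meas hM n) (ε_meas hε n)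
  have V0 : ∀ n ω, 0 ≤ Vp S M0 Φ ε n ω := fun n ω => qf_nonneg (Sp_pos hS Φ n ω) _
  have Q0 : ∀ n ω, 0 ≤ Qp S M0 Φ ε n ω := fun n ω => qf_nonneg (Sp_pos hS Φ (n+1) ω) _
  have hVQ : ∀ n ω, (1 - rp S M0 Φ ε n ω) * Vp S M0 Φ ε n ω = Qp S M0 Φ ε n ω := fun n ω => by
    have := rp_mul hS M0 Φ ε n ω
    linarith
  have hle : ∀ n ω, Vp S M0 Φ ε n ω - Qp S M0 Φ ε n ω ≤ expl S Φ n ω * Vp S M0 Φ ε n ω := by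
    intro n ω
    have h1 := (sm_facts (Sp_pos hS Φ n ω) (Φ n ω) (Mart M0 Φ ε n ω)).2.2.2
    rw [← Sp_succ] at h1
    exact h1
  have ρ0 : ∀ n ω, 0 ≤ rp S M0 Φ ε n ω := by
    intro n ω
    refine div_nonneg ?_ (V0 n ω)
    rw [← rp_mul hS, rp_c hS]
    exact mul_nonneg (inv_nonneg.2 (by linarith [(expl_bd hS Φ n ω).2])) (sq_nonneg _)
  have ρg : ∀ n ω, rp S M0 Φ ε n ω ≤ expl S Φ n ω := by
    intro n ω
    exact div_le_of_le_mul₀ (V0 n ω) (expl_bd hS Φ n ω).1 (hle n ω)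
  refine ⟨le_rfl, fun n => (Vm n).1, fun n => (Vm n).2.1, fun n => (Vm n).2.2.1,
    fun n => (Vm n).2.2.2, V0, ρ0,
    fun n ω => (ρg n ω).trans (expl_bd hS Φ n ω).2.le, ρg, fun n ω => (expl_bd hS Φ n ω).2.le,
    fun n ω => ?_, fun n ω => ?_⟩
  · rw [hVQ]
    exact quad_cs (Sp_pos hS Φ (n+1) ω).inv _ _
  · rw [hVQ]
    change qf _ _ _ = _
    rw [Mart_succ]
    exact quad_add (Sp_pos hS Φ (n+1) ω).inv _ _ _

end meas
end inst

section noise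
variable {Ω : Type*} {m0 : MeasurableSpace Ω} {μ : Measure Ω}

theorem LMD.congr {m : MeasurableSpace Ω} {u v : Ω → ℝ} (hu : LMD μ m u) (h : u =ᵐ[μ] v) :
    LMD μ m v := by
  obtain ⟨ρ, h1, h2, h3, h4, h5⟩ := hu
  have h6 : (fun ω => ρ ω * u ω) =ᵐ[μ] (fun ω => ρ ω * v ω) := by
    filter_upwards [h] with ω hω
    rw [hω]
  exact ⟨ρ, h1, h2, h3, h4.congr h6, (condExp_congr_ae h6).symm.trans h5⟩

def emom (μ : Measure Ω) (F : Filtration ℕ m0) (ε : ℕ → Ω → ℝ) (s2 : ℝ) (m n : ℕ) : Ω → ℝ :=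
  match m with
  | 0 => fun _ => 1
  | 1 => fun _ => 0
  | 2 => fun _ => s2
  | (m + 3) => μ[fun ω => ε (n+1) ω ^ (m + 3) | F n]

theorem noise_inst [IsProbabilityMeasure μ] {F : Filtration ℕ m0} {ε : ℕ → Ω → ℝ} {σ : ℝ} {p : ℕ} (hp : 1 ≤ p) {a : ℝ}
    (ha : 2 * p < a)
    (hεadapt : ∀ n, StronglyMeasurable[F n] (ε n))
    (hmds : ∀ n, μ[ε (n + 1)|F n] =ᵐ[μ] 0)
    (hvar : ∀ n, μ[fun ω => ε (n + 1) ω ^ 2|F n] =ᵐ[μ] fun _ => σ ^ 2)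
    (hmomint : ∀ n, Integrable (fun ω => |ε (n + 1) ω| ^ a) μ)
    (hmom : ∀ᵐ ω ∂μ, ∃ C : ℝ, ∀ n, (μ[fun ω => |ε (n + 1) ω| ^ a|F n]) ω ≤ C) :
    Noise μ F ε a (σ ^ 2) p (emom μ F ε (σ ^ 2))
      (fun n ω => |(μ[fun ω => |ε (n + 1) ω| ^ a|F n]) ω|) := by
  have hp' : (1:ℝ) ≤ p := by exact_mod_cast hp
  have hεm : ∀ n, Measurable (ε n) := fun n => ((hεadapt n).mono (F.le n)).measurable
  have pw : ∀ m : ℕ, m ≤ 2 * p → ∀ x : ℝ, |x ^ m| ≤ 1 + |x| ^ a := by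
    intro m hm x
    rw [abs_pow]
    have hma : (m:ℝ) ≤ a := by
      have : (m:ℝ) ≤ 2 * p := by exact_mod_cast hm
      linarith
    rcases le_total (|x|) 1 with h | h
    · have := pow_le_one₀ (n := m) (abs_nonneg x) h
      have := Real.rpow_nonneg (abs_nonneg x) a
      linarith
    · rw [← Real.rpow_natCast]
      have := Real.rpow_le_rpow_of_exponent_le h hma
      linarith
  have hint : ∀ m : ℕ, m ≤ 2 * p → ∀ n, Integrable (fun ω => ε (n+1) ω ^ m) μ := by
    intro m hm n
    refine Integrable.mono' ((integrable_const (1:ℝ)).add (hmomint n))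
      ((hεm (n+1)).pow_const m).aestronglyMeasurable (Eventually.of_forall fun ω => ?_)
    exact pw m hm _
  have hce0 : ∀ n, ∀ᵐ ω ∂μ, 0 ≤ (μ[fun ω => |ε (n + 1) ω| ^ a|F n]) ω := fun n =>
    condExp_nonneg (Eventually.of_forall fun ω => Real.rpow_nonneg (abs_nonneg _) _)
  have hce : ∀ n, ∀ m, m ≤ 2 * p → ∀ᵐ ω ∂μ, |(μ[fun ω => ε (n+1) ω ^ m | F n]) ω| ≤
      1 + (μ[fun ω => |ε (n + 1) ω| ^ a|F n]) ω := by
    intro n m hm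
    have hI : Integrable (fun ω => 1 + |ε (n+1) ω| ^ a) μ := (integrable_const (1:ℝ)).add (hmomint n)
    have h1 : μ[fun ω => 1 + |ε (n+1) ω| ^ a | F n] =ᵐ[μ]
        fun ω => 1 + (μ[fun ω => |ε (n + 1) ω| ^ a|F n]) ω := by
      have := condExp_add (integrable_const (1:ℝ)) (hmomint n) (F n) (μ := μ)
      rw [condExp_const (F.le n)] at this
      exact this
    have h2 : μ[fun ω => ε (n+1) ω ^ m | F n] ≤ᵐ[μ] μ[fun ω => 1 + |ε (n+1) ω| ^ a | F n] :=
      condExp_mono (hint m hm n) hI (Eventually.of_forall fun ω => (le_abs_self _).trans (pw m hm _))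
    have h3 : μ[fun ω => -(ε (n+1) ω ^ m) | F n] ≤ᵐ[μ] μ[fun ω => 1 + |ε (n+1) ω| ^ a | F n] :=
      condExp_mono (hint m hm n).neg hI
        (Eventually.of_forall fun ω => (neg_le_abs _).trans (pw m hm _))
    have h4 : μ[fun ω => -(ε (n+1) ω ^ m) | F n] =ᵐ[μ] -μ[fun ω => ε (n+1) ω ^ m | F n] :=
      condExp_neg _ _
    filter_upwards [h1, h2, h3, h4] with ω a1 a2 a3 a4
    rw [a1] at a2 a3
    rw [a4] at a3
    exact abs_le.2 ⟨by have : -(μ[fun ω => ε (n+1) ω ^ m | F n]) ω ≤ _ := a3; linarith, a2⟩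
  refine ⟨sq_nonneg σ, ha, ?_, ?_, fun n ω => abs_nonneg _, fun n => (hεadapt n).measurable,
    fun _ _ => rfl, fun _ _ => rfl, fun _ _ => rfl, ?_, ?_, ?_, ?_⟩
  · intro m n
    match m with
    | 0 => exact measurable_const
    | 1 => exact measurable_const
    | 2 => exact measurable_const
    | (m + 3) => exact stronglyMeasurable_condExp.measurable
  · intro n
    exact (continuous_abs.measurable).comp stronglyMeasurable_condExp.measurable
  · intro m hm n
    match m with
    | 0 =>
      refine Eventually.of_forall fun ω => ?_
      simp only [emom, abs_one]
      have := abs_nonneg ((μ[fun ω => |ε (n + 1) ω| ^ a|F n]) ω)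
      nlinarith [sq_nonneg σ]
    | 1 =>
      refine Eventually.of_forall fun ω => ?_
      simp only [emom, abs_zero]
      positivity
    | 2 =>
      refine Eventually.of_forall fun ω => ?_
      simp only [emom, abs_of_nonneg (sq_nonneg σ)]
      have := abs_nonneg ((μ[fun ω => |ε (n + 1) ω| ^ a|F n]) ω)
      linarith
    | (m + 3) =>
      filter_upwards [hce n (m+3) hm] with ω hω
      simp only [emom]
      have := le_abs_self ((μ[fun ω => |ε (n + 1) ω| ^ a|F n]) ω)
      linarith [sq_nonneg σ]
  · intro m hm n
    have hb := LMD.sub_condExp (F.le n) (hint m hm n)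
    match m with
    | 0 => simpa [emom] using LMD.zero
    | 1 =>
      refine hb.congr ?_
      simp only [pow_one]
      filter_upwards [hmds n] with ω hω
      have : (μ[fun ω => ε (n+1) ω | F n]) ω = 0 := hω
      rw [this]
      rfl
    | 2 =>
      refine hb.congr ?_
      filter_upwards [hvar n] with ω hω
      rw [hω]; rfl
    | (m + 3) => exact hb
  · intro n
    refine (LMD.sub_condExp (F.le n) (hmomint n)).congr ?_
    filter_upwards [hce0 n] with ω hω
    rw [abs_of_nonneg hω]
  · filter_upwards [hmom, ae_all_iff.2 hce0] with ω ⟨C, hC⟩ h0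
    exact ⟨C, fun n => by rw [abs_of_nonneg (h0 n)]; exact hC n⟩

end noise

theorem ratio_lemma {V W δ : ℕ → ℝ} (hW : ∀ n, 0 ≤ W n) (hδ : Tendsto δ atTop (𝓝 0))
    (h0 : ∀ n, 0 ≤ δ n) (h : ∀ n, |V n - W n| ≤ δ n * W n) :
    ∃ u : ℕ → ℝ, Tendsto u atTop (𝓝 1) ∧ ∀ n, V n = u n * W n := by
  refine ⟨fun n => if W n = 0 then 1 else V n / W n, ?_, fun n => ?_⟩
  · rw [tendsto_iff_norm_sub_tendsto_zero]
    refine squeeze_zero (fun n => norm_nonneg _) (fun n => ?_) hδ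
    split_ifs with hw
    · simpa using h0 n
    · have hw' : 0 < W n := lt_of_le_of_ne (hW n) (Ne.symm hw)
      have : V n / W n - 1 = (V n - W n) / W n := by field_simp
      rw [this, Real.norm_eq_abs, abs_div, abs_of_pos hw', div_le_iff₀ hw']
      exact h n
  · show V n = (if W n = 0 then 1 else V n / W n) * W n
    split_ifs with hw
    · have := h n
      rw [hw, mul_zero, sub_zero] at this
      rw [hw, mul_zero]
      exact abs_eq_zero.1 (le_antisymm this (abs_nonneg _))
    · rw [div_mul_cancel₀ _ hw]

theorem log_lemma {α γ : ℕ → ℝ} (hα : ∀ n, 0 < α n) (hγ : ∀ n, 1 - γ n = α n / α (n+1))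
    (h0 : ∀ n, 0 ≤ γ n) (hγ0 : Tendsto γ atTop (𝓝 0)) (hαt : Tendsto α atTop atTop) :
    Tendsto (fun n => ∑ k ∈ range n, γ k) atTop atTop ∧
    (fun n => Real.log (α n) - ∑ k ∈ range n, γ k) =o[atTop] (fun n => ∑ k ∈ range n, γ k) := by
  have hlog : ∀ n, Real.log (α n) = Real.log (α 0) + ∑ k ∈ range n, -Real.log (1 - γ k) := by
    intro n
    induction n with
    | zero => simp
    | succ n ih =>
      rw [Finset.sum_range_succ, hγ, Real.log_div (hα n).ne' (hα (n+1)).ne']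
      linarith
  have hlt : Tendsto (fun n => ∑ k ∈ range n, -Real.log (1 - γ k)) atTop atTop := by
    have h1 : Tendsto (fun n => Real.log (α n) + -Real.log (α 0)) atTop atTop :=
      tendsto_atTop_add_const_right _ _ (Real.tendsto_log_atTop.comp hαt)
    refine h1.congr fun n => ?_
    rw [hlog n]; ring
  have hder : (fun n => -Real.log (1 - γ n) - γ n) =o[atTop] γ := by
    have h1 : HasDerivAt (fun x : ℝ => -Real.log (1 - x)) 1 0 := by
      have h2 : HasDerivAt (fun x : ℝ => 1 - x) (-1) 0 := by
        simpa using (hasDerivAt_id (0:ℝ)).const_sub 1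
      have h3 : HasDerivAt (fun x : ℝ => -Real.log (1 - x)) (-(-1 / (1 - 0))) 0 :=
        (h2.log (by norm_num)).neg
      convert h3 using 1
      norm_num
    have h4 := (hasDerivAt_iff_isLittleO_nhds_zero.1 h1).comp_tendsto hγ0
    refine h4.congr_left fun n => ?_
    simp
  have hT : Tendsto (fun n => ∑ k ∈ range n, γ k) atTop atTop := by
    have h1 : ∀ᶠ n in atTop, -Real.log (1 - γ n) ≤ 2 * γ n := by
      filter_upwards [(Asymptotics.isLittleO_iff.1 hder) one_pos] with n hn
      rw [Real.norm_eq_abs, Real.norm_eq_abs, abs_of_nonneg (h0 n)] at hn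
      linarith [le_abs_self (-Real.log (1 - γ n) - γ n)]
    obtain ⟨N, hN⟩ := eventually_atTop.1 h1
    have h2 : ∀ n, N ≤ n → ∑ k ∈ range n, -Real.log (1 - γ k) ≤
        2 * ∑ k ∈ range n, γ k + ∑ k ∈ range N, -Real.log (1 - γ k) := by
      intro n hn
      induction n, hn using Nat.le_induction with
      | base =>
        have : 0 ≤ ∑ k ∈ range N, γ k := Finset.sum_nonneg fun k _ => h0 k
        linarith
      | succ n hn ih =>
        rw [Finset.sum_range_succ, Finset.sum_range_succ _ n]
        linarith [hN n hn]
    have h3 : Tendsto (fun n => (∑ k ∈ range n, -Real.log (1 - γ k) +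
        -∑ k ∈ range N, -Real.log (1 - γ k)) / 2) atTop atTop :=
      (tendsto_atTop_add_const_right _ _ hlt).atTop_div_const (by norm_num)
    refine tendsto_atTop_mono' _ ?_ h3
    filter_upwards [eventually_ge_atTop N] with n hn
    linarith [h2 n hn]
  refine ⟨hT, ?_⟩
  have h5 := hder.sum_range h0 hT
  have h6 : (fun _ : ℕ => Real.log (α 0)) =o[atTop] (fun n => ∑ k ∈ range n, γ k) :=
    (Asymptotics.isLittleO_const_left).2 (Or.inr (tendsto_norm_atTop_atTop.comp hT))
  refine (h5.add h6).congr_left fun n => ?_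
  rw [hlog n, Finset.sum_sub_distrib]; ring

section path
variable {Ω : Type*} {d : ℕ}

theorem al_trace {S L : Matrix (Fin d) (Fin d) ℝ} (Φ : ℕ → Ω → Fin d → ℝ) (n : ℕ) (ω : Ω) :
    al L Φ n ω = 1 + ((L⁻¹ * Sp S Φ n ω).trace - (L⁻¹ * S).trace) / d := by
  induction n with
  | zero => simp [al, Sp]
  | succ n ih =>
    rw [al_succ, ih, Sp_succ, Matrix.mul_add, Matrix.trace_add, mul_vecMulVec, trace_vecMulVec]
    have : (L⁻¹ *ᵥ Φ n ω) ⬝ᵥ Φ n ω = qf L (Φ n ω) (Φ n ω) := by rw [dotProduct_comm]; rfl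
    rw [this]; ring

theorem path_conv {S L : Matrix (Fin d) (Fin d) ℝ} (hd : 0 < d) (hL : L.PosDef)
    {Φ : ℕ → Ω → Fin d → ℝ} {ω : Ω}
    {α : ℕ → ℝ} (hα : ∀ n, 0 < α n) (hαt : Tendsto α atTop atTop)
    (hc : Tendsto (fun n => (α n)⁻¹ • Sp S Φ (n+1) ω) atTop (𝓝 L)) :
    Tendsto (fun n => al L Φ n ω) atTop atTop ∧
    Tendsto (fun n => (al L Φ (n+1) ω)⁻¹ • Sp S Φ (n+1) ω) atTop (𝓝 L) := by
  have hu : IsUnit L.det := isUnit_iff_ne_zero.2 hL.det_pos.ne'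
  have hd0 : (d:ℝ) ≠ 0 := by positivity
  have h1 : Tendsto (fun n => al L Φ (n+1) ω / α n) atTop (𝓝 1) := by
    have h2 : Tendsto (fun n => (L⁻¹ * ((α n)⁻¹ • Sp S Φ (n+1) ω)).trace / d) atTop (𝓝 1) := by
      have hcont : Continuous fun X : Matrix (Fin d) (Fin d) ℝ => (L⁻¹ * X).trace / d :=
        ((continuous_const.matrix_mul continuous_id).matrix_trace).div_const _
      have := (hcont.tendsto L).comp hc
      rw [nonsing_inv_mul _ hu, trace_one, Fintype.card_fin, div_self hd0] at this
      exact this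
    have h3 : Tendsto (fun n => (1 - (L⁻¹ * S).trace / d) * (α n)⁻¹) atTop (𝓝 0) := by
      simpa using (tendsto_inv_atTop_zero.comp hαt).const_mul (1 - (L⁻¹ * S).trace / d)
    have := h3.add h2
    rw [zero_add] at this
    refine this.congr fun n => ?_
    have := (hα n).ne'
    rw [al_trace (S := S) Φ (n+1) ω, Matrix.mul_smul, Matrix.trace_smul, smul_eq_mul]
    field_simp
    ring
  constructor
  · rw [← tendsto_add_atTop_iff_nat 1]
    have := hαt.atTop_mul_pos one_pos h1
    refine this.congr fun n => ?_
    rw [mul_div_cancel₀ _ (hα n).ne']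
  · have := (h1.inv₀ one_ne_zero).smul hc
    rw [inv_one, one_smul] at this
    refine this.congr fun n => ?_
    rw [smul_smul]
    congr 1
    have := (hα n).ne'
    have := (al_pos hL Φ (n+1) ω).ne'
    field_simp

def Er (S L : Matrix (Fin d) (Fin d) ℝ) (Φ : ℕ → Ω → Fin d → ℝ) (ω : Ω) (n : ℕ) :
    Matrix (Fin d) (Fin d) ℝ := al L Φ n ω • (Sp S Φ n ω)⁻¹ - L⁻¹

theorem Er_tendsto {S L : Matrix (Fin d) (Fin d) ℝ} (hS : S.PosDef) (hL : L.PosDef)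
    {Φ : ℕ → Ω → Fin d → ℝ} {ω : Ω}
    (h : Tendsto (fun n => (al L Φ (n+1) ω)⁻¹ • Sp S Φ (n+1) ω) atTop (𝓝 L)) :
    Tendsto (Er S L Φ ω) atTop (𝓝 0) := by
  rw [← tendsto_add_atTop_iff_nat 1]
  have h1 := (inv_tendsto hL h).sub_const L⁻¹
  rw [sub_self] at h1
  refine h1.congr fun n => ?_
  have h2 := (al_pos hL Φ (n+1) ω).ne'
  have h3 : IsUnit (Sp S Φ (n+1) ω).det := isUnit_iff_ne_zero.2 (Sp_pos hS Φ (n+1) ω).det_pos.ne'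
  rw [Er]
  congr 1
  refine inv_eq_right_inv ?_
  rw [Matrix.smul_mul, Matrix.mul_smul, mul_nonsing_inv _ h3, smul_smul, inv_mul_cancel₀ h2, one_smul]

theorem qf_cmp {S L : Matrix (Fin d) (Fin d) ℝ} (hL : L.PosDef)
    (Φ : ℕ → Ω → Fin d → ℝ) (ω : Ω) (n : ℕ) (x y : Fin d → ℝ) :
    |qf (Sp S Φ n ω) x y - qf L x y / al L Φ n ω| ≤
      dl L (Er S L Φ ω n) * (√(qf L x x / al L Φ n ω) * √(qf L y y / al L Φ n ω)) := by
  have h1 := al_pos hL Φ n ω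
  have h2 := dl_bound hL (Er S L Φ ω n) x y
  have h3 : x ⬝ᵥ (Er S L Φ ω n *ᵥ y) = al L Φ n ω * qf (Sp S Φ n ω) x y - qf L x y := by
    simp only [Er, qf, sub_mulVec, smul_mulVec, dotProduct_sub, dotProduct_smul, smul_eq_mul]
  rw [h3] at h2
  have h4 : qf (Sp S Φ n ω) x y - qf L x y / al L Φ n ω =
      (al L Φ n ω * qf (Sp S Φ n ω) x y - qf L x y) / al L Φ n ω := by field_simp
  rw [h4, abs_div, abs_of_pos h1, div_le_iff₀ h1, Real.sqrt_div (qf_nonneg hL x),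
    Real.sqrt_div (qf_nonneg hL y)]
  refine h2.trans (le_of_eq ?_)
  have h5 : √(al L Φ n ω) * √(al L Φ n ω) = al L Φ n ω := Real.mul_self_sqrt h1.le
  have h6 : √(al L Φ n ω) ≠ 0 := (Real.sqrt_pos.2 h1).ne'
  change dl L (Er S L Φ ω n) * (√(qf L x x) * √(qf L y y)) = _
  generalize √(al L Φ n ω) = s at *
  rw [← h5]
  field_simp

end path

theorem bet_eq (d p : ℕ) (hp : 1 ≤ p) (σ : ℝ) : bet d (σ ^ 2) p = elllim d p σ := by
  induction p, hp using Nat.le_induction with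
  | base => simp [bet, elllim]; ring
  | succ p hp ih =>
    obtain ⟨q, rfl⟩ : ∃ q, p = q + 1 := ⟨p - 1, by omega⟩
    rw [bet, ih, elllim, elllim]
    simp only [Nat.add_sub_cancel]
    rw [Finset.prod_Icc_succ_top (by omega)]
    push_cast
    ring

theorem pow_interp {x T K : ℝ} {j : ℕ} (hj : 1 ≤ j) (hx : 0 ≤ x) (hT : 1 ≤ T)
    (h : x ^ j / T ^ (1 + 1 / (j:ℝ)) ≤ K) :
    x ^ (j - 1) ≤ |K| ^ (((j:ℝ) - 1) / j) * T ^ (1 - 1 / (j:ℝ) ^ 2) := by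
  have hj0 : (0:ℝ) < j := by exact_mod_cast hj
  have hj1 : (1:ℝ) ≤ j := by exact_mod_cast hj
  have hT0 : 0 < T := by linarith
  have h1 : x ^ j ≤ |K| * T ^ (1 + 1 / (j:ℝ)) := by
    rw [div_le_iff₀ (Real.rpow_pos_of_pos hT0 _)] at h
    exact h.trans (mul_le_mul_of_nonneg_right (le_abs_self K) (Real.rpow_pos_of_pos hT0 _).le)
  have h2 : x ^ (j - 1) = (x ^ j) ^ (((j:ℝ) - 1) / j) := by
    rw [← Real.rpow_natCast x j, ← Real.rpow_mul hx, mul_div_cancel₀ _ hj0.ne', ← Real.rpow_natCast,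
      Nat.cast_sub hj, Nat.cast_one]
  have h3 : T ^ (1 - 1 / (j:ℝ) ^ 2) = (T ^ (1 + 1 / (j:ℝ))) ^ (((j:ℝ) - 1) / j) := by
    rw [← Real.rpow_mul hT0.le]
    congr 1
    field_simp
    ring
  rw [h2, h3, ← Real.mul_rpow (abs_nonneg K) (Real.rpow_pos_of_pos hT0 _).le]
  exact Real.rpow_le_rpow (pow_nonneg hx j) h1 (div_nonneg (by linarith) hj0.le)

theorem tendsto_bdd {u : ℕ → ℝ} {l : ℝ} (hu : Tendsto u atTop (𝓝 l)) :
    ∃ C : ℝ, 1 ≤ C ∧ ∀ n, |u n| ≤ C := by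
  obtain ⟨C, hC⟩ := hu.norm.bddAbove_range
  refine ⟨max 1 C, le_max_left _ _, fun n => ?_⟩
  exact (hC (Set.mem_range_self n)).trans (le_max_right _ _)

/-- Good path. -/
structure Good (D : ℝ) (γ W V b c f α : ℕ → ℝ) : Prop where
  αt : Tendsto α atTop atTop
  γ0 : Tendsto γ atTop (𝓝 0)
  γt : Tendsto (fun n => ∑ k ∈ range n, γ k) atTop atTop
  lg : (fun n => Real.log (α n) - ∑ k ∈ range n, γ k) =o[atTop] (fun n => ∑ k ∈ range n, γ k)
  ft : Tendsto (fun n => ∑ k ∈ range n, f k) atTop atTop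
  hu : ∃ u : ℕ → ℝ, Tendsto u atTop (𝓝 1) ∧ ∀ n, V n = u n * W n
  hφ : ∃ u : ℕ → ℝ, Tendsto u atTop (𝓝 1) ∧ ∀ n, f n = u n * (D * γ n)
  hh : ∃ h h' : ℕ → ℝ, (∀ n, |h n| ≤ 1) ∧ Tendsto (fun n => h' n - h n) atTop (𝓝 0) ∧
    (∀ n, b n ^ 2 = h n * (D * γ n * W n)) ∧ ∀ n, c n ^ 2 = h' n * (D * γ n * W n)

theorem good_hh {s b c δ : ℕ → ℝ} (s0 : ∀ n, 0 ≤ s n) (hb : ∀ n, b n ^ 2 ≤ s n)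
    (δ0 : ∀ n, 0 ≤ δ n) (hδ : Tendsto δ atTop (𝓝 0)) (hc : ∀ n, |c n - b n| ≤ δ n * √(s n)) :
    ∃ h h' : ℕ → ℝ, (∀ n, |h n| ≤ 1) ∧ Tendsto (fun n => h' n - h n) atTop (𝓝 0) ∧
    (∀ n, b n ^ 2 = h n * (s n)) ∧ ∀ n, c n ^ 2 = h' n * (s n) := by
  have hb' : ∀ n, |b n| ≤ √(s n) := fun n => Real.abs_le_sqrt (hb n)
  refine ⟨fun n => b n ^ 2 / s n, fun n => c n ^ 2 / s n, fun n => ?_, ?_, fun n => ?_, fun n => ?_⟩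
  · rw [abs_of_nonneg (div_nonneg (sq_nonneg _) (s0 n))]
    exact div_le_one_of_le₀ (hb n) (s0 n)
  · have hl : Tendsto (fun n => δ n * (2 + δ n)) atTop (𝓝 0) := by
      simpa using hδ.mul (hδ.const_add 2)
    refine squeeze_zero_norm (fun n => ?_) hl
    rw [← sub_div, Real.norm_eq_abs, abs_div, abs_of_nonneg (s0 n)]
    refine div_le_of_le_mul₀ (s0 n) (mul_nonneg (δ0 n) (by linarith [δ0 n])) ?_
    have e : c n ^ 2 - b n ^ 2 = (c n - b n) * (2 * b n + (c n - b n)) := by ring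
    rw [e, abs_mul]
    have h2 : |2 * b n + (c n - b n)| ≤ (2 + δ n) * √(s n) := by
      refine (abs_add_le _ _).trans ?_
      rw [abs_mul, abs_two]
      linarith [hb' n, hc n]
    calc |c n - b n| * |2 * b n + (c n - b n)| ≤ (δ n * √(s n)) * ((2 + δ n) * √(s n)) :=
          mul_le_mul (hc n) h2 (abs_nonneg _) (mul_nonneg (δ0 n) (Real.sqrt_nonneg _))
      _ = δ n * (2 + δ n) * (√(s n) * √(s n)) := by ring
      _ = _ := by rw [Real.mul_self_sqrt (s0 n)]
  · by_cases hs : s n = 0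
    · have := hb n
      rw [hs] at this ⊢
      nlinarith [sq_nonneg (b n)]
    · show _ = b n ^ 2 / s n * s n
      rw [div_mul_cancel₀ _ hs]
  · by_cases hs : s n = 0
    · have h1 := hb n
      have h2 := hc n
      rw [hs] at h1 h2 ⊢
      rw [Real.sqrt_zero, mul_zero] at h2
      have h3 := abs_eq_zero.1 (le_antisymm h2 (abs_nonneg _))
      have h4 : c n = b n := by linarith
      rw [h4]
      nlinarith [sq_nonneg (b n)]
    · show _ = c n ^ 2 / s n * s n
      rw [div_mul_cancel₀ _ hs]

theorem good_path {Ω : Type*} {d : ℕ} {S L : Matrix (Fin d) (Fin d) ℝ} (hd : 0 < d)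
    (hS : S.PosDef) (hL : L.PosDef)
    {Φ : ℕ → Ω → Fin d → ℝ} {M0 : Ω → Fin d → ℝ} {ε : ℕ → Ω → ℝ} {ω : Ω}
    {α : ℕ → ℝ} (hα : ∀ n, 0 < α n) (hαt : Tendsto α atTop atTop)
    (hc : Tendsto (fun n => (α n)⁻¹ • Sp S Φ (n+1) ω) atTop (𝓝 L))
    (hf0 : Tendsto (fun n => expl S Φ n ω) atTop (𝓝 0)) :
    Good d (fun n => gam L Φ n ω) (fun n => Wp L M0 Φ ε n ω) (fun n => Vp S M0 Φ ε n ω)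
      (fun n => bp L M0 Φ ε n ω) (fun n => cp S M0 Φ ε n ω) (fun n => expl S Φ n ω)
      (fun n => al L Φ n ω) := by
  have hd0 : (0:ℝ) < d := by exact_mod_cast hd
  obtain ⟨h1, h2⟩ := path_conv hd hL hα hαt hc
  have hδ := dl_tendsto (L := L) (Er_tendsto hS hL h2)
  have hδ1 : Tendsto (fun n => dl L (Er S L Φ ω (n+1))) atTop (𝓝 0) :=
    (tendsto_add_atTop_iff_nat 1).2 hδ
  have g0 : ∀ n, 0 ≤ gam L Φ n ω := fun n => gam_nonneg hL Φ n ω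
  have W0 : ∀ n, 0 ≤ Wp L M0 Φ ε n ω := fun n => div_nonneg (qf_nonneg hL _) (al_pos hL _ _ _).le
  have hu := ratio_lemma (V := fun n => Vp S M0 Φ ε n ω) W0 hδ (fun n => dl_nonneg _ _) (fun n => by
    have := qf_cmp (S := S) hL Φ ω n (Mart M0 Φ ε n ω) (Mart M0 Φ ε n ω)
    rw [Real.mul_self_sqrt (show 0 ≤ qf L (Mart M0 Φ ε n ω) (Mart M0 Φ ε n ω) / al L Φ n ω from W0 n)] at this
    exact this)
  have dg0 : ∀ n, 0 ≤ d * gam L Φ n ω := fun n => mul_nonneg hd0.le (g0 n)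
  have hφ := ratio_lemma (V := fun n => expl S Φ n ω) dg0 hδ1 (fun n => dl_nonneg _ _) (fun n => by
    have := qf_cmp (S := S) hL Φ ω (n+1) (Φ n ω) (Φ n ω)
    rw [← dgam hd, Real.mul_self_sqrt (dg0 n)] at this
    exact this)
  have γ0 : Tendsto (fun n => gam L Φ n ω) atTop (𝓝 0) := by
    obtain ⟨φ, p1, p2⟩ := hφ
    have h3 : Tendsto (fun n => expl S Φ n ω / φ n / d) atTop (𝓝 0) := by
      simpa using (hf0.div p1 one_ne_zero).div_const (d:ℝ)
    refine h3.congr' ?_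
    filter_upwards [p1.eventually_ne one_ne_zero] with n hn
    rw [p2 n]
    field_simp
  obtain ⟨γt, lg⟩ := log_lemma (fun n => al_pos hL Φ n ω) (fun n => one_sub_gam hL Φ n ω) g0 γ0 h1
  refine ⟨h1, γ0, γt, lg, ?_, hu, hφ, ?_⟩
  · obtain ⟨φ, p1, p2⟩ := hφ
    have h3 := cmp_sum (γ := fun n => gam L Φ n ω) (y := fun _ => 1)
      (x := fun n => expl S Φ n ω - d * gam L Φ n ω) (z := fun n => d * (φ n - 1)) g0
      (fun _ => zero_le_one) γt (by simpa using Asymptotics.isBigO_refl _ _)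
      (fun n => by rw [p2 n]; ring)
      (by simpa using (p1.sub_const 1).const_mul (d:ℝ))
    have h4 := (Asymptotics.isLittleO_iff.1 h3) (half_pos hd0)
    refine tendsto_atTop_mono' _ ?_ (γt.const_mul_atTop (half_pos hd0))
    filter_upwards [h4] with n hn
    have t0 : 0 ≤ ∑ k ∈ range n, gam L Φ k ω := Finset.sum_nonneg fun k _ => g0 k
    rw [Finset.sum_sub_distrib, ← Finset.mul_sum, Real.norm_eq_abs, Real.norm_eq_abs,
      abs_of_nonneg t0] at hn
    have := (abs_le.1 hn).1
    linarith
  · refine good_hh (δ := fun n => dl L (Er S L Φ ω (n+1))) (fun n => mul_nonneg (dg0 n) (W0 n))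
      (fun n => ?_) (fun n => dl_nonneg _ _) hδ1 (fun n => ?_)
    · refine (bp_sq hd hL M0 Φ ε n ω).trans (mul_le_mul_of_nonneg_left ?_ (dg0 n))
      exact mul_le_of_le_one_left (W0 n) (by linarith [g0 n])
    · have h3 := qf_cmp (S := S) hL Φ ω (n+1) (Φ n ω) (Mart M0 Φ ε n ω)
      refine (le_trans h3 (mul_le_mul_of_nonneg_left ?_ (dl_nonneg _ _)))
      rw [← dgam hd, Real.sqrt_mul (dg0 n)]
      refine mul_le_mul_of_nonneg_left (Real.sqrt_le_sqrt ?_) (Real.sqrt_nonneg _)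
      have h4 := al_succ L Φ n ω
      have h5 : 0 ≤ qf L (Φ n ω) (Φ n ω) / d := div_nonneg (qf_nonneg hL _) hd0.le
      exact div_le_div_of_nonneg_left (qf_nonneg hL _) (al_pos hL _ _ _) (by linarith)

theorem final_path {Ω : Type*} {d : ℕ} {S L : Matrix (Fin d) (Fin d) ℝ} (hd : 0 < d)
    (hS : S.PosDef) (hL : L.PosDef)
    {Φ : ℕ → Ω → Fin d → ℝ} {ω : Ω} {α : ℕ → ℝ} (hα : ∀ n, 0 < α n) (hαt : Tendsto α atTop atTop)
    (hc : Tendsto (fun n => (α n)⁻¹ • Sp S Φ (n+1) ω) atTop (𝓝 L))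
    {x : ℕ → ℝ} {β : ℝ}
    (γt : Tendsto (fun n => ∑ k ∈ range n, gam L Φ k ω) atTop atTop)
    (lg : (fun n => Real.log (al L Φ n ω) - ∑ k ∈ range n, gam L Φ k ω) =o[atTop]
      (fun n => ∑ k ∈ range n, gam L Φ k ω))
    (hx : (fun n => ∑ k ∈ range n, x k - d * β * ∑ k ∈ range n, gam L Φ k ω) =o[atTop]
      (fun n => ∑ k ∈ range n, gam L Φ k ω)) :
    Tendsto (fun n => (Real.log ((Smat S Φ n ω).det))⁻¹ * ∑ k ∈ Finset.Icc 1 n, x k)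
      atTop (𝓝 β) := by
  have hd0 : (0:ℝ) < d := by exact_mod_cast hd
  obtain ⟨-, h2⟩ := path_conv hd hL hα hαt hc
  set t : ℕ → ℝ := fun n => ∑ k ∈ range n, gam L Φ k ω with ht
  have hs : Tendsto (fun n : ℕ => n + 1) atTop atTop := tendsto_add_atTop_nat 1
  have γt1 : Tendsto (fun n => t (n+1)) atTop atTop := γt.comp hs
  have tne : ∀ᶠ n in atTop, t (n+1) ≠ 0 := by
    filter_upwards [γt1.eventually_gt_atTop 0] with n hn using hn.ne'
  -- log det
  have hdet : Tendsto (fun n => Real.log ((al L Φ (n+1) ω)⁻¹ • Sp S Φ (n+1) ω).det) atTop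
      (𝓝 (Real.log L.det)) :=
    (((continuous_id.matrix_det).tendsto L).comp h2).log hL.det_pos.ne'
  have hD : ∀ n, Real.log (Smat S Φ n ω).det = d * Real.log (al L Φ (n+1) ω) +
      Real.log ((al L Φ (n+1) ω)⁻¹ • Sp S Φ (n+1) ω).det := by
    intro n
    have a1 := al_pos hL Φ (n+1) ω
    have a2 := (Sp_pos hS Φ (n+1) ω).det_pos
    rw [det_smul, Fintype.card_fin, Real.log_mul (pow_ne_zero _ (inv_ne_zero a1.ne')) a2.ne',
      Real.log_pow, Real.log_inv]
    change Real.log (Sp S Φ (n+1) ω).det = _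
    ring
  have c0 : ∀ {y : ℕ → ℝ} {l : ℝ}, Tendsto y atTop (𝓝 l) →
      Tendsto (fun n => y n / t (n+1)) atTop (𝓝 0) := fun hy => hy.div_atTop γt1
  have q1 : Tendsto (fun n => Real.log (Smat S Φ n ω).det / t (n+1)) atTop (𝓝 d) := by
    have b1 := ((lg.tendsto_div_nhds_zero).comp hs).const_mul (d:ℝ)
    have b2 := (b1.add (c0 hdet)).const_add (d:ℝ)
    simp only [mul_zero, add_zero] at b2
    refine b2.congr' ?_
    filter_upwards [tne] with n hn
    simp only [Function.comp_apply]
    change (d:ℝ) + (d * ((Real.log (al L Φ (n+1) ω) - t (n+1)) / t (n+1)) + _) = _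
    rw [hD n]
    field_simp
    ring
  have q2 : Tendsto (fun n => (∑ k ∈ Finset.Icc 1 n, x k) / t (n+1)) atTop (𝓝 (d * β)) := by
    have b1 := (hx.tendsto_div_nhds_zero).comp hs
    have b2 := (b1.sub (c0 (tendsto_const_nhds (x := x 0)))).const_add (d * β)
    simp only [sub_zero, add_zero] at b2
    refine b2.congr' ?_
    filter_upwards [tne] with n hn
    simp only [Function.comp_apply]
    have e : ∑ k ∈ range (n+1), x k = ∑ k ∈ Finset.Icc 1 n, x k + x 0 := by
      rw [Finset.range_eq_Ico, Finset.sum_eq_sum_Ico_succ_bot (Nat.succ_pos n), add_comm]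
      rfl
    rw [e]
    change d * β + ((∑ k ∈ Finset.Icc 1 n, x k + x 0 - d * β * t (n+1)) / t (n+1) - _) = _
    field_simp
    ring
  have q3 := q2.div q1 hd0.ne'
  rw [mul_div_cancel_left₀ _ hd0.ne'] at q3
  refine q3.congr' ?_
  filter_upwards [tne] with n hn
  simp only [Pi.div_apply]
  rw [div_div_div_cancel_right₀ hn, div_eq_inv_mul]

theorem tau_meas {Ω : Type*} {m : MeasurableSpace Ω} {d : ℕ} {Φ : ℕ → Ω → Fin d → ℝ}
    (L : Matrix (Fin d) (Fin d) ℝ) {n : ℕ}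
    (hΦ : ∀ k, k < n + 1 → ∀ i, Measurable fun ω => Φ k ω i) :
    Measurable fun ω => 1 + ∑ k ∈ range (n + 1), gam L Φ k ω := by
  refine measurable_const.add (Finset.measurable_sum _ fun k hk => ?_)
  have hk' := Finset.mem_range.1 hk
  exact gam_meas' L fun l hl => hΦ l (by omega)

/-- **Theorem 2, first part**: convergence of the even moments in the ASCLT for
vector martingale transforms. -/
theorem asclt_moments_vector
    {Ω : Type*} {m0 : MeasurableSpace Ω} {μ : Measure Ω} [IsProbabilityMeasure μ]
    (F : Filtration ℕ m0) {d : ℕ} (hd : 0 < d)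
    (ε : ℕ → Ω → ℝ) (Φ : ℕ → Ω → Fin d → ℝ) (M0 : Ω → Fin d → ℝ)
    (S L : Matrix (Fin d) (Fin d) ℝ) (hS : S.PosDef) (hL : L.PosDef)
    (σ : ℝ) (p : ℕ) (hp : 1 ≤ p) (a : ℝ) (ha : 2 * p < a)
    (α : ℕ → Ω → ℝ)
    (hεadapt : ∀ n, StronglyMeasurable[F n] (ε n))
    (hεint : ∀ n, Integrable (ε n) μ)
    (hΦadapt : ∀ n, StronglyMeasurable[F n] (Φ n))
    (hM0 : StronglyMeasurable[F 0] M0)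
    (hmds : ∀ n, μ[ε (n + 1)|F n] =ᵐ[μ] 0)
    (hvar : ∀ n, μ[fun ω => ε (n + 1) ω ^ 2|F n] =ᵐ[μ] fun _ => σ ^ 2)
    (hmomint : ∀ n, Integrable (fun ω => |ε (n + 1) ω| ^ a) μ)
    (hmom : ∀ᵐ ω ∂μ, ∃ C : ℝ, ∀ n, (μ[fun ω => |ε (n + 1) ω| ^ a|F n]) ω ≤ C)
    (hf0 : ∀ᵐ ω ∂μ, Tendsto (fun n => expl S Φ n ω) atTop (𝓝 0))
    (hαmeas : ∀ n, Measurable (α n))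
    (hαpos : ∀ n ω, 0 < α n ω)
    (hαmono : ∀ᵐ ω ∂μ, Monotone fun n => α n ω)
    (hαtop : ∀ᵐ ω ∂μ, Tendsto (fun n => α n ω) atTop atTop)
    (hconv : ∀ᵐ ω ∂μ, Tendsto (fun n => (α n ω)⁻¹ • Smat S Φ n ω) atTop (𝓝 L)) :
    ∀ᵐ ω ∂μ, Tendsto (fun n =>
      (Real.log ((Smat S Φ n ω).det))⁻¹ *
        ∑ k ∈ Finset.Icc 1 n,
          expl S Φ k ω *
            (Mart M0 Φ ε k ω ⬝ᵥ ((Smat S Φ (k - 1) ω)⁻¹ *ᵥ Mart M0 Φ ε k ω)) ^ p)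
      atTop (𝓝 (elllim d p σ)) := by
  have hd0 : (0:ℝ) < d := by exact_mod_cast hd
  have hεm : ∀ n, Measurable[F n] (ε n) := fun n => (hεadapt n).measurable
  have hn := noise_inst (μ := μ) hp ha hεadapt hmds hvar hmomint hmom
  have hW := pot_W (F := F) (ε := ε) (M0 := M0) hd hL hΦadapt hM0 hεm
  have hV := pot_V (F := F) (ε := ε) (M0 := M0) hS hΦadapt hM0 hεm
  have hgood : ∀ᵐ ω ∂μ, Good d (fun n => gam L Φ n ω) (fun n => Wp L M0 Φ ε n ω)
      (fun n => Vp S M0 Φ ε n ω) (fun n => bp L M0 Φ ε n ω) (fun n => cp S M0 Φ ε n ω)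
      (fun n => expl S Φ n ω) (fun n => al L Φ n ω) := by
    filter_upwards [hf0, hαtop, hconv] with ω h1 h2 h3
    exact good_path hd hS hL (α := fun n => α n ω) (fun n => hαpos n ω) h2 h3 h1
  have g0 : ∀ n ω, 0 ≤ gam L Φ n ω := fun n ω => gam_nonneg hL Φ n ω
  have W0 := hW.Z0
  have V0 := hV.Z0
  obtain ⟨τ, hτdef⟩ : ∃ τ : ℕ → Ω → ℝ, ∀ n ω, τ n ω = 1 + ∑ k ∈ range (n + 1), gam L Φ k ω :=
    ⟨_, fun _ _ => rfl⟩
  have hτ : ∀ n, Measurable[F n] (τ n) := by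
    intro n
    have e : τ n = fun ω => 1 + ∑ k ∈ range (n + 1), gam L Φ k ω := funext fun ω => hτdef n ω
    rw [e]
    exact tau_meas (m := F n) L (Φ_meas hΦadapt n)
  have hτ1 : ∀ n ω, 1 ≤ τ n ω := fun n ω => by
    rw [hτdef]
    have := Finset.sum_nonneg (s := range (n+1)) (fun k _ => g0 k ω)
    linarith
  have hτ0 : ∀ n ω, 0 < τ n ω := fun n ω => by linarith [hτ1 n ω]
  have hτm : ∀ n ω, τ n ω ≤ τ (n+1) ω := fun n ω => by
    rw [hτdef, hτdef, Finset.sum_range_succ _ (n+1)]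
    linarith [g0 (n+1) ω]
  have hτt : ∀ᵐ ω ∂μ, Tendsto (fun n => τ n ω) atTop atTop := by
    filter_upwards [hgood] with ω h
    simp only [hτdef]
    exact tendsto_atTop_add_const_left _ _ ((tendsto_add_atTop_iff_nat 1).2 h.γt)
  have hsg : ∀ δ : ℝ, 0 < δ → ∀ ω, Summable fun n => gam L Φ n ω / τ n ω ^ (1 + δ) := by
    intro δ hδ ω
    simp only [hτdef]
    exact summ_gamma (fun n => g0 n ω) hδ
  have hrs : ∀ j, 1 ≤ j → j ≤ p → ∀ δ : ℝ, 0 < δ → ∀ᵐ ω ∂μ,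
      (∃ K : ℝ, ∀ n, Wp L M0 Φ ε n ω ^ j / τ n ω ^ (1 + δ) ≤ K) ∧
      Summable fun n => gam L Φ n ω * Wp L M0 Φ ε n ω ^ j / τ n ω ^ (1 + δ) := by
    intro j h1 h2 δ hδ
    exact pot_rs hn hW (fun n ω => le_rfl) h1 h2 hτ hτ1 hτm (by linarith)
      (ae_of_all _ fun ω => hsg δ hδ ω)
  have hsW : ∀ j, 1 ≤ j → j ≤ p → ∀ δ : ℝ, 0 < δ → ∀ᵐ ω ∂μ,
      Summable fun n => gam L Φ n ω * (1 + Wp L M0 Φ ε n ω ^ j) / τ n ω ^ (1 + δ) := by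
    intro j h1 h2 δ hδ
    filter_upwards [hrs j h1 h2 δ hδ] with ω h
    refine ((hsg δ hδ ω).add h.2).congr fun n => ?_
    ring
  have hθ : ∀ j : ℕ, 1 ≤ j → (0:ℝ) ≤ 1 - 1 / (j:ℝ) ^ 2 ∧ 1 - 1 / (j:ℝ) ^ 2 < 1 := by
    intro j hj
    have hj1 : (1:ℝ) ≤ j := by exact_mod_cast hj
    have h2 : (1:ℝ) ≤ (j:ℝ) ^ 2 := by nlinarith
    have h3 : 1 / (j:ℝ) ^ 2 ≤ 1 := by
      rw [div_le_one (by linarith)]; exact h2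
    have h4 : 0 < 1 / (j:ℝ) ^ 2 := by positivity
    constructor <;> linarith
  have hWθ : ∀ j, 1 ≤ j → j ≤ p → ∀ᵐ ω ∂μ, ∃ K : ℝ, 0 ≤ K ∧ ∀ n,
      Wp L M0 Φ ε n ω ^ (j - 1) ≤ K * τ n ω ^ (1 - 1 / (j:ℝ) ^ 2) := by
    intro j h1 h2
    have hj0 : (0:ℝ) < j := by exact_mod_cast h1
    filter_upwards [hrs j h1 h2 (1 / (j:ℝ)) (by positivity)] with ω h
    obtain ⟨K, hK⟩ := h.1
    exact ⟨_, by positivity, fun n => pow_interp h1 (W0 n ω) (hτ1 n ω) (hK n)⟩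
  have EW : ∀ᵐ ω ∂μ, ∀ j, 1 ≤ j → j ≤ p → (fun n => Wp L M0 Φ ε n ω ^ j
        + j * ∑ k ∈ range n, gam L Φ k ω * Wp L M0 Φ ε k ω ^ j
        - j * σ ^ 2 * ∑ k ∈ range n, (d * gam L Φ k ω) * Wp L M0 Φ ε k ω ^ (j - 1)
        - 2 * j * (j - 1) * σ ^ 2 * ∑ k ∈ range n, bp L M0 Φ ε k ω ^ 2 * Wp L M0 Φ ε k ω ^ (j - 2))
        =o[atTop]
      (fun n => τ n ω + ∑ k ∈ range n, (d * gam L Φ k ω) * (1 + Wp L M0 Φ ε k ω ^ j)) := by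
    rw [ae_all_iff]; intro j
    rw [Filter.eventually_imp_distrib_left]; intro h1
    rw [Filter.eventually_imp_distrib_left]; intro h2
    refine pot_exp hn hW h1 h2 hτ hτ1 hτm hτt (hθ j h1).1 (hθ j h1).2 ?_ ?_ ?_ ?_
    · filter_upwards [hWθ j h1 h2] with ω ⟨K, _, h⟩ using ⟨K, h⟩
    · intro δ hδ
      filter_upwards [hsW j h1 h2 δ hδ] with ω h
      refine (h.mul_left (d:ℝ)).congr fun n => ?_
      ring
    · filter_upwards [hgood] with ω h
      simpa using h.γ0.const_mul (d:ℝ)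
    · filter_upwards [hgood] with ω h
      simp only [← Finset.mul_sum]
      exact h.γt.const_mul_atTop hd0
  have EV : ∀ᵐ ω ∂μ, ∀ j, 1 ≤ j → j ≤ p → (fun n => Vp S M0 Φ ε n ω ^ j
        + j * ∑ k ∈ range n, rp S M0 Φ ε k ω * Vp S M0 Φ ε k ω ^ j
        - j * σ ^ 2 * ∑ k ∈ range n, expl S Φ k ω * Vp S M0 Φ ε k ω ^ (j - 1)
        - 2 * j * (j - 1) * σ ^ 2 * ∑ k ∈ range n, cp S M0 Φ ε k ω ^ 2 * Vp S M0 Φ ε k ω ^ (j - 2))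
        =o[atTop]
      (fun n => τ n ω + ∑ k ∈ range n, expl S Φ k ω * (1 + Vp S M0 Φ ε k ω ^ j)) := by
    rw [ae_all_iff]; intro j
    rw [Filter.eventually_imp_distrib_left]; intro h1
    rw [Filter.eventually_imp_distrib_left]; intro h2
    refine pot_exp hn hV h1 h2 hτ hτ1 hτm hτt (hθ j h1).1 (hθ j h1).2 ?_ ?_ hf0 ?_
    · filter_upwards [hWθ j h1 h2, hgood] with ω ⟨K, hK0, h⟩ hg
      obtain ⟨u, hu, hVu⟩ := hg.hu
      obtain ⟨C, hC1, hC⟩ := tendsto_bdd hu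
      refine ⟨C ^ (j-1) * K, fun n => ?_⟩
      have hle : Vp S M0 Φ ε n ω ≤ C * Wp L M0 Φ ε n ω := by
        rw [show Vp S M0 Φ ε n ω = _ from hVu n]
        exact mul_le_mul_of_nonneg_right ((le_abs_self _).trans (hC n)) (W0 n ω)
      calc _ ≤ (C * Wp L M0 Φ ε n ω) ^ (j-1) := pow_le_pow_left₀ (V0 n ω) hle _
        _ = C ^ (j-1) * Wp L M0 Φ ε n ω ^ (j-1) := mul_pow _ _ _
        _ ≤ C ^ (j-1) * (K * τ n ω ^ (1 - 1 / (j:ℝ) ^ 2)) :=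
          mul_le_mul_of_nonneg_left (h n) (by positivity)
        _ = _ := by ring
    · intro δ hδ
      filter_upwards [hsW j h1 h2 δ hδ, hgood] with ω h hg
      obtain ⟨u, hu, hVu⟩ := hg.hu
      obtain ⟨C, hC1, hC⟩ := tendsto_bdd hu
      obtain ⟨φ, hφ, hfφ⟩ := hg.hφ
      obtain ⟨B, hB1, hB⟩ := tendsto_bdd hφ
      refine Summable.of_nonneg_of_le (fun n => ?_) (fun n => ?_) (h.mul_left (B * d * C ^ j))
      · have h3 := (expl_bd hS Φ n ω).1
        have h4 := V0 n ω
        have h5 := hτ0 n ω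
        positivity
      · have hle : Vp S M0 Φ ε n ω ≤ C * Wp L M0 Φ ε n ω := by
          rw [show Vp S M0 Φ ε n ω = _ from hVu n]
          exact mul_le_mul_of_nonneg_right ((le_abs_self _).trans (hC n)) (W0 n ω)
        have hle2 : expl S Φ n ω ≤ B * (d * gam L Φ n ω) := by
          rw [show expl S Φ n ω = _ from hfφ n]
          exact mul_le_mul_of_nonneg_right ((le_abs_self _).trans (hB n))
            (mul_nonneg hd0.le (g0 n ω))
        have hle3 : 1 + Vp S M0 Φ ε n ω ^ j ≤ C ^ j * (1 + Wp L M0 Φ ε n ω ^ j) := by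
          have := pow_le_pow_left₀ (V0 n ω) hle j
          rw [mul_pow] at this
          have := one_le_pow₀ hC1 (n := j)
          linarith
        have hv := V0 n ω
        rw [← mul_div_assoc]
        refine div_le_div_of_nonneg_right ?_ (Real.rpow_nonneg (hτ0 n ω).le _)
        calc _ ≤ (B * (d * gam L Φ n ω)) * (C ^ j * (1 + Wp L M0 Φ ε n ω ^ j)) :=
              mul_le_mul hle2 hle3 (by positivity)
                (mul_nonneg (by linarith) (mul_nonneg hd0.le (g0 n ω)))
          _ = _ := by ring
    · filter_upwards [hgood] with ω h using h.ft
  filter_upwards [hf0, hαtop, hconv, hgood, EW, EV] with ω h1 h2 h3 hg eW eV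
  obtain ⟨u, hu, hVu⟩ := hg.hu
  obtain ⟨φ, hφ, hfφ⟩ := hg.hφ
  obtain ⟨h, h', hh, hh', hb, hc⟩ := hg.hh
  have hψ : Tendsto (fun n => (1 - expl S Φ n ω)⁻¹) atTop (𝓝 1) := by
    have := (h1.const_sub 1).inv₀ (by norm_num)
    simpa using this
  have key := det_main (D := d) (s2 := σ ^ 2) (p := p) (fun n => g0 n ω) hg.γ0 hg.γt
    (fun n => hτdef n ω) (fun n => W0 n ω) hfφ hφ hVu hu hb hh hc hh'
    (fun n => rp_c hS M0 Φ ε n ω) hψ eW eV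
  have fin := final_path hd hS hL (α := fun n => α n ω) (fun n => hαpos n ω) h2 h3 hg.γt hg.lg key
  rw [bet_eq d p hp] at fin
  refine fin.congr fun n => ?_
  congr 1
  refine Finset.sum_congr rfl fun k hk => ?_
  obtain ⟨q, rfl⟩ : ∃ q, k = q + 1 := ⟨k - 1, by have := (Finset.mem_Icc.1 hk).1; omega⟩
  rfl
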